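/- For every alphabet 𝒜 with δ_𝒜 > 1 − 1/6 = 5/6, there exist a constant c > 0 and N₀ such that for every integer N ≥ N₀ one has #𝔇_𝒜(N) ≥ c·N. -/

import Mathlib

open Real Filter

noncomputable section

/-- The continuant `⟨d₁,…,d_k⟩`, with `⟨⟩ = 1`, satisfying
`⟨d₁,…,d_k⟩ = d₁·⟨d₂,…,d_k⟩ + ⟨d₃,…,d_k⟩`. -/
def cont : List ℕ → ℕ
  | [] => 1
  | [d] => d
  | d :: e :: l => d * cont (e :: l) + cont l

/-- The value of the finite continued fraction `[d₁,…,d_k] = ⟨d₂,…,d_k⟩ / ⟨d₁,…,d_k⟩`. -/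
def cfVal (l : List ℕ) : ℝ := (cont l.tail : ℝ) / (cont l : ℝ)

/-- The set `E_𝒜` of values of infinite continued fractions `[0; d₁, d₂, …]`
with all partial quotients in `𝒜`. -/
def cfSet (A : Finset ℕ) : Set ℝ :=
  {x | ∃ d : ℕ → ℕ, (∀ i, d i ∈ A) ∧
    Tendsto (fun k => cfVal ((List.range k).map d)) atTop (nhds x)}

/-- `δ_𝒜`, the Hausdorff dimension of `E_𝒜` (as a real number). -/
def hdim (A : Finset ℕ) : ℝ := (dimH (cfSet A)).toReal

/-- `𝔇_𝒜(N)`: the set of positive integers `d ≤ N` representable as a continuant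
of a finite sequence with entries in `𝒜`. -/
def DD (A : Finset ℕ) (N : ℕ) : Set ℕ :=
  {d | 0 < d ∧ d ≤ N ∧ ∃ l : List ℕ, l ≠ [] ∧ (∀ x ∈ l, x ∈ A) ∧ cont l = d}

/-!
Concatenation of words is multiplication of continuant matrices, so that continuants are
multiplicative up to a factor `2`. If the dimension exceeds `5/6`, then the partition function
`∑ ⟨w⟩ ^ (-5/3)` over words of length `n` grows exponentially in `n`, and pigeonholing its terms
gives finite families of words with almost equal matrices, carrying probability measures of weights
at most `(2⟨w⟩) ^ (-5/3)`. Concatenations of independent members of such families are random words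
of any prescribed size with the same decay.

Take a random word `x f y` with continuant of order `N`, where `x` and `y` are such concatenations
of sizes about `N ^ 0.82` and `N ^ 0.18` and the filler `f` is a power of a digit `a ≥ 2`, and
consider the second moment of its exponential sum over the frequencies `j / (N + 1)`. On the minor
arcs the large sieve, applied to the bilinear form in `x f` and `y`, bounds it. A major arc, where
`j / (N + 1)` is at distance about `K / (N + 1)` from a fraction of denominator about `Q`, is
treated by the large sieve for a decomposition of the word adapted to `K` and `Q`, which gains a
power of `K Q`. The second moment is therefore bounded, and by Parseval's identity and the
Cauchy–Schwarz inequality the continuants of the words `x f y` take at least `c N` values.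
-/

section ExponentialSums

lemma norm_sum_mul_sq_le {ι : Type*} (s : Finset ι) {p : ι → ℝ} (hp : ∀ i ∈ s, 0 ≤ p i)
    (hsum : ∑ i ∈ s, p i ≤ 1) (f : ι → ℂ) :
    ‖∑ i ∈ s, (p i : ℂ) * f i‖ ^ 2 ≤ ∑ i ∈ s, p i * ‖f i‖ ^ 2 := by
  have htriangle : ‖∑ i ∈ s, (p i : ℂ) * f i‖ ≤ ∑ i ∈ s, p i * ‖f i‖ :=
    (norm_sum_le _ _).trans_eq <| Finset.sum_congr rfl fun i hi => by
      rw [norm_mul, Complex.norm_real, Real.norm_of_nonneg (hp i hi)]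
  have hterm : ∀ i ∈ s, 0 ≤ p i * ‖f i‖ ^ 2 := fun i hi => mul_nonneg (hp i hi) (by positivity)
  calc ‖∑ i ∈ s, (p i : ℂ) * f i‖ ^ 2 ≤ (∑ i ∈ s, p i * ‖f i‖) ^ 2 := by gcongr
    _ ≤ (∑ i ∈ s, p i) * ∑ i ∈ s, p i * ‖f i‖ ^ 2 :=
        Finset.sum_sq_le_sum_mul_sum_of_sq_le_mul s hp hterm fun i _ => le_of_eq (by ring)
    _ ≤ ∑ i ∈ s, p i * ‖f i‖ ^ 2 := mul_le_of_le_one_left (Finset.sum_nonneg hterm) hsum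

lemma sum_norm_sq_addChar {R X : Type*} [CommRing R] [Fintype R] [Fintype X]
    {ψ : AddChar R ℂ} (hψ : ψ.IsPrimitive) {φ : X → R} (hφ : Function.Injective φ) (f : X → ℂ) :
    ∑ z, ‖∑ x, f x * ψ (φ x * z)‖ ^ 2 = Fintype.card R * ∑ x, ‖f x‖ ^ 2 := by
  classical
  have hexpand (z : R) : ((‖∑ x, f x * ψ (φ x * z)‖ : ℂ)) ^ 2 =
      ∑ x, ∑ y, f x * starRingEnd ℂ (f y) * ψ (z * (φ x - φ y)) := by
    rw [← Complex.mul_conj', map_sum, Finset.sum_mul_sum]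
    refine Finset.sum_congr rfl fun x _ => Finset.sum_congr rfl fun y _ => ?_
    rw [map_mul (starRingEnd ℂ), ← AddChar.map_neg_eq_conj, mul_mul_mul_comm,
      ← AddChar.map_add_eq_mul]
    ring_nf
  have hcomplex : ((∑ z, ‖∑ x, f x * ψ (φ x * z)‖ ^ 2 : ℝ) : ℂ) =
      ((Fintype.card R * ∑ x, ‖f x‖ ^ 2 : ℝ) : ℂ) := by
    push_cast
    simp_rw [hexpand]
    rw [Finset.sum_comm, Finset.mul_sum]
    refine Finset.sum_congr rfl fun x _ => ?_
    rw [Finset.sum_comm]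
    simp_rw [← Finset.mul_sum, AddChar.sum_mulShift _ hψ, sub_eq_zero, hφ.eq_iff]
    simp [Complex.mul_conj', mul_comm]
  exact_mod_cast hcomplex

lemma card_le_mul_card_image_of_sum_norm_sq_le {R ι : Type*} [CommRing R] [Fintype R]
    [DecidableEq R] [Fintype ι] {ψ : AddChar R ℂ} (hψ : ψ.IsPrimitive) {p : ι → ℝ}
    (hp : ∑ i, p i = 1) (v : ι → R) {C : ℝ}
    (hC : ∑ z, ‖∑ i, (p i : ℂ) * ψ (z * v i)‖ ^ 2 ≤ C) :
    (Fintype.card R : ℝ) ≤ C * (Finset.univ.image v).card := by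
  set D := Finset.univ.image v
  have hv (i : ι) (_ : i ∈ Finset.univ) : v i ∈ D := Finset.mem_image_of_mem v (Finset.mem_univ i)
  set r : R → ℝ := fun x => ∑ i with v i = x, p i with hr
  have hfiber (z : R) : ∑ i, (p i : ℂ) * ψ (z * v i) = ∑ x : D, (r x : ℂ) * ψ (x * z) := by
    rw [← Finset.sum_fiberwise_of_maps_to hv, Finset.sum_coe_sort D fun x => (r x : ℂ) * ψ (x * z)]
    refine Finset.sum_congr rfl fun x _ => ?_
    rw [hr, Complex.ofReal_sum, Finset.sum_mul]
    refine Finset.sum_congr rfl fun i hi => ?_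
    rw [(Finset.mem_filter.mp hi).2, mul_comm z]
  have hcs : 1 ≤ D.card * ∑ x : D, ‖(r x : ℂ)‖ ^ 2 := by
    simp_rw [Complex.norm_real, Real.norm_eq_abs, sq_abs]
    rw [Finset.sum_coe_sort D fun x => r x ^ 2]
    refine le_trans ?_ sq_sum_le_card_mul_sum_sq
    rw [Finset.sum_fiberwise_of_maps_to hv, hp, one_pow]
  simp_rw [hfiber] at hC
  rw [sum_norm_sq_addChar hψ Subtype.val_injective] at hC
  calc (Fintype.card R : ℝ) ≤ Fintype.card R * (D.card * ∑ x : D, ‖(r x : ℂ)‖ ^ 2) :=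
        le_mul_of_one_le_right (by positivity) hcs
    _ = (Fintype.card R * ∑ x : D, ‖(r x : ℂ)‖ ^ 2) * D.card := by ring
    _ ≤ C * D.card := by gcongr

variable {P : ℕ}

/-- The residues `x` and `y` modulo `P` differ by an integer of absolute value at most `δ`. -/
def IsNear (δ : ℝ) (x y : ZMod P) : Prop :=
  ∃ t : ℤ, |(t : ℝ)| ≤ δ ∧ x - y = t

lemma IsNear.mono {δ ε : ℝ} {x y : ZMod P} (h : IsNear δ x y) (hδ : δ ≤ ε) : IsNear ε x y :=
  let ⟨t, ht, hxy⟩ := h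
  ⟨t, ht.trans hδ, hxy⟩

lemma card_le_of_isNear {C : ℕ} {y : ZMod P} {s : Finset (ZMod P)}
    (hs : ∀ x ∈ s, IsNear C x y) : s.card ≤ 2 * C + 1 := by
  classical
  have hsub : s ⊆ (Finset.Icc (-(C : ℤ)) C).image fun t : ℤ => y + t := by
    intro x hx
    obtain ⟨t, ht, hxy⟩ := hs x hx
    refine Finset.mem_image.mpr ⟨t, Finset.mem_Icc.mpr (abs_le.mp (by exact_mod_cast ht)), ?_⟩
    rw [← hxy, add_sub_cancel]
  have hcard := (Finset.card_le_card hsub).trans Finset.card_image_le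
  rw [Int.card_Icc] at hcard
  omega

lemma sum_le_of_forall_isNear {Γ : Type*} {p : Γ → ℝ} {p₀ : ℝ} (hp₀ : 0 ≤ p₀)
    (hpp₀ : ∀ g, p g ≤ p₀) {Θ : Finset (ZMod P)} {C : ℕ} {s : Finset (Θ × Γ)}
    (hs : ∀ i ∈ s, ∀ k ∈ s, i.2 = k.2 ∧ IsNear C (i.1 : ZMod P) k.1) :
    ∑ i ∈ s, p i.2 ≤ p₀ * (2 * C + 1) := by
  classical
  rcases s.eq_empty_or_nonempty with rfl | ⟨i₀, hi₀⟩
  · simpa using by positivity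
  have hcard : s.card ≤ 2 * C + 1 := by
    rw [← Finset.card_image_of_injOn (f := fun i : Θ × Γ => (i.1 : ZMod P))]
    · refine card_le_of_isNear (y := i₀.1) fun x hx => ?_
      obtain ⟨i, hi, rfl⟩ := Finset.mem_image.mp hx
      exact (hs i hi i₀ hi₀).2
    · exact fun i hi k hk h => Prod.ext (Subtype.ext h) (hs i hi k hk).1
  calc ∑ i ∈ s, p i.2 ≤ s.card • p₀ := Finset.sum_le_card_nsmul _ _ _ fun i _ => hpp₀ _
    _ = p₀ * s.card := by rw [nsmul_eq_mul, mul_comm]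
    _ ≤ p₀ * (2 * C + 1) := by gcongr; exact_mod_cast hcard

lemma intCast_injOn_Icc_neg {T : ℕ} (hT : 2 * T < P) :
    Set.InjOn (fun t : ℤ => (t : ZMod P)) (Finset.Icc (-(T : ℤ)) T : Finset ℤ) := by
  intro t ht s hs h
  rw [Finset.coe_Icc, Set.mem_Icc] at ht hs
  have hdvd := (ZMod.intCast_eq_intCast_iff_dvd_sub t s P).mp h
  have := Int.eq_zero_of_abs_lt_dvd hdvd (by rw [abs_lt]; constructor <;> omega)
  omega

variable [NeZero P]

/-- The additive character `(y, z) ↦ e((y + z) / P)` of the ring `(ℤ/P)²`. -/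
def pairChar (P : ℕ) [NeZero P] : AddChar (ZMod P × ZMod P) ℂ :=
  ZMod.stdAddChar.compAddMonoidHom (AddMonoidHom.fst _ _ + AddMonoidHom.snd _ _)

lemma pairChar_apply (z : ZMod P × ZMod P) : pairChar P z = ZMod.stdAddChar (z.1 + z.2) := rfl

lemma isPrimitive_pairChar : (pairChar P).IsPrimitive := by
  intro z hz hone
  have hprim := ZMod.isPrimitive_stdAddChar P
  rcases not_and_or.mp (mt Prod.ext_iff.mpr hz) with h | h
  · refine hprim h (DFunLike.ext _ _ fun t => ?_)
    simpa [AddChar.mulShift_apply, pairChar_apply] using DFunLike.congr_fun hone (t, 0)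
  · refine hprim h (DFunLike.ext _ _ fun t => ?_)
    simpa [AddChar.mulShift_apply, pairChar_apply] using DFunLike.congr_fun hone (0, t)

lemma half_le_re_stdAddChar {a : ℕ} {t : ℤ} (h : a * |(t : ℝ)| ≤ P / 10) :
    1 / 2 ≤ (ZMod.stdAddChar ((a : ZMod P) * (t : ZMod P))).re := by
  have hP : (0 : ℝ) < P := by exact_mod_cast Nat.pos_of_ne_zero (NeZero.ne P)
  have hcast : (a : ZMod P) * (t : ZMod P) = (((a : ℤ) * t : ℤ) : ZMod P) := by push_cast; ring
  have hexp : 2 * (π : ℂ) * Complex.I * (((a : ℤ) * t : ℤ) : ℂ) / (P : ℂ) =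
      ((2 * π * (a * t / P) : ℝ) : ℂ) * Complex.I := by push_cast; ring
  have hfrac : |(a : ℝ) * t / P| ≤ 1 / 10 := by
    rw [abs_div, abs_mul, abs_of_pos hP, Nat.abs_cast, div_le_iff₀ hP]
    linarith
  have hangle : |2 * π * (a * t / P)| ≤ π / 3 := by
    rw [abs_mul, abs_of_pos (by positivity)]
    nlinarith [pi_pos]
  rw [hcast, ZMod.stdAddChar_coe, hexp, Complex.exp_ofReal_mul_I_re, ← cos_abs, ← cos_pi_div_three]
  exact cos_le_cos_of_nonneg_of_le_pi (abs_nonneg _) (by linarith [pi_pos]) hangle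

/-- The Dirichlet kernel `∑_{|t| ≤ T} e(at / P)` modulo `P`. -/
def dirichletKernel (P T a : ℕ) [NeZero P] : ℂ :=
  ∑ t ∈ Finset.Icc (-(T : ℤ)) T, ZMod.stdAddChar ((a : ZMod P) * (t : ZMod P))

lemma card_Icc_neg_self (T : ℕ) : (Finset.Icc (-(T : ℤ)) T).card = 2 * T + 1 := by
  rw [Int.card_Icc]
  omega

lemma abs_le_of_mem_Icc_neg {T : ℕ} {t : ℤ} (ht : t ∈ Finset.Icc (-(T : ℤ)) T) :
    |(t : ℝ)| ≤ T := by
  exact_mod_cast abs_le.mpr (Finset.mem_Icc.mp ht)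

lemma le_norm_dirichletKernel {T a : ℕ} (h : (a : ℝ) * T ≤ P / 10) :
    (2 * T + 1 : ℝ) / 2 ≤ ‖dirichletKernel P T a‖ := by
  refine le_trans ?_ (Complex.re_le_norm _)
  rw [dirichletKernel, Complex.re_sum]
  calc (2 * T + 1 : ℝ) / 2 = ∑ t ∈ Finset.Icc (-(T : ℤ)) T, (1 / 2 : ℝ) := by
        rw [Finset.sum_const, nsmul_eq_mul, card_Icc_neg_self]; push_cast; ring
    _ ≤ _ := Finset.sum_le_sum fun t ht => half_le_re_stdAddChar <|
        le_trans (by gcongr; exact abs_le_of_mem_Icc_neg ht) h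

section Smoothing

variable {X I : Type*} [Fintype X] [Fintype I] {a b : X → ℕ} {T : ℕ}

lemma pairChar_sum_eq_sum_translates (hTa : ∀ x, (a x : ℝ) * T ≤ P / 10)
    (hTb : ∀ x, (b x : ℝ) * T ≤ P / 10) (w : X → ℂ) (z : ZMod P × ZMod P) :
    ∑ x, w x * pairChar P (((a x : ZMod P), (b x : ZMod P)) * z) =
      ∑ t ∈ Finset.Icc (-(T : ℤ)) T ×ˢ Finset.Icc (-(T : ℤ)) T,
        ∑ x, w x / (dirichletKernel P T (a x) * dirichletKernel P T (b x)) *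
          pairChar P
            (((a x : ZMod P), (b x : ZMod P)) * (z + ((t.1 : ZMod P), (t.2 : ZMod P)))) := by
  rw [Finset.sum_comm]
  refine Finset.sum_congr rfl fun x _ => ?_
  have hsplit (t s : ℤ) :
      pairChar P (((a x : ZMod P), (b x : ZMod P)) * (z + ((t : ZMod P), (s : ZMod P)))) =
      pairChar P (((a x : ZMod P), (b x : ZMod P)) * z) *
        (ZMod.stdAddChar ((a x : ZMod P) * (t : ZMod P)) *
          ZMod.stdAddChar ((b x : ZMod P) * (s : ZMod P))) := by
    simp only [pairChar_apply, Prod.fst_mul, Prod.snd_mul, Prod.fst_add, Prod.snd_add,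
      ← AddChar.map_add_eq_mul]
    ring_nf
  have ha : dirichletKernel P T (a x) ≠ 0 :=
    norm_pos_iff.mp (lt_of_lt_of_le (by positivity) (le_norm_dirichletKernel (hTa x)))
  have hb : dirichletKernel P T (b x) ≠ 0 :=
    norm_pos_iff.mp (lt_of_lt_of_le (by positivity) (le_norm_dirichletKernel (hTb x)))
  rw [← Finset.mul_sum, Finset.sum_product]
  simp_rw [hsplit, ← Finset.mul_sum]
  rw [← Finset.sum_mul, ← dirichletKernel, ← dirichletKernel]
  field_simp

lemma sum_norm_sq_smoothed_le
    (hinj : Function.Injective fun x => ((a x, b x) : ZMod P × ZMod P))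
    (hTa : ∀ x, (a x : ℝ) * T ≤ P / 10) (hTb : ∀ x, (b x : ℝ) * T ≤ P / 10) (w : X → ℂ) :
    ∑ z, ‖∑ x, w x / (dirichletKernel P T (a x) * dirichletKernel P T (b x)) *
        pairChar P (((a x : ZMod P), (b x : ZMod P)) * z)‖ ^ 2 ≤
      P ^ 2 * (16 / (2 * T + 1) ^ 4 * ∑ x, ‖w x‖ ^ 2) := by
  rw [sum_norm_sq_addChar isPrimitive_pairChar hinj, Fintype.card_prod, ZMod.card, Nat.cast_mul,
    ← sq, Finset.mul_sum Finset.univ (fun x => ‖w x‖ ^ 2)]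
  gcongr with x
  rw [norm_div, norm_mul, div_pow, div_le_iff₀ (by
    have := le_norm_dirichletKernel (hTa x)
    have := le_norm_dirichletKernel (hTb x)
    have : (0 : ℝ) < (2 * T + 1) / 2 := by positivity
    exact sq_pos_of_pos (mul_pos (by linarith) (by linarith)))]
  calc ‖w x‖ ^ 2 = 16 / (2 * T + 1) ^ 4 * ‖w x‖ ^ 2 *
          ((2 * T + 1 : ℝ) / 2 * ((2 * T + 1) / 2)) ^ 2 := by field_simp; norm_num
    _ ≤ _ := by
        gcongr
        exacts [le_norm_dirichletKernel (hTa x), le_norm_dirichletKernel (hTb x)]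

lemma sum_translates_le (hT : 2 * T < P) {c : I → ℝ}
    (z : I → ZMod P × ZMod P) {κ : ℝ}
    (hκ : ∀ s : Finset I, (∀ i ∈ s, ∀ j ∈ s,
      IsNear (2 * T) (z i).1 (z j).1 ∧ IsNear (2 * T) (z i).2 (z j).2) → ∑ i ∈ s, c i ≤ κ)
    {f : ZMod P × ZMod P → ℝ} (hf : ∀ y, 0 ≤ f y) :
    ∑ i, c i * ∑ t ∈ Finset.Icc (-(T : ℤ)) T ×ˢ Finset.Icc (-(T : ℤ)) T,
        f (z i + ((t.1 : ZMod P), (t.2 : ZMod P))) ≤ κ * ∑ y, f y := by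
  classical
  set B := Finset.Icc (-(T : ℤ)) T
  let box (i : I) : Finset (ZMod P × ZMod P) :=
    (B ×ˢ B).image fun t => z i + ((t.1 : ZMod P), (t.2 : ZMod P))
  have hinj (i : I) : Set.InjOn (fun t : ℤ × ℤ => z i + ((t.1 : ZMod P), (t.2 : ZMod P)))
      (B ×ˢ B : Finset (ℤ × ℤ)) := by
    intro t ht s hs h
    rw [Finset.coe_product, Set.mem_prod] at ht hs
    have h' := Prod.mk.inj (add_left_cancel h)
    exact Prod.ext (intCast_injOn_Icc_neg hT ht.1 hs.1 h'.1)
      (intCast_injOn_Icc_neg hT ht.2 hs.2 h'.2)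
  have hnear {t s : ℤ} (ht : t ∈ B) (hs : s ∈ B) {x y v : ZMod P} (hx : x + t = v)
      (hy : y + s = v) : IsNear (2 * T) x y := by
    refine ⟨s - t, ?_, by push_cast; linear_combination hx - hy⟩
    push_cast
    linarith [abs_sub (s : ℝ) t, abs_le_of_mem_Icc_neg ht, abs_le_of_mem_Icc_neg hs]
  have hcluster (y : ZMod P × ZMod P) : ∑ i with y ∈ box i, c i ≤ κ := by
    refine hκ _ fun i hi j hj => ?_
    obtain ⟨t, ht, hit⟩ := Finset.mem_image.mp (Finset.mem_filter.mp hi).2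
    obtain ⟨s, hs, hjs⟩ := Finset.mem_image.mp (Finset.mem_filter.mp hj).2
    rw [Finset.mem_product] at ht hs
    exact ⟨hnear ht.1 hs.1 (congrArg Prod.fst hit) (congrArg Prod.fst hjs),
      hnear ht.2 hs.2 (congrArg Prod.snd hit) (congrArg Prod.snd hjs)⟩
  calc ∑ i, c i * ∑ t ∈ B ×ˢ B, f (z i + ((t.1 : ZMod P), (t.2 : ZMod P)))
      = ∑ i, ∑ y, if y ∈ box i then c i * f y else 0 := by
        refine Finset.sum_congr rfl fun i _ => ?_
        rw [← Finset.sum_image (f := f) (hinj i), Finset.mul_sum, Finset.sum_ite_mem,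
          Finset.univ_inter]
    _ = ∑ y, (∑ i with y ∈ box i, c i) * f y := by
        rw [Finset.sum_comm]
        exact Finset.sum_congr rfl fun y _ => by rw [Finset.sum_mul, Finset.sum_filter]
    _ ≤ ∑ y, κ * f y :=
        Finset.sum_le_sum fun y _ => mul_le_mul_of_nonneg_right (hcluster y) (hf y)
    _ = κ * ∑ y, f y := by rw [Finset.mul_sum]

/-- Dividing each coefficient by its Dirichlet kernels writes the exponential sum at `z` as a sum
over the box of translates `z + t`, so that the values at well-spaced points are controlled by the
full second moment. -/
lemma sum_mul_norm_sq_pairChar_sum_le (hT : 2 * T < P)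
    (hinj : Function.Injective fun x => ((a x, b x) : ZMod P × ZMod P))
    (hTa : ∀ x, (a x : ℝ) * T ≤ P / 10) (hTb : ∀ x, (b x : ℝ) * T ≤ P / 10) (w : X → ℂ)
    {c : I → ℝ} (hc : ∀ i, 0 ≤ c i) (z : I → ZMod P × ZMod P) {κ : ℝ}
    (hκ : ∀ s : Finset I, (∀ i ∈ s, ∀ j ∈ s,
      IsNear (2 * T) (z i).1 (z j).1 ∧ IsNear (2 * T) (z i).2 (z j).2) → ∑ i ∈ s, c i ≤ κ) :
    ∑ i, c i * ‖∑ x, w x * pairChar P (((a x : ZMod P), (b x : ZMod P)) * z i)‖ ^ 2 ≤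
      16 * (P / (2 * T + 1)) ^ 2 * κ * ∑ x, ‖w x‖ ^ 2 := by
  have hκ₀ : 0 ≤ κ := by simpa using hκ ∅ (by simp)
  set B := Finset.Icc (-(T : ℤ)) T with hB
  set F : ZMod P × ZMod P → ℂ := fun z =>
    ∑ x, w x / (dirichletKernel P T (a x) * dirichletKernel P T (b x)) *
      pairChar P (((a x : ZMod P), (b x : ZMod P)) * z)
  have hcs (i) : ‖∑ t ∈ B ×ˢ B, F (z i + ((t.1 : ZMod P), (t.2 : ZMod P)))‖ ^ 2 ≤
      (2 * T + 1) ^ 2 * ∑ t ∈ B ×ˢ B, ‖F (z i + ((t.1 : ZMod P), (t.2 : ZMod P)))‖ ^ 2 := by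
    refine (pow_le_pow_left₀ (norm_nonneg _) (norm_sum_le _ _) 2).trans ?_
    refine sq_sum_le_card_mul_sum_sq.trans_eq ?_
    rw [Finset.card_product, hB, card_Icc_neg_self]
    push_cast
    ring
  calc ∑ i, c i * ‖∑ x, w x * pairChar P (((a x : ZMod P), (b x : ZMod P)) * z i)‖ ^ 2
      = ∑ i, c i * ‖∑ t ∈ B ×ˢ B, F (z i + ((t.1 : ZMod P), (t.2 : ZMod P)))‖ ^ 2 :=
        Finset.sum_congr rfl fun i _ => by rw [pairChar_sum_eq_sum_translates hTa hTb w (z i)]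
    _ ≤ (2 * T + 1) ^ 2 *
          ∑ i, c i * ∑ t ∈ B ×ˢ B, ‖F (z i + ((t.1 : ZMod P), (t.2 : ZMod P)))‖ ^ 2 := by
        rw [Finset.mul_sum]
        refine Finset.sum_le_sum fun i _ => ?_
        rw [mul_left_comm]
        exact mul_le_mul_of_nonneg_left (hcs i) (hc i)
    _ ≤ (2 * T + 1) ^ 2 * (κ * (P ^ 2 * (16 / (2 * T + 1) ^ 4 * ∑ x, ‖w x‖ ^ 2))) := by
        gcongr
        refine (sum_translates_le hT z hκ fun y => sq_nonneg ‖F y‖).trans ?_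
        exact mul_le_mul_of_nonneg_left (sum_norm_sq_smoothed_le hinj hTa hTb w) hκ₀
    _ = 16 * (P / (2 * T + 1)) ^ 2 * κ * ∑ x, ‖w x‖ ^ 2 := by field_simp

theorem large_sieve (hinj : Function.Injective fun x => ((a x, b x) : ZMod P × ZMod P))
    {M : ℝ} (hM : 1 ≤ M) (haM : ∀ x, (a x : ℝ) ≤ M) (hbM : ∀ x, (b x : ℝ) ≤ M) (w : X → ℂ)
    {c : I → ℝ} (hc : ∀ i, 0 ≤ c i) (z : I → ZMod P × ZMod P) {κ : ℝ}
    (hκ : ∀ s : Finset I, (∀ i ∈ s, ∀ j ∈ s,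
      IsNear (P / (5 * M)) (z i).1 (z j).1 ∧ IsNear (P / (5 * M)) (z i).2 (z j).2) →
        ∑ i ∈ s, c i ≤ κ) :
    ∑ i, c i * ‖∑ x, w x * pairChar P (((a x : ZMod P), (b x : ZMod P)) * z i)‖ ^ 2 ≤
      1600 * M ^ 2 * κ * ∑ x, ‖w x‖ ^ 2 := by
  have hP : (0 : ℝ) < P := by exact_mod_cast Nat.pos_of_ne_zero (NeZero.ne P)
  set T : ℕ := ⌊(P : ℝ) / (10 * M)⌋₊
  have hTle : (T : ℝ) ≤ P / (10 * M) := Nat.floor_le (by positivity)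
  have hTge : (P : ℝ) / (2 * T + 1) ≤ 10 * M := by
    have := (div_lt_iff₀ (by positivity)).mp (Nat.lt_floor_add_one ((P : ℝ) / (10 * M)))
    rw [div_le_iff₀ (by positivity)]
    nlinarith
  have hMT : M * T ≤ P / 10 :=
    (mul_le_mul_of_nonneg_left hTle (by positivity)).trans_eq (by field_simp)
  have hTP : 2 * T < P := by
    have : 2 * (T : ℝ) < P := by nlinarith
    exact_mod_cast this
  have hTa (x) : (a x : ℝ) * T ≤ P / 10 := le_trans (by gcongr; exact haM x) hMT
  have hTb (x) : (b x : ℝ) * T ≤ P / 10 := le_trans (by gcongr; exact hbM x) hMT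
  have hδ : 2 * (T : ℝ) ≤ P / (5 * M) :=
    (mul_le_mul_of_nonneg_left hTle two_pos.le).trans_eq (by field_simp; norm_num)
  have hκ₀ : 0 ≤ κ := by simpa using hκ ∅ (by simp)
  calc ∑ i, c i * ‖∑ x, w x * pairChar P (((a x : ZMod P), (b x : ZMod P)) * z i)‖ ^ 2
      ≤ 16 * (P / (2 * T + 1)) ^ 2 * κ * ∑ x, ‖w x‖ ^ 2 :=
        sum_mul_norm_sq_pairChar_sum_le hTP hinj hTa hTb w hc z fun s hs =>
          hκ s fun i hi j hj => (hs i hi j hj).imp (·.mono hδ) (·.mono hδ)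
    _ ≤ 16 * (10 * M) ^ 2 * κ * ∑ x, ‖w x‖ ^ 2 := by gcongr
    _ = 1600 * M ^ 2 * κ * ∑ x, ‖w x‖ ^ 2 := by ring

end Smoothing

theorem large_sieve_average {X Γ : Type*} [Fintype X] [Fintype Γ] {a b : X → ℕ}
    (hinj : Function.Injective fun x => ((a x, b x) : ZMod P × ZMod P))
    {M : ℝ} (hM : 1 ≤ M) (haM : ∀ x, (a x : ℝ) ≤ M) (hbM : ∀ x, (b x : ℝ) ≤ M) (w : X → ℂ)
    {p : Γ → ℝ} (hp : ∀ g, 0 ≤ p g) (hp1 : ∑ g, p g ≤ 1) {p₀ : ℝ} (hp₀ : 0 ≤ p₀)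
    (hpp₀ : ∀ g, p g ≤ p₀) (u v : Γ → ℕ) (Θ : Finset (ZMod P)) {C : ℕ}
    (hclose : ∀ j ∈ Θ, ∀ j' ∈ Θ, ∀ g g',
      IsNear (P / (5 * M)) (j * (u g : ZMod P)) (j' * (u g' : ZMod P)) →
      IsNear (P / (5 * M)) (j * (v g : ZMod P)) (j' * (v g' : ZMod P)) →
        g = g' ∧ IsNear C j j') :
    ∑ j ∈ Θ, ‖∑ g, (p g : ℂ) * ∑ x, w x *
      ZMod.stdAddChar (j * ((a x * u g + b x * v g : ℕ) : ZMod P))‖ ^ 2 ≤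
      1600 * M ^ 2 * (p₀ * (2 * C + 1)) * ∑ x, ‖w x‖ ^ 2 := by
  refine le_trans ?_ (large_sieve (I := Θ × Γ) hinj hM haM hbM w (fun i => hp i.2)
    (fun i => ((i.1 : ZMod P) * (u i.2 : ZMod P), (i.1 : ZMod P) * (v i.2 : ZMod P)))
    fun s hs => sum_le_of_forall_isNear hp₀ hpp₀ fun i hi k hk =>
      hclose _ i.1.2 _ k.1.2 _ _ (hs i hi k hk).1 (hs i hi k hk).2)
  rw [Fintype.sum_prod_type, ← Finset.sum_coe_sort Θ]
  refine Finset.sum_le_sum fun j _ =>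
    (norm_sum_mul_sq_le _ (fun g _ => hp g) hp1 _).trans_eq ?_
  refine Finset.sum_congr rfl fun g _ => ?_
  congr 3
  refine Finset.sum_congr rfl fun x _ => ?_
  rw [pairChar_apply]
  congr 2
  push_cast
  simp only [Prod.mk_mul_mk]
  ring

end ExponentialSums

section CloseMultiples

/-- The determinant `v₁w₂ - v₂w₁` of two vectors of the lattice `ℤ²`. -/
def wedge (v w : ℕ × ℕ) : ℤ := (v.1 : ℤ) * w.2 - v.2 * w.1

lemma eq_of_wedge_eq_zero {v w : ℕ × ℕ} (hv : v.1.Coprime v.2) (hw : w.1.Coprime w.2)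
    (h : wedge v w = 0) : v = w := by
  have hcross : v.1 * w.2 = v.2 * w.1 := by exact_mod_cast sub_eq_zero.mp h
  refine Prod.ext (Nat.dvd_antisymm ?_ ?_) (Nat.dvd_antisymm ?_ ?_)
  · exact hv.dvd_of_dvd_mul_left ⟨w.2, hcross.symm⟩
  · exact hw.dvd_of_dvd_mul_right ⟨v.2, by rw [hcross, mul_comm]⟩
  · exact hv.symm.dvd_of_dvd_mul_left ⟨w.1, hcross⟩
  · exact hw.symm.dvd_of_dvd_mul_right ⟨v.1, by rw [← hcross, mul_comm]⟩

lemma dvd_of_dvd_mul_of_isCoprime {x y c d : ℤ} (h : IsCoprime x y) (hx : d ∣ c * x)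
    (hy : d ∣ c * y) : d ∣ c := by
  obtain ⟨r, s, hrs⟩ := h
  have : c = r * (c * x) + s * (c * y) := by linear_combination (-c) * hrs
  rw [this]
  exact dvd_add (hx.mul_left _) (hy.mul_left _)

lemma abs_mul_sub_mul_le {s t x y δ H : ℝ} (hs : |s| ≤ δ) (ht : |t| ≤ δ) (hx : |x| ≤ H)
    (hy : |y| ≤ H) : |s * x - t * y| ≤ 2 * H * δ :=
  calc |s * x - t * y| ≤ |s| * |x| + |t| * |y| := by
        rw [← abs_mul, ← abs_mul]
        exact abs_sub _ _
    _ ≤ δ * H + δ * H := by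
        gcongr
        exacts [(abs_nonneg s).trans hs, (abs_nonneg s).trans hs]
    _ = 2 * H * δ := by ring

variable {P : ℕ}

lemma intCast_injOn_abs_lt {s t : ℤ} (h : (s : ZMod P) = t) (hlt : |(s : ℝ) - t| < P) : s = t := by
  have hdvd : (P : ℤ) ∣ s - t :=
    (ZMod.intCast_zmod_eq_zero_iff_dvd _ _).mp (by push_cast; rw [h, sub_self])
  exact sub_eq_zero.mp (Int.eq_zero_of_abs_lt_dvd hdvd (by exact_mod_cast hlt))

lemma isNear_mul_wedge_zero {δ H : ℝ} {j j' : ZMod P} {v w : ℕ × ℕ} (hw₁ : (w.1 : ℝ) ≤ H)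
    (hw₂ : (w.2 : ℝ) ≤ H) (h₁ : IsNear δ (j * (v.1 : ZMod P)) (j' * (w.1 : ZMod P)))
    (h₂ : IsNear δ (j * (v.2 : ZMod P)) (j' * (w.2 : ZMod P))) :
    IsNear (2 * H * δ) (j * (wedge v w : ZMod P)) 0 := by
  obtain ⟨t₁, ht₁, e₁⟩ := h₁
  obtain ⟨t₂, ht₂, e₂⟩ := h₂
  refine ⟨t₁ * w.2 - t₂ * w.1, ?_, ?_⟩
  · push_cast
    exact abs_mul_sub_mul_le ht₁ ht₂ (by rwa [Nat.abs_cast]) (by rwa [Nat.abs_cast])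
  · push_cast [wedge]
    linear_combination (w.2 : ZMod P) * e₁ - (w.1 : ZMod P) * e₂

lemma IsNear.natAbs_mul {δ : ℝ} {j : ZMod P} {m : ℤ} (h : IsNear δ (j * (m : ZMod P)) 0) :
    IsNear δ (j * (m.natAbs : ZMod P)) 0 := by
  obtain ⟨t, ht, e⟩ := h
  have hcast : ((m.natAbs : ℤ) : ZMod P) = (m.natAbs : ZMod P) := Int.cast_natCast _
  rcases Int.natAbs_eq m with hm | hm
  · exact ⟨t, ht, by rw [← hcast, ← hm, e]⟩
  · refine ⟨-t, by rwa [Int.cast_neg, abs_neg], ?_⟩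
    rw [← hcast, ← neg_eq_iff_eq_neg.mpr hm, Int.cast_neg, Int.cast_neg, ← e]
    ring

lemma natAbs_wedge_le {v w : ℕ × ℕ} {H : ℝ} (hv₁ : (v.1 : ℝ) ≤ H) (hv₂ : (v.2 : ℝ) ≤ H)
    (hw₁ : (w.1 : ℝ) ≤ H) (hw₂ : (w.2 : ℝ) ≤ H) : ((wedge v w).natAbs : ℝ) ≤ H ^ 2 := by
  have hH : 0 ≤ H := (Nat.cast_nonneg _).trans hv₁
  have h₁ : (v.1 : ℝ) * w.2 ≤ H * H := by gcongr
  have h₂ : (v.2 : ℝ) * w.1 ≤ H * H := by gcongr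
  have h₃ : (0 : ℝ) ≤ (v.1 : ℝ) * w.2 := by positivity
  have h₄ : (0 : ℝ) ≤ (v.2 : ℝ) * w.1 := by positivity
  rw [Nat.cast_natAbs, Int.cast_abs, wedge]
  push_cast
  rw [abs_le]
  constructor <;> linarith

lemma eq_of_isNear_mul {δ H : ℝ} {j j' : ZMod P} {v w : ℕ × ℕ} (hv : v.1.Coprime v.2)
    (hw : w.1.Coprime w.2) (hv₁ : (v.1 : ℝ) ≤ H) (hv₂ : (v.2 : ℝ) ≤ H) (hw₁ : (w.1 : ℝ) ≤ H)
    (hw₂ : (w.2 : ℝ) ≤ H)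
    (hj : ∀ D : ℕ, 1 ≤ D → (D : ℝ) ≤ H ^ 2 → ¬ IsNear (2 * H * δ) (j * (D : ZMod P)) 0)
    (h₁ : IsNear δ (j * (v.1 : ZMod P)) (j' * (w.1 : ZMod P)))
    (h₂ : IsNear δ (j * (v.2 : ZMod P)) (j' * (w.2 : ZMod P))) : v = w := by
  refine eq_of_wedge_eq_zero hv hw (by_contra fun hne => ?_)
  exact hj _ (Int.natAbs_pos.mpr hne) (natAbs_wedge_le hv₁ hv₂ hw₁ hw₂)
    (isNear_mul_wedge_zero hw₁ hw₂ h₁ h₂).natAbs_mul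

lemma isNear_of_isNear_mul_coprime {δ H : ℝ} {j j' : ZMod P} {v : ℕ × ℕ} (hv : v.1.Coprime v.2)
    (hpos : 0 < v.1) (hv₁ : (v.1 : ℝ) ≤ H) (hv₂ : (v.2 : ℝ) ≤ H) (hP : 2 * H * δ < P)
    (h₁ : IsNear δ (j * (v.1 : ZMod P)) (j' * (v.1 : ZMod P)))
    (h₂ : IsNear δ (j * (v.2 : ZMod P)) (j' * (v.2 : ZMod P))) : IsNear (δ / v.1) j j' := by
  obtain ⟨t₁, ht₁, e₁⟩ := h₁
  obtain ⟨t₂, ht₂, e₂⟩ := h₂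
  have hcross : t₁ * v.2 = t₂ * v.1 := by
    refine intCast_injOn_abs_lt (P := P) ?_ (lt_of_le_of_lt ?_ hP)
    · push_cast
      linear_combination (v.1 : ZMod P) * e₂ - (v.2 : ZMod P) * e₁
    · push_cast
      exact abs_mul_sub_mul_le ht₁ ht₂ (by rwa [Nat.abs_cast]) (by rwa [Nat.abs_cast])
  have hcop : IsCoprime (v.1 : ℤ) v.2 := Nat.isCoprime_iff_coprime.mpr hv
  obtain ⟨e, rfl⟩ : (v.1 : ℤ) ∣ t₁ := hcop.dvd_of_dvd_mul_right ⟨t₂, by rw [hcross, mul_comm]⟩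
  have ht₂ : t₂ = v.2 * e :=
    mul_right_cancel₀ (b := (v.1 : ℤ)) (by positivity) (by linear_combination -hcross)
  obtain ⟨r, s, hrs⟩ := hcop
  refine ⟨e, ?_, ?_⟩
  · rw [le_div_iff₀ (by exact_mod_cast hpos)]
    rwa [Int.cast_mul, abs_mul, Int.cast_natCast, Nat.abs_cast, mul_comm] at ht₁
  · have hrs' : (r : ZMod P) * v.1 + s * v.2 = 1 := by
      exact_mod_cast congrArg (Int.cast (R := ZMod P)) hrs
    rw [ht₂] at e₂
    push_cast at e₁ e₂
    linear_combination r * e₁ + s * e₂ - (j - j' - e) * hrs'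

lemma IsNear.of_mul {ε δ : ℝ} {x y : ZMod P} {n : ℕ} (hn : 0 < n) (h : IsNear ε x y)
    (hmul : IsNear δ (x * (n : ZMod P)) (y * (n : ZMod P))) (hP : ε * n + δ < P) :
    IsNear (δ / n) x y := by
  obtain ⟨s, hs, es⟩ := h
  obtain ⟨t, ht, et⟩ := hmul
  have hst : s * n = t := by
    refine intCast_injOn_abs_lt (P := P) (by push_cast; linear_combination et - n * es) ?_
    push_cast
    calc |(s : ℝ) * n - t| ≤ |(s : ℝ)| * n + |(t : ℝ)| :=
          (abs_sub _ _).trans_eq (by rw [abs_mul, Nat.abs_cast])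
      _ ≤ ε * n + δ := by gcongr
      _ < P := hP
  refine ⟨s, ?_, es⟩
  rw [le_div_iff₀ (by exact_mod_cast hn)]
  rwa [← hst, Int.cast_mul, abs_mul, Int.cast_natCast, Nat.abs_cast] at ht

/-- The reduced fraction `a / q` approximates `j / P` with error at most `2K / P`, where the residue
`j` is identified with its representative in `[0, P)`. -/
structure IsApprox (K : ℝ) (j : ZMod P) (a : ℤ) (q : ℕ) : Prop where
  denom_pos : 0 < q
  isCoprime : IsCoprime a (q : ℤ)
  abs_le : |(j.val : ℝ) * q - P * a| ≤ 2 * K * q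

lemma IsNear.exists_intCast [NeZero P] {δ : ℝ} {j j' : ZMod P} {v w : ℕ}
    (h : IsNear δ (j * (v : ZMod P)) (j' * (w : ZMod P))) :
    ∃ n : ℤ, |(j.val : ℝ) * v - j'.val * w - P * n| ≤ δ := by
  obtain ⟨t, ht, e⟩ := h
  have hdvd : (P : ℤ) ∣ j.val * v - j'.val * w - t := by
    refine (ZMod.intCast_zmod_eq_zero_iff_dvd _ _).mp ?_
    push_cast
    rw [ZMod.natCast_zmod_val, ZMod.natCast_zmod_val, e, sub_self]
  obtain ⟨n, hn⟩ := hdvd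
  refine ⟨n, ?_⟩
  have : (j.val : ℝ) * v - j'.val * w - P * n = t := by
    have : (j.val : ℝ) * v - j'.val * w - t = P * n := by exact_mod_cast hn
    linarith
  rwa [this]

lemma IsApprox.cross_eq_of_abs_le [NeZero P] {K Q V δ : ℝ} {j j' : ZMod P} {a a' : ℤ}
    {q q' v w : ℕ} {n : ℤ}
    (h : IsApprox K j a q) (h' : IsApprox K j' a' q') (hq : (q : ℝ) < 2 * Q)
    (hq' : (q' : ℝ) < 2 * Q) (hv : (v : ℝ) ≤ V) (hw : (w : ℝ) ≤ V)
    (hsmall : 4 * Q ^ 2 * (δ + 4 * K * V) ≤ P)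
    (hn : |(j.val : ℝ) * v - j'.val * w - P * n| ≤ δ) :
    q' * a * v - q * a' * w = q * q' * n := by
  have hqpos : (0 : ℝ) < q := by exact_mod_cast h.denom_pos
  have hqpos' : (0 : ℝ) < q' := by exact_mod_cast h'.denom_pos
  have hV : 0 ≤ V := (Nat.cast_nonneg v).trans hv
  set E : ℤ := q' * a * v - q * a' * w - q * q' * n with hE
  have herror : (P : ℝ) * E = q * q' * ((j.val : ℝ) * v - j'.val * w - P * n)
      - q' * v * ((j.val : ℝ) * q - P * a) + q * w * ((j'.val : ℝ) * q' - P * a') := by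
    rw [hE]; push_cast; ring
  have hbound : (P : ℝ) * |(E : ℝ)| ≤ q * q' * (δ + 4 * K * V) :=
    calc (P : ℝ) * |(E : ℝ)| = |(P : ℝ) * E| := by rw [abs_mul, Nat.abs_cast]
      _ ≤ q * q' * |(j.val : ℝ) * v - j'.val * w - P * n| + q' * v * |(j.val : ℝ) * q - P * a|
          + q * w * |(j'.val : ℝ) * q' - P * a'| := by
        rw [herror]
        refine (abs_add_le _ _).trans ?_
        refine (add_le_add_left (abs_sub _ _) _).trans_eq ?_
        simp only [abs_mul, Nat.abs_cast]
      _ ≤ q * q' * δ + q' * V * (2 * K * q) + q * V * (2 * K * q') := by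
        gcongr
        exacts [h.abs_le, h'.abs_le]
      _ = q * q' * (δ + 4 * K * V) := by ring
  have hqq : (q : ℝ) * q' < 4 * Q ^ 2 := by nlinarith
  have hE0 : E = 0 := by
    rw [← Int.abs_lt_one_iff]
    by_contra! hge
    have hge' : (1 : ℝ) ≤ |(E : ℝ)| := by exact_mod_cast hge
    have hPle : (P : ℝ) ≤ q * q' * (δ + 4 * K * V) :=
      (le_mul_of_one_le_right (Nat.cast_nonneg P) hge').trans hbound
    have hP : (0 : ℝ) < P := by exact_mod_cast Nat.pos_of_ne_zero (NeZero.ne P)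
    have hpos : 0 < δ + 4 * K * V := pos_of_mul_pos_right (hP.trans_le hPle) (by positivity)
    nlinarith
  exact sub_eq_zero.mp hE0

lemma denom_dvd_of_cross_eq {a a' : ℤ} {q q' : ℕ} {v w : ℕ × ℕ} {n₁ n₂ : ℤ}
    (haq : IsCoprime a (q : ℤ)) (hv : v.1.Coprime v.2)
    (h₁ : q' * a * v.1 - q * a' * w.1 = q * q' * n₁)
    (h₂ : q' * a * v.2 - q * a' * w.2 = q * q' * n₂) : q ∣ q' := by
  rw [← Int.natCast_dvd_natCast]
  refine dvd_of_dvd_mul_of_isCoprime (Nat.isCoprime_iff_coprime.mpr hv) ?_ ?_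
  · exact haq.symm.dvd_of_dvd_mul_left ⟨a' * w.1 + q' * n₁, by linear_combination h₁⟩
  · exact haq.symm.dvd_of_dvd_mul_left ⟨a' * w.2 + q' * n₂, by linear_combination h₂⟩

lemma IsApprox.denom_eq {K : ℝ} {j j' : ZMod P} {a a' : ℤ} {q q' : ℕ} {v w : ℕ × ℕ} {n₁ n₂ : ℤ}
    (h : IsApprox K j a q) (h' : IsApprox K j' a' q') (hv : v.1.Coprime v.2)
    (hw : w.1.Coprime w.2) (h₁ : q' * a * v.1 - q * a' * w.1 = q * q' * n₁)
    (h₂ : q' * a * v.2 - q * a' * w.2 = q * q' * n₂) : q = q' :=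
  Nat.dvd_antisymm (denom_dvd_of_cross_eq h.isCoprime hv h₁ h₂)
    (denom_dvd_of_cross_eq (a' := a) (w := v) (n₁ := -n₁) (n₂ := -n₂) h'.isCoprime hw
      (by linear_combination -h₁) (by linear_combination -h₂))

lemma IsApprox.exists_sub_eq_mul [NeZero P] {K Q V δ : ℝ} {j j' : ZMod P} {a a' : ℤ} {q q' : ℕ}
    {v w : ℕ × ℕ} (h : IsApprox K j a q) (h' : IsApprox K j' a' q') (hq : (q : ℝ) < 2 * Q)
    (hq' : (q' : ℝ) < 2 * Q) (hv : v.1.Coprime v.2) (hw : w.1.Coprime w.2)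
    (hv₁ : (v.1 : ℝ) ≤ V) (hv₂ : (v.2 : ℝ) ≤ V) (hw₁ : (w.1 : ℝ) ≤ V) (hw₂ : (w.2 : ℝ) ≤ V)
    (hsmall : 4 * Q ^ 2 * (δ + 4 * K * V) ≤ P)
    (h₁ : IsNear δ (j * (v.1 : ZMod P)) (j' * (w.1 : ZMod P)))
    (h₂ : IsNear δ (j * (v.2 : ZMod P)) (j' * (w.2 : ZMod P))) :
    q = q' ∧ ∃ n₁ n₂ : ℤ, a * v.1 - a' * w.1 = q * n₁ ∧ a * v.2 - a' * w.2 = q * n₂ ∧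
      |(j.val : ℝ) * v.1 - j'.val * w.1 - P * n₁| ≤ δ ∧
      |(j.val : ℝ) * v.2 - j'.val * w.2 - P * n₂| ≤ δ := by
  obtain ⟨n₁, hn₁⟩ := h₁.exists_intCast
  obtain ⟨n₂, hn₂⟩ := h₂.exists_intCast
  have c₁ := h.cross_eq_of_abs_le h' hq hq' hv₁ hw₁ hsmall hn₁
  have c₂ := h.cross_eq_of_abs_le h' hq hq' hv₂ hw₂ hsmall hn₂
  obtain rfl := h.denom_eq h' hv hw c₁ c₂
  have hq0 : (q : ℤ) ≠ 0 := by exact_mod_cast h.denom_pos.ne'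
  exact ⟨rfl, n₁, n₂, mul_left_cancel₀ hq0 (by linear_combination c₁),
    mul_left_cancel₀ hq0 (by linear_combination c₂), hn₁, hn₂⟩

lemma dvd_wedge_of_sub_eq_mul {a a' : ℤ} {q : ℕ} {v w : ℕ × ℕ} {n₁ n₂ : ℤ}
    (haq : IsCoprime a (q : ℤ)) (h₁ : a * v.1 - a' * w.1 = q * n₁)
    (h₂ : a * v.2 - a' * w.2 = q * n₂) : (q : ℤ) ∣ wedge v w := by
  refine haq.symm.dvd_of_dvd_mul_left ⟨n₁ * w.2 - n₂ * w.1, ?_⟩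
  rw [wedge]
  linear_combination w.2 * h₁ - w.1 * h₂

lemma abs_sub_mul_abs_wedge_le {a a' : ℤ} {q j j' : ℕ} {v w : ℕ × ℕ} {n₁ n₂ : ℤ} {V δ : ℝ}
    (hw₁ : (w.1 : ℝ) ≤ V) (hw₂ : (w.2 : ℝ) ≤ V) (h₁ : a * v.1 - a' * w.1 = q * n₁)
    (h₂ : a * v.2 - a' * w.2 = q * n₂) (hn₁ : |(j : ℝ) * v.1 - j' * w.1 - P * n₁| ≤ δ)
    (hn₂ : |(j : ℝ) * v.2 - j' * w.2 - P * n₂| ≤ δ) :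
    |(j : ℝ) * q - P * a| * |(wedge v w : ℝ)| ≤ q * (2 * V * δ) := by
  have h₁' : (a : ℝ) * v.1 - a' * w.1 = q * n₁ := by exact_mod_cast h₁
  have h₂' : (a : ℝ) * v.2 - a' * w.2 = q * n₂ := by exact_mod_cast h₂
  have hid : ((j : ℝ) * q - P * a) * (wedge v w : ℝ) =
      q * (((j : ℝ) * v.1 - j' * w.1 - P * n₁) * w.2 -
        ((j : ℝ) * v.2 - j' * w.2 - P * n₂) * w.1) := by
    push_cast [wedge]
    linear_combination (-P * w.2 : ℝ) * h₁' + (P * w.1 : ℝ) * h₂'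
  rw [← abs_mul, hid, abs_mul, Nat.abs_cast]
  gcongr
  exact abs_mul_sub_mul_le hn₁ hn₂ (by rwa [Nat.abs_cast]) (by rwa [Nat.abs_cast])

lemma IsApprox.isNear_of_dvd [NeZero P] {K : ℝ} {j j' : ZMod P} {a a' : ℤ} {q : ℕ}
    (h : IsApprox K j a q) (h' : IsApprox K j' a' q) (hdvd : (q : ℤ) ∣ a - a') :
    IsNear (4 * K) j j' := by
  obtain ⟨l, hl⟩ := hdvd
  have hq : (0 : ℝ) < q := by exact_mod_cast h.denom_pos
  have hl' : (a : ℝ) - a' = q * l := by exact_mod_cast hl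
  refine ⟨j.val - j'.val - P * l, ?_, by push_cast; simp⟩
  refine le_of_mul_le_mul_left ?_ hq
  calc (q : ℝ) * |((j.val - j'.val - P * l : ℤ) : ℝ)|
      = |((j.val : ℝ) * q - P * a) - ((j'.val : ℝ) * q - P * a')| := by
        rw [← Nat.abs_cast q, ← abs_mul, Nat.abs_cast]
        push_cast
        congr 1
        linear_combination P * hl'
    _ ≤ 2 * K * q + 2 * K * q := (abs_sub _ _).trans (add_le_add h.abs_le h'.abs_le)
    _ = q * (4 * K) := by ring

end CloseMultiples

section Continuants

/-- The product of the matrices `!![d, 1; 1, 0]` over the digits `d` of `w`. Its entries are the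
continuants of `w` with the last digit, the first digit, or both removed, so that concatenation of
words becomes multiplication. -/
def contMatrix (w : List ℕ) : Matrix (Fin 2) (Fin 2) ℕ :=
  (w.map fun d => !![d, 1; 1, 0]).prod

lemma contMatrix_nil : contMatrix [] = 1 := rfl

lemma contMatrix_append (u v : List ℕ) :
    contMatrix (u ++ v) = contMatrix u * contMatrix v := by
  simp [contMatrix]

lemma contMatrix_append_apply (u v : List ℕ) (i j : Fin 2) :
    contMatrix (u ++ v) i j =
      contMatrix u i 0 * contMatrix v 0 j + contMatrix u i 1 * contMatrix v 1 j := by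
  rw [contMatrix_append, Matrix.mul_apply, Fin.sum_univ_two]

lemma contMatrix_singleton (d : ℕ) : contMatrix [d] = !![d, 1; 1, 0] := by
  simp [contMatrix]

lemma contMatrix_cons_zero (d : ℕ) (w : List ℕ) (k : Fin 2) :
    contMatrix (d :: w) 0 k = d * contMatrix w 0 k + contMatrix w 1 k := by
  rw [← List.singleton_append, contMatrix_append_apply, contMatrix_singleton]
  simp

lemma contMatrix_cons_one (d : ℕ) (w : List ℕ) (k : Fin 2) :
    contMatrix (d :: w) 1 k = contMatrix w 0 k := by
  rw [← List.singleton_append, contMatrix_append_apply, contMatrix_singleton]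
  simp

lemma contMatrix_zero_zero : ∀ w : List ℕ, contMatrix w 0 0 = cont w
  | [] => rfl
  | [d] => by simp [contMatrix_singleton, cont]
  | d :: e :: w => by
    rw [cont, ← contMatrix_zero_zero (e :: w), ← contMatrix_zero_zero w, contMatrix_cons_zero,
      contMatrix_cons_one e w]

lemma contMatrix_cons_one_zero (d : ℕ) (w : List ℕ) : contMatrix (d :: w) 1 0 = cont w := by
  rw [contMatrix_cons_one, contMatrix_zero_zero]

lemma contMatrix_reverse (w : List ℕ) : contMatrix w.reverse = (contMatrix w).transpose := by
  induction w with
  | nil => rw [List.reverse_nil, contMatrix_nil, Matrix.transpose_one]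
  | cons d w ih =>
    have hsymm : (contMatrix [d]).transpose = contMatrix [d] := by
      rw [contMatrix_singleton]
      ext i j
      fin_cases i <;> fin_cases j <;> rfl
    rw [List.reverse_cons, contMatrix_append, ih, ← List.singleton_append (x := d) (l := w),
      contMatrix_append, Matrix.transpose_mul, hsymm]

lemma cont_reverse (w : List ℕ) : cont w.reverse = cont w := by
  rw [← contMatrix_zero_zero, contMatrix_reverse, Matrix.transpose_apply, contMatrix_zero_zero]

lemma contMatrix_det (w : List ℕ) :
    (contMatrix w 0 0 : ℤ) * contMatrix w 1 1 - contMatrix w 0 1 * contMatrix w 1 0 =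
      (-1) ^ w.length := by
  induction w with
  | nil => simp [contMatrix_nil]
  | cons d w ih =>
    simp only [contMatrix_cons_zero, contMatrix_cons_one, List.length_cons, pow_succ, ← ih]
    push_cast
    ring

variable {A : ℕ} {u v w : List ℕ}

lemma contMatrix_one_zero_le_and_cont_pos (h : 0 ∉ w) :
    contMatrix w 1 0 ≤ cont w ∧ 0 < cont w := by
  rw [← contMatrix_zero_zero]
  induction w with
  | nil => simp [contMatrix_nil]
  | cons d w ih =>
    obtain ⟨hd, hw⟩ := List.ne_and_not_mem_of_not_mem_cons h
    have hpos := (ih hw).2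
    rw [contMatrix_cons_zero, contMatrix_cons_one]
    have := Nat.le_mul_of_pos_left (contMatrix w 0 0) (Nat.pos_of_ne_zero hd.symm)
    omega

lemma contMatrix_one_zero_le (h : 0 ∉ w) : contMatrix w 1 0 ≤ cont w :=
  (contMatrix_one_zero_le_and_cont_pos h).1

lemma cont_pos (h : 0 ∉ w) : 0 < cont w :=
  (contMatrix_one_zero_le_and_cont_pos h).2

lemma one_le_cont (h : 0 ∉ w) : (1 : ℝ) ≤ cont w := by
  exact_mod_cast cont_pos h

lemma contMatrix_zero_one_le (h : 0 ∉ w) : contMatrix w 0 1 ≤ cont w := by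
  have := contMatrix_one_zero_le (w := w.reverse) (by simpa using h)
  rwa [contMatrix_reverse, Matrix.transpose_apply, cont_reverse] at this

lemma cont_le_mul_contMatrix_one_zero (h : 0 ∉ w) (hA : ∀ d ∈ w, d ≤ A) (hw : w ≠ []) :
    cont w ≤ (A + 1) * contMatrix w 1 0 := by
  obtain ⟨d, t, rfl⟩ := List.exists_cons_of_ne_nil hw
  rw [← contMatrix_zero_zero, contMatrix_cons_zero, contMatrix_cons_one]
  have hle := contMatrix_one_zero_le (List.ne_and_not_mem_of_not_mem_cons h).2
  rw [← contMatrix_zero_zero] at hle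
  have := Nat.mul_le_mul_right (contMatrix t 0 0) (hA d List.mem_cons_self)
  linarith

lemma contMatrix_one_zero_pos (h : 0 ∉ w) (hw : w ≠ []) : 0 < contMatrix w 1 0 := by
  obtain ⟨d, t, rfl⟩ := List.exists_cons_of_ne_nil hw
  rw [contMatrix_cons_one_zero]
  exact cont_pos (List.ne_and_not_mem_of_not_mem_cons h).2

lemma cont_mul_cont_le (u v : List ℕ) : cont u * cont v ≤ cont (u ++ v) := by
  rw [← contMatrix_zero_zero (u ++ v), contMatrix_append_apply, contMatrix_zero_zero,
    contMatrix_zero_zero]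
  exact Nat.le_add_right _ _

lemma cont_append_le (hu : 0 ∉ u) (hv : 0 ∉ v) : cont (u ++ v) ≤ 2 * (cont u * cont v) := by
  rw [← contMatrix_zero_zero (u ++ v), contMatrix_append_apply, contMatrix_zero_zero,
    contMatrix_zero_zero]
  have := Nat.mul_le_mul (contMatrix_zero_one_le hu) (contMatrix_one_zero_le hv)
  omega

lemma cont_le_cont_append_left (u : List ℕ) (hv : 0 ∉ v) : cont u ≤ cont (u ++ v) :=
  (Nat.le_mul_of_pos_right _ (cont_pos hv)).trans (cont_mul_cont_le u v)

/-- The column `(⟨d₁,…,d_k⟩, ⟨d₂,…,d_k⟩)` of the continuant matrix of `w = d₁ … d_k`. -/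
def firstCol (w : List ℕ) : ℕ × ℕ := (contMatrix w 0 0, contMatrix w 1 0)

lemma firstCol_fst (w : List ℕ) : (firstCol w).1 = cont w := contMatrix_zero_zero w

lemma firstCol_snd_le (h : 0 ∉ w) : (firstCol w).2 ≤ cont w := contMatrix_one_zero_le h

lemma firstCol_coprime (w : List ℕ) : (firstCol w).1.Coprime (firstCol w).2 := by
  rw [← Nat.isCoprime_iff_coprime]
  have hsq : ((-1 : ℤ) ^ w.length) * (-1) ^ w.length = 1 := by rw [← mul_pow]; simp
  refine ⟨(-1) ^ w.length * contMatrix w 1 1, -(-1) ^ w.length * contMatrix w 0 1, ?_⟩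
  rw [firstCol]
  linear_combination (-1 : ℤ) ^ w.length * contMatrix_det w + hsq

lemma head_eq_of_firstCol_eq {d e : ℕ} (hu : 0 ∉ u) (hv : 0 ∉ v) (hlen : u.length = v.length)
    (h : firstCol (d :: u) = firstCol (e :: v)) : d = e ∧ firstCol u = firstCol v := by
  obtain ⟨h₀, h₁⟩ := Prod.mk.inj h
  rw [contMatrix_cons_zero, contMatrix_cons_zero] at h₀
  rw [contMatrix_cons_one, contMatrix_cons_one] at h₁
  suffices hde : d = e by
    subst hde
    exact ⟨rfl, Prod.ext h₁ (by rw [h₁] at h₀; exact Nat.add_left_cancel h₀)⟩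
  rcases eq_or_ne u [] with rfl | hu'
  · obtain rfl := List.eq_nil_of_length_eq_zero hlen.symm
    simpa [contMatrix_nil] using h₀
  have hv' : v ≠ [] := List.ne_nil_of_length_pos (hlen ▸ List.length_pos_of_ne_nil hu')
  have hu₀ := contMatrix_one_zero_pos hu hu'
  have hv₀ := contMatrix_one_zero_pos hv hv'
  have hu₁ := contMatrix_one_zero_le hu
  have hv₁ := contMatrix_one_zero_le hv
  rw [← contMatrix_zero_zero] at hu₁ hv₁
  rw [h₁] at h₀ hu₁
  by_contra hne
  rcases Nat.lt_or_gt_of_ne hne with hlt | hlt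
  · nlinarith [Nat.mul_le_mul_right (contMatrix v 0 0) (Nat.succ_le_of_lt hlt)]
  · nlinarith [Nat.mul_le_mul_right (contMatrix v 0 0) (Nat.succ_le_of_lt hlt)]

lemma eq_of_firstCol_eq {u v : List ℕ} (hu : 0 ∉ u) (hv : 0 ∉ v) (hlen : u.length = v.length)
    (h : firstCol u = firstCol v) : u = v := by
  induction u generalizing v with
  | nil => exact (List.eq_nil_of_length_eq_zero hlen.symm).symm
  | cons d u ih =>
    obtain ⟨e, v, rfl⟩ := List.exists_cons_of_length_eq_add_one (hlen.symm.trans List.length_cons)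
    have hu' := (List.ne_and_not_mem_of_not_mem_cons hu).2
    have hv' := (List.ne_and_not_mem_of_not_mem_cons hv).2
    have hlen' := Nat.succ.inj hlen
    obtain ⟨rfl, htail⟩ := head_eq_of_firstCol_eq hu' hv' hlen' h
    rw [ih hu' hv' hlen' htail]

lemma eq_of_firstRow_eq (hu : 0 ∉ u) (hv : 0 ∉ v) (hlen : u.length = v.length)
    (h₀ : contMatrix u 0 0 = contMatrix v 0 0) (h₁ : contMatrix u 0 1 = contMatrix v 0 1) :
    u = v := by
  refine List.reverse_injective (eq_of_firstCol_eq (by simpa using hu) (by simpa using hv)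
    (by simpa using hlen) ?_)
  simp only [firstCol, contMatrix_reverse, Matrix.transpose_apply, h₀, h₁]

lemma abs_wedge_firstCol_append (u v w : List ℕ) :
    |wedge (firstCol (u ++ v)) (firstCol (u ++ w))| = |wedge (firstCol v) (firstCol w)| := by
  have : wedge (firstCol (u ++ v)) (firstCol (u ++ w)) =
      (-1) ^ u.length * wedge (firstCol v) (firstCol w) := by
    simp only [← contMatrix_det, wedge, firstCol, contMatrix_append_apply]
    push_cast
    ring
  rw [this, abs_mul, abs_neg_one_pow, one_mul]

lemma exists_eq_append_cons_of_ne : ∀ {g h : List ℕ}, g.length = h.length → g ≠ h →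
    ∃ u d e s t, g = u ++ d :: s ∧ h = u ++ e :: t ∧ d ≠ e
  | [], [], _, hne => absurd rfl hne
  | d :: g, e :: h, hlen, hne => by
    by_cases hde : d = e
    · subst hde
      obtain ⟨u, x, y, s, t, rfl, rfl, hxy⟩ :=
        exists_eq_append_cons_of_ne (Nat.succ.inj hlen) fun hgh => hne (hgh ▸ rfl)
      exact ⟨d :: u, x, y, s, t, rfl, rfl, hxy⟩
    · exact ⟨[], d, e, g, h, rfl, rfl, hde⟩

lemma cont_mul_cont_le_wedge_of_lt {d e : ℕ} (hu : 0 ∉ u) (hv : 0 ∉ v)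
    (hA : ∀ x ∈ v, x ≤ A) (hv' : v ≠ []) (hde : d < e) :
    (cont u * cont v : ℤ) ≤ (A + 1) * |wedge (firstCol (d :: u)) (firstCol (e :: v))| := by
  have hlow := cont_le_mul_contMatrix_one_zero hv hA hv'
  have hu₁ := contMatrix_one_zero_le hu
  zify at hlow hu₁
  have hx : (0 : ℤ) ≤ cont u * cont v := by positivity
  have hwedge : (cont u : ℤ) * contMatrix v 1 0 ≤
      |wedge (firstCol (d :: u)) (firstCol (e :: v))| := by
    refine le_trans ?_ (neg_le_abs _)
    simp only [wedge, firstCol, contMatrix_cons_zero, contMatrix_cons_one]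
    simp only [contMatrix_zero_zero]
    push_cast
    nlinarith
  calc (cont u * cont v : ℤ) ≤ cont u * ((A + 1) * contMatrix v 1 0) := by gcongr
    _ = (A + 1) * (cont u * contMatrix v 1 0) := by ring
    _ ≤ _ := by gcongr

lemma cont_mul_cont_le_wedge_of_ne {d e : ℕ} (hu : 0 ∉ u) (hv : 0 ∉ v) (hAu : ∀ x ∈ u, x ≤ A)
    (hAv : ∀ x ∈ v, x ≤ A) (hu' : u ≠ []) (hv' : v ≠ []) (hde : d ≠ e) :
    (cont u * cont v : ℤ) ≤ (A + 1) * |wedge (firstCol (d :: u)) (firstCol (e :: v))| := by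
  rcases Nat.lt_or_gt_of_ne hde with h | h
  · exact cont_mul_cont_le_wedge_of_lt hu hv hAv hv' h
  · have hswap : wedge (firstCol (d :: u)) (firstCol (e :: v)) =
        -wedge (firstCol (e :: v)) (firstCol (d :: u)) := by
      simp only [wedge]
      ring
    rw [hswap, abs_neg, mul_comm (cont u : ℤ)]
    exact cont_mul_cont_le_wedge_of_lt hv hu hAu hu' h

lemma cont_append_cons_append_le {d : ℕ} {t z : List ℕ} (h : 0 ∉ u ++ d :: t) (hz : 0 ∉ z)
    (hd : d ≤ A) :
    cont (u ++ d :: t ++ z) ≤ (A + 2) * cont (u ++ d :: t) * cont (t ++ z) := by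
  have hu : 0 ∉ u := fun hu => h (List.mem_append_left _ hu)
  have hdt : 0 ∉ d :: t := fun hdt => h (List.mem_append_right _ hdt)
  have htz : 0 ∉ t ++ z := fun htz => (List.mem_append.mp htz).elim
    (fun ht => hdt (List.mem_cons_of_mem _ ht)) hz
  have hcons : cont (d :: (t ++ z)) ≤ (A + 1) * cont (t ++ z) := by
    rw [← contMatrix_zero_zero, contMatrix_cons_zero, contMatrix_zero_zero]
    have := contMatrix_one_zero_le htz
    have := Nat.mul_le_mul_right (cont (t ++ z)) hd
    linarith
  calc cont (u ++ d :: t ++ z)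
      = cont u * cont (d :: (t ++ z)) + contMatrix u 0 1 * cont (t ++ z) := by
        rw [List.append_assoc, List.cons_append, ← contMatrix_zero_zero, contMatrix_append_apply,
          contMatrix_zero_zero, contMatrix_zero_zero, contMatrix_cons_one_zero]
    _ ≤ cont u * ((A + 1) * cont (t ++ z)) + cont u * cont (t ++ z) := by
        gcongr
        exact contMatrix_zero_one_le hu
    _ = (A + 2) * cont u * cont (t ++ z) := by ring
    _ ≤ (A + 2) * cont (u ++ d :: t) * cont (t ++ z) := by
        gcongr
        exact cont_le_cont_append_left u hdt

/-- Strip the digits that `g` and `h` share at the start: the wedge of the rest is then comparable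
to the product of their continuants because their first digits differ. -/
lemma cont_mul_cont_le_mul_wedge {g h y z : List ℕ} (hg : 0 ∉ g) (hh : 0 ∉ h) (hy : 0 ∉ y)
    (hz : 0 ∉ z) (hAg : ∀ d ∈ g ++ y, d ≤ A) (hAh : ∀ d ∈ h ++ z, d ≤ A) (hy' : y ≠ [])
    (hz' : z ≠ []) (hlen : g.length = h.length) (hne : g ≠ h) :
    (cont (g ++ y) * cont (h ++ z) : ℤ) ≤
      (A + 2) ^ 3 * (cont g * cont h) * |wedge (firstCol (g ++ y)) (firstCol (h ++ z))| := by
  obtain ⟨u, d, e, s, t, rfl, rfl, hde⟩ := exists_eq_append_cons_of_ne hlen hne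
  have hstrip₁ := cont_append_cons_append_le hg hy (hAg d (by simp))
  have hstrip₂ := cont_append_cons_append_le hh hz (hAh e (by simp))
  have hwedge := cont_mul_cont_le_wedge_of_ne (A := A) (u := s ++ y) (v := t ++ z)
    (by simp_all) (by simp_all) (fun x hx => hAg x (by simp_all)) (fun x hx => hAh x (by simp_all))
    (by simp [hy']) (by simp [hz']) hde
  rw [← abs_wedge_firstCol_append u, ← List.cons_append, ← List.cons_append, ← List.append_assoc,
    ← List.append_assoc] at hwedge
  set W := |wedge (firstCol (u ++ d :: s ++ y)) (firstCol (u ++ e :: t ++ z))|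
  zify at hstrip₁ hstrip₂
  calc (cont (u ++ d :: s ++ y) * cont (u ++ e :: t ++ z) : ℤ)
      ≤ ((A + 2) * cont (u ++ d :: s) * cont (s ++ y)) *
          ((A + 2) * cont (u ++ e :: t) * cont (t ++ z)) := by gcongr
    _ = (A + 2) ^ 2 * (cont (u ++ d :: s) * cont (u ++ e :: t)) *
          (cont (s ++ y) * cont (t ++ z)) := by ring
    _ ≤ (A + 2) ^ 2 * (cont (u ++ d :: s) * cont (u ++ e :: t)) * ((A + 2) * W) := by
        refine mul_le_mul_of_nonneg_left (hwedge.trans ?_) (by positivity)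
        gcongr
        omega
    _ = _ := by ring

end Continuants

section Ensembles

/-- A random word: a finite family of words with weights, together with a distinguished member whose
continuant measures the size of the whole family. -/
structure WordEnsemble where
  ι : Type
  [fintype : Fintype ι]
  base : ι
  weight : ι → ℝ
  word : ι → List ℕ

namespace WordEnsemble

attribute [instance] fintype

/-- The mean of `f` over the random word. -/
def expect (E : WordEnsemble) (f : List ℕ → ℂ) : ℂ := ∑ i, (E.weight i : ℂ) * f (E.word i)

/-- The concatenation of independent random words. -/
def concat (E F : WordEnsemble) : WordEnsemble where
  ι := E.ι × F.ι
  base := (E.base, F.base)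
  weight i := E.weight i.1 * F.weight i.2
  word i := E.word i.1 ++ F.word i.2

/-- The deterministic word `w`. -/
def single (w : List ℕ) : WordEnsemble where
  ι := Unit
  base := ()
  weight _ := 1
  word _ := w

/-- The distinguished word of the ensemble. -/
def baseWord (E : WordEnsemble) : List ℕ := E.word E.base

/-- The continuant of the base word. -/
def size (E : WordEnsemble) : ℝ := cont E.baseWord

/-- The random word is given by a probability distribution on distinct words of one length over the
alphabet `S`, and corresponding entries of the continuant matrices of any two of these words differ
by a factor at most `κ`. -/
structure IsRegular (S : Finset ℕ) (κ : ℝ) (E : WordEnsemble) : Prop where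
  weight_nonneg : ∀ i, 0 ≤ E.weight i
  sum_weight : ∑ i, E.weight i = 1
  word_injective : Function.Injective E.word
  length_eq : ∀ i j, (E.word i).length = (E.word j).length
  zero_notMem : ∀ i, 0 ∉ E.word i
  mem_alphabet : ∀ i, ∀ d ∈ E.word i, d ∈ S
  contMatrix_le : ∀ i j a b, (contMatrix (E.word i) a b : ℝ) ≤ κ * contMatrix (E.word j) a b

/-- The weight of each word is at most a power of its continuant `q`. The exponent is that of a
measure of dimension `5/6`, for which the cylinder of the word has mass about `q ^ (-2 * (5/6))`. -/
def HasDecay (θ : ℝ) (E : WordEnsemble) : Prop :=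
  ∀ i, E.weight i ≤ (θ * cont (E.word i)) ^ (-(5 / 3) : ℝ)

lemma sum_concat {M : Type*} [AddCommMonoid M] (E F : WordEnsemble) (f : (E.concat F).ι → M) :
    ∑ i, f i = ∑ j : E.ι, ∑ k : F.ι, f (j, k) :=
  Fintype.sum_prod_type f

lemma expect_concat (E F : WordEnsemble) (f : List ℕ → ℂ) :
    (E.concat F).expect f = E.expect fun u => F.expect fun v => f (u ++ v) := by
  simp only [expect, sum_concat, Finset.mul_sum]
  refine Finset.sum_congr rfl fun i _ => Finset.sum_congr rfl fun k _ => ?_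
  simp only [concat]
  push_cast
  ring

lemma expect_single (w : List ℕ) (f : List ℕ → ℂ) : (single w).expect f = f w :=
  (Fintype.sum_unique (ι := Unit) _).trans (by simp [single])

lemma baseWord_concat (E F : WordEnsemble) :
    (E.concat F).baseWord = E.baseWord ++ F.baseWord := rfl

lemma size_single (w : List ℕ) : (single w).size = cont w := rfl

lemma size_mul_size_le (E F : WordEnsemble) : E.size * F.size ≤ (E.concat F).size := by
  unfold size
  exact_mod_cast cont_mul_cont_le _ _

lemma hasDecay_single_nil : HasDecay 1 (single []) := fun _ => by simp [single, cont]

variable {S : Finset ℕ} {κ κ' θ θ' : ℝ} {E F : WordEnsemble}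

lemma isRegular_single {w : List ℕ} (h : 0 ∉ w) (hS : ∀ d ∈ w, d ∈ S) :
    IsRegular S 1 (single w) where
  weight_nonneg _ := zero_le_one
  sum_weight := Fintype.sum_unique (ι := Unit) _
  word_injective _ _ _ := rfl
  length_eq _ _ := rfl
  zero_notMem _ := h
  mem_alphabet _ := hS
  contMatrix_le _ _ _ _ := by rw [one_mul]; rfl

namespace IsRegular

lemma mono (hE : IsRegular S κ E) (h : κ ≤ κ') : IsRegular S κ' E :=
  { hE with contMatrix_le := fun i j a b => (hE.contMatrix_le i j a b).trans (by gcongr) }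

lemma digit_le (hE : IsRegular S κ E) (i : E.ι) : ∀ d ∈ E.word i, d ≤ S.sup id :=
  fun _ hd => Finset.le_sup (f := id) (hE.mem_alphabet i _ hd)

lemma one_le_size (hE : IsRegular S κ E) : 1 ≤ E.size := one_le_cont (hE.zero_notMem _)

lemma cont_le (hE : IsRegular S κ E) (i : E.ι) : (cont (E.word i) : ℝ) ≤ κ * E.size := by
  simp only [size, ← contMatrix_zero_zero]
  exact hE.contMatrix_le _ _ _ _

lemma size_le (hE : IsRegular S κ E) (i : E.ι) : E.size ≤ κ * cont (E.word i) := by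
  simp only [size, ← contMatrix_zero_zero]
  exact hE.contMatrix_le _ _ _ _

lemma pos (hE : IsRegular S κ E) : 0 < κ := by
  have hle : E.size ≤ κ * E.size := hE.size_le E.base
  have := hE.one_le_size
  nlinarith

lemma concat (hE : IsRegular S κ E) (hF : IsRegular S κ' F) :
    IsRegular S (κ * κ') (E.concat F) where
  weight_nonneg i := mul_nonneg (hE.weight_nonneg _) (hF.weight_nonneg _)
  sum_weight := by
    rw [sum_concat]
    simp only [WordEnsemble.concat]
    rw [← Finset.sum_mul_sum, hE.sum_weight, hF.sum_weight, one_mul]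
  word_injective i j h := by
    obtain ⟨h₁, h₂⟩ := List.append_inj h (hE.length_eq _ _)
    exact Prod.ext (hE.word_injective h₁) (hF.word_injective h₂)
  length_eq i j := by
    simp only [WordEnsemble.concat, List.length_append, hE.length_eq i.1 j.1, hF.length_eq i.2 j.2]
  zero_notMem i h := (List.mem_append.mp h).elim (hE.zero_notMem _) (hF.zero_notMem _)
  mem_alphabet i d h :=
    (List.mem_append.mp h).elim (hE.mem_alphabet _ d) (hF.mem_alphabet _ d)
  contMatrix_le i j a b := by
    have := hE.pos
    simp only [WordEnsemble.concat, contMatrix_append_apply]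
    push_cast
    calc _ ≤ (κ * contMatrix (E.word j.1) a 0) * (κ' * contMatrix (F.word j.2) 0 b) +
          (κ * contMatrix (E.word j.1) a 1) * (κ' * contMatrix (F.word j.2) 1 b) := by
          gcongr <;> first | exact hE.contMatrix_le .. | exact hF.contMatrix_le ..
      _ = _ := by ring

lemma size_concat_le (hE : IsRegular S κ E) (hF : IsRegular S κ' F) :
    (E.concat F).size ≤ 2 * (E.size * F.size) := by
  unfold size
  exact_mod_cast cont_append_le (hE.zero_notMem _) (hF.zero_notMem _)

lemma weight_le (hE : IsRegular S κ E) (h : HasDecay 1 E) (i : E.ι) :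
    E.weight i ≤ κ ^ (5 / 3 : ℝ) * E.size ^ (-(5 / 3) : ℝ) := by
  have hκ := hE.pos
  have hsize := hE.one_le_size
  have hle : E.size / κ ≤ cont (E.word i) := by
    rw [div_le_iff₀' hκ]
    exact hE.size_le i
  calc E.weight i ≤ (1 * (cont (E.word i) : ℝ)) ^ (-(5 / 3) : ℝ) := h i
    _ ≤ (E.size / κ) ^ (-(5 / 3) : ℝ) := by
      rw [one_mul]
      exact Real.rpow_le_rpow_of_nonpos (by positivity) hle (by norm_num)
    _ = _ := by
      rw [Real.div_rpow (by linarith) hκ.le, div_eq_mul_inv, ← Real.rpow_neg hκ.le, neg_neg,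
        mul_comm]

end IsRegular

lemma HasDecay.concat (h : HasDecay θ E) (h' : HasDecay θ' F) (hE : IsRegular S κ E)
    (hF : IsRegular S κ' F) (hθ : 0 < θ) (hθ' : 0 < θ') (h2 : 2 ≤ θ * θ') :
    HasDecay 1 (E.concat F) := by
  intro i
  have hu := one_le_cont (hE.zero_notMem i.1)
  have hv := one_le_cont (hF.zero_notMem i.2)
  have happend : (cont (E.word i.1 ++ F.word i.2) : ℝ) ≤
      2 * (cont (E.word i.1) * cont (F.word i.2)) := by
    exact_mod_cast cont_append_le (hE.zero_notMem i.1) (hF.zero_notMem i.2)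
  have hpos : (1 : ℝ) ≤ cont (E.word i.1 ++ F.word i.2) :=
    (one_le_mul_of_one_le_of_one_le hu hv).trans (by exact_mod_cast cont_mul_cont_le _ _)
  calc E.weight i.1 * F.weight i.2
      ≤ (θ * cont (E.word i.1)) ^ (-(5 / 3) : ℝ) * (θ' * cont (F.word i.2)) ^ (-(5 / 3) : ℝ) :=
        mul_le_mul (h _) (h' _) (hF.weight_nonneg _) (by positivity)
    _ = ((θ * θ') * (cont (E.word i.1) * cont (F.word i.2))) ^ (-(5 / 3) : ℝ) := by
        rw [← Real.mul_rpow (by positivity) (by positivity), mul_mul_mul_comm]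
    _ ≤ (1 * cont (E.word i.1 ++ F.word i.2)) ^ (-(5 / 3) : ℝ) := by
        rw [one_mul]
        refine Real.rpow_le_rpow_of_nonpos (by linarith) (happend.trans ?_) (by norm_num)
        gcongr

/-- The random word formed by independent blocks `B i`, where `i` runs through the given list. -/
def blockProd (B : ℕ → WordEnsemble) : List ℕ → WordEnsemble
  | [] => single []
  | i :: l => (B i).concat (blockProd B l)

lemma expect_blockProd_append (B : ℕ → WordEnsemble) (l₁ l₂ : List ℕ) (f : List ℕ → ℂ) :
    (blockProd B (l₁ ++ l₂)).expect f =
      (blockProd B l₁).expect fun u => (blockProd B l₂).expect fun v => f (u ++ v) := by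
  induction l₁ generalizing f with
  | nil => simp only [List.nil_append, blockProd, expect_single]
  | cons i l₁ ih => simp only [List.cons_append, blockProd, expect_concat, ih, List.append_assoc]

lemma baseWord_blockProd_append (B : ℕ → WordEnsemble) (l₁ l₂ : List ℕ) :
    (blockProd B (l₁ ++ l₂)).baseWord = (blockProd B l₁).baseWord ++ (blockProd B l₂).baseWord := by
  induction l₁ with
  | nil => rfl
  | cons i l₁ ih =>
    simp only [List.cons_append, blockProd, baseWord_concat, ih, List.append_assoc]

/-- Blocks `B 0, B 1, …` from which random words of any prescribed size are assembled. The ratios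
are summable and the decay is strict, so that both survive arbitrarily long concatenations. -/
structure IsBlockSequence (S : Finset ℕ) (L : ℝ) (B : ℕ → WordEnsemble) : Prop where
  isRegular : ∀ i, IsRegular S (Real.exp ((1 / 2) ^ (i + 2))) (B i)
  hasDecay : ∀ i, HasDecay 2 (B i)
  pow_le_size : ∀ i, 2 ^ (i + 1) ≤ (B i).size
  size_le_pow : ∀ i, (B i).size ≤ L ^ (i + 1)

variable {L : ℝ} {B : ℕ → WordEnsemble}

lemma IsBlockSequence.isRegular_blockProd_exp (hB : IsBlockSequence S L B) (l : List ℕ) :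
    IsRegular S (Real.exp (l.map fun i => (1 / 2 : ℝ) ^ (i + 2)).sum) (blockProd B l) := by
  induction l with
  | nil => simpa [blockProd] using isRegular_single (S := S) (w := []) (by simp) (by simp)
  | cons i l ih =>
    rw [List.map_cons, List.sum_cons, Real.exp_add]
    exact (hB.isRegular i).concat ih

lemma IsBlockSequence.isRegular_blockProd (hB : IsBlockSequence S L B) {l : List ℕ}
    (hl : l.Nodup) : IsRegular S 2 (blockProd B l) := by
  refine (hB.isRegular_blockProd_exp l).mono ?_
  have hgeom : ∑ i ∈ l.toFinset, (1 / 2 : ℝ) ^ i ≤ 2 :=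
    (summable_geometric_two.sum_le_tsum _ fun _ _ => by positivity).trans tsum_geometric_two.le
  rw [← List.sum_toFinset _ hl, ← Real.le_log_iff_exp_le two_pos]
  simp only [pow_add, ← Finset.sum_mul]
  linarith [Real.log_two_gt_d9]

lemma IsBlockSequence.hasDecay_blockProd (hB : IsBlockSequence S L B) :
    ∀ l, HasDecay 1 (blockProd B l)
  | [] => hasDecay_single_nil
  | i :: l => (hB.hasDecay i).concat (hB.hasDecay_blockProd l) (hB.isRegular i)
      (hB.isRegular_blockProd_exp l) two_pos one_pos (by norm_num)

end WordEnsemble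

end Ensembles

section RandomWordSums

namespace WordEnsemble

variable {P : ℕ} {S : Finset ℕ} {κ₁ κ₂ κ₃ κ₄ : ℝ} {X G L Y : WordEnsemble}

lemma IsRegular.sum_norm_weight_sq_le {κ μ : ℝ} {E : WordEnsemble} (hE : IsRegular S κ E)
    (hμ : ∀ i, E.weight i ≤ μ) : ∑ i, ‖(E.weight i : ℂ)‖ ^ 2 ≤ μ :=
  calc ∑ i, ‖(E.weight i : ℂ)‖ ^ 2 = ∑ i, E.weight i * E.weight i :=
        Finset.sum_congr rfl fun i _ => by
          rw [Complex.norm_real, Real.norm_of_nonneg (hE.weight_nonneg i), sq]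
    _ ≤ ∑ i, E.weight i * μ :=
        Finset.sum_le_sum fun i _ => mul_le_mul_of_nonneg_left (hμ i) (hE.weight_nonneg i)
    _ = μ := by rw [← Finset.sum_mul, hE.sum_weight, one_mul]

lemma IsRegular.injective_firstRow {κ : ℝ} {E : WordEnsemble} (hE : IsRegular S κ E)
    (hP : ∀ i, cont (E.word i) < P) :
    Function.Injective fun i =>
      ((contMatrix (E.word i) 0 0, contMatrix (E.word i) 0 1) : ZMod P × ZMod P) := by
  intro i k h
  have hcast (b : Fin 2) (hb : ∀ i, contMatrix (E.word i) 0 b < P)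
      (h : (contMatrix (E.word i) 0 b : ZMod P) = contMatrix (E.word k) 0 b) :
      contMatrix (E.word i) 0 b = contMatrix (E.word k) 0 b :=
    Nat.ModEq.eq_of_lt_of_lt ((ZMod.natCast_eq_natCast_iff _ _ _).mp h) (hb i) (hb k)
  refine hE.word_injective (eq_of_firstRow_eq (hE.zero_notMem i) (hE.zero_notMem k)
    (hE.length_eq i k) (hcast 0 (fun i => ?_) (congrArg Prod.fst h))
    (hcast 1 (fun i => ?_) (congrArg Prod.snd h)))
  · rw [contMatrix_zero_zero]
    exact hP i
  · exact (contMatrix_zero_one_le (hE.zero_notMem i)).trans_lt (hP i)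

variable [NeZero P]

/-- The exponential sum over the continuants of the random word, at the frequency `j / P`. -/
def expSum (E : WordEnsemble) (j : ZMod P) : ℂ :=
  E.expect fun w => ZMod.stdAddChar (j * (cont w : ZMod P))

lemma expSum_congr {E F : WordEnsemble} (h : ∀ f, E.expect f = F.expect f) (j : ZMod P) :
    expSum E j = expSum F j :=
  h _

lemma cont_append_eq (u v : List ℕ) :
    cont (u ++ v) = contMatrix u 0 0 * (firstCol v).1 + contMatrix u 0 1 * (firstCol v).2 := by
  rw [← contMatrix_zero_zero, contMatrix_append_apply, firstCol]

lemma expSum_concat_eq_sum (X G L Y : WordEnsemble) (j : ZMod P) :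
    expSum (X.concat (G.concat (L.concat Y))) j =
      ∑ l, (L.weight l : ℂ) * ∑ γ : G.ι × Y.ι, ((G.weight γ.1 * Y.weight γ.2 : ℝ) : ℂ) *
        ∑ x, (X.weight x : ℂ) * ZMod.stdAddChar (j *
          ((contMatrix (X.word x) 0 0 * (firstCol (G.word γ.1 ++ (L.word l ++ Y.word γ.2))).1 +
            contMatrix (X.word x) 0 1 * (firstCol (G.word γ.1 ++ (L.word l ++ Y.word γ.2))).2 : ℕ) :
              ZMod P)) := by
  simp only [expSum, expect_concat]
  simp only [expect, Fintype.sum_prod_type, Finset.mul_sum, cont_append_eq (X.word _)]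
  rw [Finset.sum_comm]
  conv_lhs =>
    enter [2, g]
    rw [Finset.sum_comm]
  rw [Finset.sum_comm]
  refine Finset.sum_congr rfl fun l _ => Finset.sum_congr rfl fun g _ => ?_
  rw [Finset.sum_comm]
  refine Finset.sum_congr rfl fun y _ => Finset.sum_congr rfl fun x _ => ?_
  push_cast
  ring

/-- The middle word `l` is frozen: the large sieve is applied for every value of `l` separately and
averaged over `l` at the end. -/
theorem sum_norm_expSum_sq_le (hX : IsRegular S κ₁ X) (hG : IsRegular S κ₂ G)
    (hL : IsRegular S κ₃ L) (hY : IsRegular S κ₄ Y) {M : ℝ} (hM : 1 ≤ M)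
    (hXM : ∀ x, (cont (X.word x) : ℝ) ≤ M) (hXP : ∀ x, cont (X.word x) < P) {μ pG pY : ℝ}
    (hμ : ∀ x, X.weight x ≤ μ) (hpG : ∀ g, G.weight g ≤ pG) (hpY : ∀ y, Y.weight y ≤ pY)
    (Θ : Finset (ZMod P)) {C : ℕ}
    (hclose : ∀ j ∈ Θ, ∀ j' ∈ Θ, ∀ l g g' y y',
      IsNear (P / (5 * M)) (j * ((firstCol (G.word g ++ (L.word l ++ Y.word y))).1 : ZMod P))
        (j' * ((firstCol (G.word g' ++ (L.word l ++ Y.word y'))).1 : ZMod P)) →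
      IsNear (P / (5 * M)) (j * ((firstCol (G.word g ++ (L.word l ++ Y.word y))).2 : ZMod P))
        (j' * ((firstCol (G.word g' ++ (L.word l ++ Y.word y'))).2 : ZMod P)) →
      (g = g' ∧ y = y') ∧ IsNear C j j') :
    ∑ j ∈ Θ, ‖expSum (X.concat (G.concat (L.concat Y))) j‖ ^ 2 ≤
      1600 * M ^ 2 * (pG * pY * (2 * C + 1)) * μ := by
  have hpG₀ : 0 ≤ pG := (hG.weight_nonneg G.base).trans (hpG _)
  have hpY₀ : 0 ≤ pY := (hY.weight_nonneg Y.base).trans (hpY _)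
  set T : L.ι → ZMod P → ℂ := fun l j =>
    ∑ γ : G.ι × Y.ι, ((G.weight γ.1 * Y.weight γ.2 : ℝ) : ℂ) *
      ∑ x, (X.weight x : ℂ) * ZMod.stdAddChar (j *
        ((contMatrix (X.word x) 0 0 * (firstCol (G.word γ.1 ++ (L.word l ++ Y.word γ.2))).1 +
          contMatrix (X.word x) 0 1 * (firstCol (G.word γ.1 ++ (L.word l ++ Y.word γ.2))).2 : ℕ) :
            ZMod P)) with hT
  have hfixed (l : L.ι) : ∑ j ∈ Θ, ‖T l j‖ ^ 2 ≤
      1600 * M ^ 2 * (pG * pY * (2 * C + 1)) * μ := by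
    refine (large_sieve_average (hX.injective_firstRow hXP) hM
      (fun x => by rw [contMatrix_zero_zero]; exact hXM x)
      (fun x => le_trans (mod_cast contMatrix_zero_one_le (hX.zero_notMem x)) (hXM x)) _
      (fun γ => mul_nonneg (hG.weight_nonneg _) (hY.weight_nonneg _)) ?_ (by positivity)
      (fun γ => mul_le_mul (hpG _) (hpY _) (hY.weight_nonneg _) hpG₀) _ _ Θ
      fun j hj j' hj' γ γ' h₁ h₂ => ?_).trans
      (mul_le_mul_of_nonneg_left (hX.sum_norm_weight_sq_le hμ) (by positivity))
    · rw [Fintype.sum_prod_type, ← Finset.sum_mul_sum, hG.sum_weight, hY.sum_weight, one_mul]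
    · obtain ⟨⟨hg, hy⟩, hjj'⟩ := hclose j hj j' hj' l γ.1 γ'.1 γ.2 γ'.2 h₁ h₂
      exact ⟨Prod.ext hg hy, hjj'⟩
  calc ∑ j ∈ Θ, ‖expSum (X.concat (G.concat (L.concat Y))) j‖ ^ 2
      = ∑ j ∈ Θ, ‖∑ l, (L.weight l : ℂ) * T l j‖ ^ 2 := by simp only [expSum_concat_eq_sum, hT]
    _ ≤ ∑ j ∈ Θ, ∑ l, L.weight l * ‖T l j‖ ^ 2 := Finset.sum_le_sum fun j _ =>
        norm_sum_mul_sq_le _ (fun i _ => hL.weight_nonneg i) hL.sum_weight.le _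
    _ = ∑ l, L.weight l * ∑ j ∈ Θ, ‖T l j‖ ^ 2 := by
        rw [Finset.sum_comm]
        simp only [Finset.mul_sum]
    _ ≤ ∑ l, L.weight l * (1600 * M ^ 2 * (pG * pY * (2 * C + 1)) * μ) :=
        Finset.sum_le_sum fun l _ => mul_le_mul_of_nonneg_left (hfixed l) (hL.weight_nonneg l)
    _ = _ := by rw [← Finset.sum_mul, hL.sum_weight, one_mul]

theorem sum_norm_expSum_sq_le_of_minor (hX : IsRegular S κ₁ X) (hY : IsRegular S κ₂ Y) {M H : ℝ}
    (hM : 1 ≤ M) (hXM : ∀ x, (cont (X.word x) : ℝ) ≤ M) (hXP : ∀ x, cont (X.word x) < P)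
    (hYH : ∀ y, (cont (Y.word y) : ℝ) ≤ H) (hHM : 2 * H < 5 * M) {C : ℕ}
    (hYC : ∀ y, (P : ℝ) ≤ 5 * M * C * cont (Y.word y)) {μ pY : ℝ}
    (hμ : ∀ x, X.weight x ≤ μ) (hpY : ∀ y, Y.weight y ≤ pY) (Θ : Finset (ZMod P))
    (hΘ : ∀ j ∈ Θ, ∀ D : ℕ, 1 ≤ D → (D : ℝ) ≤ H ^ 2 →
      ¬ IsNear (2 * H * (P / (5 * M))) (j * (D : ZMod P)) 0) :
    ∑ j ∈ Θ, ‖expSum (X.concat Y) j‖ ^ 2 ≤ 1600 * M ^ 2 * (pY * (2 * C + 1)) * μ := by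
  have hnil : IsRegular S 1 (single []) := isRegular_single (by simp) (by simp)
  have hPpos : (0 : ℝ) < P := by exact_mod_cast NeZero.pos P
  have hexp (j : ZMod P) : expSum (X.concat Y) j =
      expSum (X.concat ((single []).concat ((single []).concat Y))) j :=
    expSum_congr (fun f => by simp only [expect_concat, expect_single, List.nil_append]) j
  simp only [hexp]
  refine (sum_norm_expSum_sq_le hX hnil hnil hY hM hXM hXP hμ (pG := 1)
    (fun _ => le_rfl) hpY Θ (C := C) fun j hj j' _ _ _ _ y y' h₁ h₂ => ?_).trans_eq
      (by rw [one_mul])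
  have hcol (y : Y.ι) : ((firstCol (Y.word y)).1 : ℝ) ≤ H ∧ ((firstCol (Y.word y)).2 : ℝ) ≤ H :=
    ⟨by rw [firstCol_fst]; exact hYH y,
      le_trans (mod_cast firstCol_snd_le (hY.zero_notMem y)) (hYH y)⟩
  have hpos : 0 < cont (Y.word y) := cont_pos (hY.zero_notMem y)
  obtain rfl : y = y' := hY.word_injective <| eq_of_firstCol_eq (hY.zero_notMem y)
    (hY.zero_notMem y') (hY.length_eq y y') <| eq_of_isNear_mul (firstCol_coprime _)
      (firstCol_coprime _) (hcol y).1 (hcol y).2 (hcol y').1 (hcol y').2 (hΘ j hj) h₁ h₂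
  refine ⟨⟨rfl, rfl⟩, (isNear_of_isNear_mul_coprime (firstCol_coprime (Y.word y))
    (by rwa [firstCol_fst]) (hcol y).1 (hcol y).2 ?_ h₁ h₂).mono ?_⟩
  · rw [← mul_div_assoc, div_lt_iff₀ (by positivity), mul_comm]
    gcongr
  · rw [firstCol_fst, div_div, div_le_iff₀ (by positivity)]
    linarith [hYC y]

end WordEnsemble

end RandomWordSums

section MajorArcs

variable {P : ℕ}

/-- The residues `j` for which `j / P` lies near a reduced fraction of denominator `q ∈ [Q, 2Q)`, at
distance between `K / P` and `2K / P` when `K ≠ 1` and at most `2 / P` when `K = 1`. -/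
def majorArc (P : ℕ) (K Q : ℝ) : Set (ZMod P) :=
  {j | ∃ (a : ℤ) (q : ℕ), IsApprox K j a q ∧ Q ≤ q ∧ q < 2 * Q ∧
    (K = 1 ∨ K * q ≤ |(j.val : ℝ) * q - P * a|)}

lemma eq_of_mul_wedge_le {A Λ : ℕ} {K V R : ℝ} {g h y z : List ℕ} (hg : 0 ∉ g) (hh : 0 ∉ h)
    (hy : 0 ∉ y) (hz : 0 ∉ z) (hAg : ∀ d ∈ g ++ y, d ≤ A) (hAh : ∀ d ∈ h ++ z, d ≤ A)
    (hy' : y ≠ []) (hz' : z ≠ []) (hlen : g.length = h.length) (hV : 0 < V)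
    (hVy : V ≤ 2 * Λ * cont (g ++ y)) (hVz : V ≤ 2 * Λ * cont (h ++ z))
    (hgR : (cont g : ℝ) ≤ 2 * R) (hhR : (cont h : ℝ) ≤ 2 * R)
    (hK : R ^ 2 * (16 * Λ ^ 2 * (A + 2) ^ 3) ≤ K)
    (hwedge : 5 * (K * |(wedge (firstCol (g ++ y)) (firstCol (h ++ z)) : ℝ)|) ≤ V ^ 2) : g = h := by
  by_contra hne
  set W : ℝ := |(wedge (firstCol (g ++ y)) (firstCol (h ++ z)) : ℝ)|
  have hsep : (cont (g ++ y) * cont (h ++ z) : ℝ) ≤ (A + 2) ^ 3 * (cont g * cont h) * W := by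
    have := cont_mul_cont_le_mul_wedge hg hh hy hz hAg hAh hy' hz' hlen hne
    simpa [W] using (Int.cast_le (R := ℝ)).mpr this
  have hR : 0 ≤ 2 * R := (Nat.cast_nonneg _).trans hgR
  have hle : V ^ 2 ≤ K * W :=
    calc V ^ 2 = V * V := sq V
      _ ≤ (2 * Λ * cont (g ++ y)) * (2 * Λ * cont (h ++ z)) := by gcongr
      _ = 4 * Λ ^ 2 * (cont (g ++ y) * cont (h ++ z)) := by ring
      _ ≤ 4 * Λ ^ 2 * ((A + 2) ^ 3 * (cont g * cont h) * W) :=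
        mul_le_mul_of_nonneg_left hsep (by positivity)
      _ ≤ 4 * Λ ^ 2 * ((A + 2) ^ 3 * (2 * R * (2 * R)) * W) := by gcongr
      _ = (R ^ 2 * (16 * Λ ^ 2 * (A + 2) ^ 3)) * W := by ring
      _ ≤ K * W := by gcongr
  have : 0 < V ^ 2 := by positivity
  linarith

lemma eq_of_dvd_wedge {q : ℕ} {H : ℝ} {u y z : List ℕ} (hy : 0 ∉ y) (hz : 0 ∉ z)
    (hlen : y.length = z.length) (hyH : (cont y : ℝ) ≤ H) (hzH : (cont z : ℝ) ≤ H)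
    (hq : H ^ 2 < q) (hdvd : (q : ℤ) ∣ wedge (firstCol (u ++ y)) (firstCol (u ++ z))) : y = z := by
  rw [← dvd_abs, abs_wedge_firstCol_append, dvd_abs] at hdvd
  have hwedge := natAbs_wedge_le (v := firstCol y) (w := firstCol z) (H := H)
    (by rwa [firstCol_fst]) (le_trans (mod_cast firstCol_snd_le hy) hyH)
    (by rwa [firstCol_fst]) (le_trans (mod_cast firstCol_snd_le hz) hzH)
  refine eq_of_firstCol_eq hy hz hlen
    (eq_of_wedge_eq_zero (firstCol_coprime y) (firstCol_coprime z) ?_)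
  refine Int.eq_zero_of_abs_lt_dvd hdvd ?_
  rw [Int.abs_eq_natAbs]
  exact_mod_cast hwedge.trans_lt hq

namespace WordEnsemble

variable {S : Finset ℕ} {κ : ℝ} {X G L Y : WordEnsemble} {Λ : ℕ}

lemma size_mul_cont_le (hP : ∀ i, cont ((X.concat Y).word i) < P) (y : Y.ι) :
    X.size * cont (Y.word y) ≤ P := by
  have := (cont_mul_cont_le X.baseWord (Y.word y)).trans (hP (X.base, y)).le
  unfold size
  exact_mod_cast this

lemma IsRegular.le_mul_size_mul_cont {κ' : ℝ} (hX : IsRegular S κ X) (hY : IsRegular S κ' Y)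
    (hΛ : ∀ i, (P : ℝ) ≤ Λ * cont ((X.concat Y).word i)) (y : Y.ι) :
    (P : ℝ) ≤ 2 * Λ * (X.size * cont (Y.word y)) := by
  have happend : (cont (X.baseWord ++ Y.word y) : ℝ) ≤ 2 * (X.size * cont (Y.word y)) := by
    unfold size
    exact_mod_cast cont_append_le (hX.zero_notMem _) (hY.zero_notMem y)
  calc (P : ℝ) ≤ Λ * cont (X.baseWord ++ Y.word y) := hΛ (X.base, y)
    _ ≤ Λ * (2 * (X.size * cont (Y.word y))) := by gcongr
    _ = _ := by ring

end WordEnsemble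

lemma mul_abs_wedge_le {K V : ℝ} {a a' : ℤ} {q j j' : ℕ} {v w : ℕ × ℕ} {n₁ n₂ : ℤ} (hq : 0 < q)
    (hK : K * q ≤ |(j : ℝ) * q - P * a|) (hw₁ : (w.1 : ℝ) ≤ V) (hw₂ : (w.2 : ℝ) ≤ V)
    (h₁ : a * v.1 - a' * w.1 = q * n₁) (h₂ : a * v.2 - a' * w.2 = q * n₂)
    (hn₁ : |(j : ℝ) * v.1 - j' * w.1 - P * n₁| ≤ V / 10)
    (hn₂ : |(j : ℝ) * v.2 - j' * w.2 - P * n₂| ≤ V / 10) :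
    5 * (K * |(wedge v w : ℝ)|) ≤ V ^ 2 := by
  have hq' : (0 : ℝ) < q := by exact_mod_cast hq
  refine le_of_mul_le_mul_left ?_ hq'
  have : K * q * |(wedge v w : ℝ)| ≤ q * (2 * V * (V / 10)) :=
    le_trans (by gcongr) (abs_sub_mul_abs_wedge_le hw₁ hw₂ h₁ h₂ hn₁ hn₂)
  linarith

variable [NeZero P]

lemma IsApprox.isNear_of_sub_eq_mul {K δ : ℝ} {j j' : ZMod P} {a a' : ℤ} {q : ℕ} {v : ℕ × ℕ}
    {n₁ n₂ : ℤ} (h : IsApprox K j a q) (h' : IsApprox K j' a' q) (hv : v.1.Coprime v.2)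
    (hpos : 0 < v.1) (h₁ : a * v.1 - a' * v.1 = q * n₁) (h₂ : a * v.2 - a' * v.2 = q * n₂)
    (hnear : IsNear δ (j * (v.1 : ZMod P)) (j' * (v.1 : ZMod P))) (hP : 4 * K * v.1 + δ < P) :
    IsNear (δ / v.1) j j' := by
  refine (h.isNear_of_dvd h' (dvd_of_dvd_mul_of_isCoprime (Nat.isCoprime_iff_coprime.mpr hv)
    ⟨n₁, ?_⟩ ⟨n₂, ?_⟩)).of_mul hpos hnear hP
  · rw [← h₁]; ring
  · rw [← h₂]; ring

namespace WordEnsemble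

variable {S : Finset ℕ} {κ : ℝ} {X G L Y : WordEnsemble} {Λ : ℕ}

/-- Comparing the two rational approximations shows that the wedge of the two tails is small when
`K` is large, which forces `g = g'`, and that it is divisible by `q ≥ Q`, which then forces
`y = y'`. -/
lemma eq_and_isNear_of_major (hG : IsRegular S 2 G) (hL : IsRegular S κ L) (hY : IsRegular S 2 Y)
    (hL0 : ∀ l, L.word l ≠ []) {K Q V : ℝ} (hK : 1 ≤ K) (hQ : 1 ≤ Q) (hV : 0 < V)
    (hP : 33 * (K * Q ^ 2) * V ≤ P)
    (hVu : ∀ i, (cont ((G.concat (L.concat Y)).word i) : ℝ) ≤ V)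
    (hVΛ : ∀ i, V ≤ 2 * Λ * cont ((G.concat (L.concat Y)).word i))
    (hGK : Subsingleton G.ι ∨
      K ≠ 1 ∧ G.size ^ 2 * (16 * Λ ^ 2 * ((S.sup id : ℕ) + 2) ^ 3) ≤ K)
    (hYQ : Subsingleton Y.ι ∨ 16 * Y.size ^ 2 ≤ Q) {j j' : ZMod P} (hj : j ∈ majorArc P K Q)
    (hj' : j' ∈ majorArc P K Q) (l : L.ι) (g g' : G.ι) (y y' : Y.ι)
    (h₁ : IsNear (V / 10) (j * ((firstCol (G.word g ++ (L.word l ++ Y.word y))).1 : ZMod P))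
      (j' * ((firstCol (G.word g' ++ (L.word l ++ Y.word y'))).1 : ZMod P)))
    (h₂ : IsNear (V / 10) (j * ((firstCol (G.word g ++ (L.word l ++ Y.word y))).2 : ZMod P))
      (j' * ((firstCol (G.word g' ++ (L.word l ++ Y.word y'))).2 : ZMod P))) :
    (g = g' ∧ y = y') ∧ IsNear Λ j j' := by
  obtain ⟨a, q, ha, hqQ, hqQ', hKq⟩ := hj
  obtain ⟨a', q', ha', -, hqQ'', -⟩ := hj'
  have hF := hG.concat (hL.concat hY)
  have hKQ : K * V ≤ K * Q ^ 2 * V := by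
    have := one_le_pow₀ (n := 2) hQ
    exact mul_le_mul_of_nonneg_right (le_mul_of_one_le_right (by linarith) this) hV.le
  have hVK : V ≤ K * V := le_mul_of_one_le_left hV.le hK
  have hfst (i) : ((firstCol ((G.concat (L.concat Y)).word i)).1 : ℝ) ≤ V := by
    rw [firstCol_fst]
    exact hVu i
  have hsnd (i) : ((firstCol ((G.concat (L.concat Y)).word i)).2 : ℝ) ≤ V :=
    le_trans (mod_cast firstCol_snd_le (hF.zero_notMem i)) (hVu i)
  obtain ⟨rfl, n₁, n₂, e₁, e₂, hn₁, hn₂⟩ := ha.exists_sub_eq_mul ha' hqQ' hqQ''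
    (firstCol_coprime _) (firstCol_coprime _) (hfst (g, l, y)) (hsnd (g, l, y)) (hfst (g', l, y'))
    (hsnd (g', l, y')) (by nlinarith [sq_nonneg Q]) h₁ h₂
  obtain rfl : g = g' := by
    rcases hGK with hsub | ⟨hK1, hGK⟩
    · exact Subsingleton.elim g g'
    exact hG.word_injective (eq_of_mul_wedge_le (hG.zero_notMem g) (hG.zero_notMem g')
      ((hL.concat hY).zero_notMem (l, y)) ((hL.concat hY).zero_notMem (l, y'))
      (hF.digit_le (g, l, y)) (hF.digit_le (g', l, y')) (by simp [concat, hL0])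
      (by simp [concat, hL0]) (hG.length_eq g g') hV (hVΛ (g, l, y)) (hVΛ (g', l, y'))
      (hG.cont_le g) (hG.cont_le g') hGK (mul_abs_wedge_le ha.denom_pos (hKq.resolve_left hK1)
      (hfst (g', l, y')) (hsnd (g', l, y')) e₁ e₂ hn₁ hn₂))
  obtain rfl : y = y' := by
    rcases hYQ with hsub | hYQ
    · exact Subsingleton.elim y y'
    have hdvd := dvd_wedge_of_sub_eq_mul ha.isCoprime e₁ e₂
    simp only [concat, ← List.append_assoc] at hdvd
    exact hY.word_injective (eq_of_dvd_wedge (hY.zero_notMem y) (hY.zero_notMem y')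
      (hY.length_eq y y') (hY.cont_le y) (hY.cont_le y') (by nlinarith [hY.one_le_size]) hdvd)
  have hpos := cont_pos (hF.zero_notMem (g, l, y))
  refine ⟨⟨rfl, rfl⟩, (ha.isNear_of_sub_eq_mul ha' (firstCol_coprime _)
    (by rwa [firstCol_fst]) e₁ e₂ h₁ (lt_of_le_of_lt
      (add_le_add_left (mul_le_mul_of_nonneg_left (hfst (g, l, y)) (by positivity)) _)
      (by linarith))).mono ?_⟩
  have : (0 : ℝ) ≤ Λ * cont ((G.concat (L.concat Y)).word (g, l, y)) := by positivity
  rw [firstCol_fst, div_div, div_le_iff₀ (by positivity)]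
  linarith [hVΛ (g, l, y)]

theorem sum_norm_expSum_sq_le_of_major (hX : IsRegular S 2 X) (hG : IsRegular S 2 G)
    (hL : IsRegular S κ L) (hY : IsRegular S 2 Y) (hL0 : ∀ l, L.word l ≠ [])
    (hP : ∀ i, cont ((X.concat (G.concat (L.concat Y))).word i) < P)
    (hΛ : ∀ i, (P : ℝ) ≤ Λ * cont ((X.concat (G.concat (L.concat Y))).word i)) {K Q : ℝ}
    (hK : 1 ≤ K) (hQ : 1 ≤ Q) (hXKQ : 33 * (K * Q ^ 2) ≤ X.size)
    (hGK : Subsingleton G.ι ∨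
      K ≠ 1 ∧ G.size ^ 2 * (16 * Λ ^ 2 * ((S.sup id : ℕ) + 2) ^ 3) ≤ K)
    (hYQ : Subsingleton Y.ι ∨ 16 * Y.size ^ 2 ≤ Q) {μ pG pY : ℝ} (hμ : ∀ x, X.weight x ≤ μ)
    (hpG : ∀ g, G.weight g ≤ pG) (hpY : ∀ y, Y.weight y ≤ pY) (Θ : Finset (ZMod P))
    (hΘ : ∀ j ∈ Θ, j ∈ majorArc P K Q) :
    ∑ j ∈ Θ, ‖expSum (X.concat (G.concat (L.concat Y))) j‖ ^ 2 ≤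
      1600 * (2 * X.size) ^ 2 * (pG * pY * (2 * Λ + 1)) * μ := by
  have hF := hG.concat (hL.concat hY)
  have hm := hX.one_le_size
  have hPpos : (0 : ℝ) < P := by exact_mod_cast NeZero.pos P
  have hV : (P : ℝ) / (5 * (2 * X.size)) = P / X.size / 10 := by
    rw [div_div]
    ring
  refine sum_norm_expSum_sq_le hX hG hL hY (by linarith) hX.cont_le (fun x =>
    (cont_le_cont_append_left _ (hF.zero_notMem (G.base, L.base, Y.base))).trans_lt
      (hP (x, G.base, L.base, Y.base)))
    hμ hpG hpY Θ fun j hj j' hj' l g g' y y' h₁ h₂ => ?_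
  rw [hV] at h₁ h₂
  refine eq_and_isNear_of_major hG hL hY hL0 hK hQ (by positivity) ?_ (fun i => ?_) (fun i => ?_)
    hGK hYQ (hΘ j hj) (hΘ j' hj') l g g' y y' h₁ h₂
  · rw [← mul_div_assoc, div_le_iff₀ (by positivity), mul_comm]
    gcongr
  · rw [le_div_iff₀' (by positivity)]
    exact size_mul_cont_le hP i
  · rw [div_le_iff₀ (by positivity)]
    linarith [hX.le_mul_size_mul_cont hF hΛ i]

end WordEnsemble

end MajorArcs

section Scales

lemma exists_le_and_lt_succ {f : ℕ → ℝ} {c : ℝ} (hc : 0 < c) (h0 : f 0 = 0)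
    (h : ∀ n, f n + c ≤ f (n + 1)) (T : ℝ) : ∃ n, (n = 0 ∨ f n ≤ T) ∧ T < f (n + 1) := by
  have hlower (n : ℕ) : n * c ≤ f n := by
    induction n with
    | zero => simp [h0]
    | succ n ih => push_cast; linarith [h n]
  have hex : ∃ n, T < f (n + 1) := by
    obtain ⟨n, hn⟩ := exists_nat_gt (T / c)
    rw [div_lt_iff₀ hc] at hn
    exact ⟨n, by linarith [hlower n, h n]⟩
  classical
  refine ⟨Nat.find hex, ?_, Nat.find_spec hex⟩
  rcases hfind : Nat.find hex with _ | n
  · exact Or.inl rfl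
  · exact Or.inr (not_lt.mp (Nat.find_min hex (m := n) (by omega)))

/-- Up to an error of at most `log 2` in each step, `s` is the sequence of partial sums of `b`. This
is how the logarithms of continuants behave under concatenation. -/
structure IsQuasiSum (b s : ℕ → ℝ) : Prop where
  zero : s 0 = 0
  add_le : ∀ n, s n + b n ≤ s (n + 1)
  le_add : ∀ n, s (n + 1) ≤ Real.log 2 + s n + b n

namespace IsQuasiSum

variable {b s : ℕ → ℝ} {L : ℝ}

lemma monotone (h : IsQuasiSum b s) (hb : ∀ n, 0 ≤ b n) : Monotone s :=
  monotone_nat_of_le_succ fun n => by linarith [h.add_le n, hb n]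

lemma sq_div_four_le (h : IsQuasiSum b s) (hb : ∀ n : ℕ, (n + 1) * Real.log 2 ≤ b n) (n : ℕ) :
    (n : ℝ) ^ 2 / 4 ≤ s n := by
  induction n with
  | zero => simp [h.zero]
  | succ n ih =>
    have hlog := Real.log_two_gt_d9
    push_cast
    nlinarith [h.add_le n, hb n]

/-- The summands grow linearly and the sums quadratically, so the last summand is negligible. -/
lemma summand_le (h : IsQuasiSum b s) (hb : ∀ n : ℕ, (n + 1) * Real.log 2 ≤ b n)
    (hL : ∀ n : ℕ, b n ≤ (n + 1) * L) (n : ℕ) : b n ≤ L + 1000 * L ^ 2 + 1 / 1000 * s n := by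
  nlinarith [hL n, h.sq_div_four_le hb n, sq_nonneg ((n : ℝ) - 2000 * L)]

lemma exists_scale (h : IsQuasiSum b s) (hb : ∀ n, Real.log 2 ≤ b n) (T : ℝ) :
    ∃ n, (n = 0 ∨ s n ≤ T) ∧ T < s (n + 1) :=
  exists_le_and_lt_succ (Real.log_pos one_lt_two) h.zero
    (fun n => (add_le_add_right (hb n) _).trans (h.add_le n)) T

end IsQuasiSum

namespace WordEnsemble

/-- The logarithm of the size, on which concatenation acts almost additively. -/
def logSize (E : WordEnsemble) : ℝ := Real.log E.size

/-- The random word composed of the blocks `B i, …, B (i + n - 1)`. -/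
def leftSegment (B : ℕ → WordEnsemble) (i n : ℕ) : WordEnsemble := blockProd B (List.range' i n)

/-- The random word composed of the blocks `B (n - 1), …, B 0`, so that short blocks come last. -/
def rightSegment (B : ℕ → WordEnsemble) (n : ℕ) : WordEnsemble :=
  blockProd B (List.range' 0 n).reverse

/-- The additive error with which a prescribed logarithmic size is attained by segments of a block
sequence whose blocks satisfy `(B n).size ≤ L ^ (n + 1)`. -/
def scaleConst (L : ℝ) : ℝ := Real.log L + 1000 * Real.log L ^ 2 + 1

lemma logSize_blockProd_nil (B : ℕ → WordEnsemble) : (blockProd B []).logSize = 0 := by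
  simp [logSize, blockProd, size_single, cont]

lemma logSize_blockProd_singleton (B : ℕ → WordEnsemble) (i : ℕ) :
    (blockProd B [i]).logSize = (B i).logSize := by
  simp only [logSize, size, blockProd, baseWord_concat]
  exact congrArg (fun w : List ℕ => Real.log (cont w)) (List.append_nil _)

lemma logSize_blockProd_append (B : ℕ → WordEnsemble) (l₁ l₂ : List ℕ) :
    (blockProd B (l₁ ++ l₂)).logSize =
      ((blockProd B l₁).concat (blockProd B l₂)).logSize := by
  rw [logSize, size, baseWord_blockProd_append]
  rfl

variable {S : Finset ℕ} {κ κ' : ℝ} {E F : WordEnsemble}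

lemma IsRegular.exp_logSize (hE : IsRegular S κ E) : Real.exp E.logSize = E.size :=
  Real.exp_log (by linarith [hE.one_le_size])

lemma IsRegular.logSize_nonneg (hE : IsRegular S κ E) : 0 ≤ E.logSize :=
  Real.log_nonneg hE.one_le_size

lemma IsRegular.logSize_add_le (hE : IsRegular S κ E) (hF : IsRegular S κ' F) :
    E.logSize + F.logSize ≤ (E.concat F).logSize := by
  have := hE.one_le_size
  have := hF.one_le_size
  rw [logSize, logSize, ← Real.log_mul (by positivity) (by positivity)]
  exact Real.log_le_log (by positivity) (size_mul_size_le E F)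

lemma IsRegular.logSize_concat_le (hE : IsRegular S κ E) (hF : IsRegular S κ' F) :
    (E.concat F).logSize ≤ Real.log 2 + E.logSize + F.logSize := by
  have := hE.one_le_size
  have := hF.one_le_size
  rw [logSize, logSize, logSize, add_assoc, ← Real.log_mul (by positivity) (by positivity),
    ← Real.log_mul (by positivity) (by positivity)]
  exact Real.log_le_log (by linarith [(hE.concat hF).one_le_size]) (hE.size_concat_le hF)

namespace IsBlockSequence

variable {L : ℝ} {B : ℕ → WordEnsemble}

lemma mul_log_two_le (hB : IsBlockSequence S L B) (n : ℕ) :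
    (n + 1) * Real.log 2 ≤ (B n).logSize := by
  have := Real.log_le_log (by positivity) (hB.pow_le_size n)
  rwa [Real.log_pow, Nat.cast_succ] at this

lemma log_two_le (hB : IsBlockSequence S L B) (n : ℕ) : Real.log 2 ≤ (B n).logSize :=
  (le_mul_of_one_le_left (Real.log_nonneg one_le_two) (by simp)).trans (hB.mul_log_two_le n)

lemma logSize_le_mul (hB : IsBlockSequence S L B) (n : ℕ) :
    (B n).logSize ≤ (n + 1) * Real.log L := by
  have := Real.log_le_log (by linarith [(hB.isRegular n).one_le_size]) (hB.size_le_pow n)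
  rwa [Real.log_pow, Nat.cast_succ] at this

lemma scaleConst_nonneg (hB : IsBlockSequence S L B) : 0 ≤ scaleConst L := by
  have hlower := hB.log_two_le 0
  have hupper := hB.logSize_le_mul 0
  have := Real.log_two_gt_d9
  norm_num at hupper
  unfold scaleConst
  nlinarith

lemma logSize_blockProd_add_le (hB : IsBlockSequence S L B) (l₁ l₂ : List ℕ) :
    (blockProd B l₁).logSize + (blockProd B l₂).logSize ≤ (blockProd B (l₁ ++ l₂)).logSize := by
  rw [logSize_blockProd_append]
  exact (hB.isRegular_blockProd_exp l₁).logSize_add_le (hB.isRegular_blockProd_exp l₂)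

lemma logSize_blockProd_append_le (hB : IsBlockSequence S L B) (l₁ l₂ : List ℕ) :
    (blockProd B (l₁ ++ l₂)).logSize ≤
      Real.log 2 + (blockProd B l₁).logSize + (blockProd B l₂).logSize := by
  rw [logSize_blockProd_append]
  exact (hB.isRegular_blockProd_exp l₁).logSize_concat_le (hB.isRegular_blockProd_exp l₂)

lemma logSize_leftSegment_add_le (hB : IsBlockSequence S L B) (i r : ℕ) :
    (leftSegment B 0 (i + r)).logSize ≤
      Real.log 2 + (leftSegment B 0 i).logSize + (leftSegment B i r).logSize := by
  have hsplit : List.range' 0 (i + r) = List.range' 0 i ++ List.range' i r := by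
    simpa using (List.range'_append_1 (s := 0) (m := i) (n := r)).symm
  rw [leftSegment, hsplit]
  exact hB.logSize_blockProd_append_le _ _

lemma isQuasiSum_leftSegment (hB : IsBlockSequence S L B) (i : ℕ) :
    IsQuasiSum (fun n => (B (i + n)).logSize) (fun n => (leftSegment B i n).logSize) where
  zero := logSize_blockProd_nil B
  add_le n := by
    have := hB.logSize_blockProd_add_le (List.range' i n) [i + n]
    rwa [logSize_blockProd_singleton, ← List.range'_1_concat] at this
  le_add n := by
    have := hB.logSize_blockProd_append_le (List.range' i n) [i + n]
    rwa [logSize_blockProd_singleton, ← List.range'_1_concat] at this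

lemma isQuasiSum_rightSegment (hB : IsBlockSequence S L B) :
    IsQuasiSum (fun n => (B n).logSize) (fun n => (rightSegment B n).logSize) where
  zero := logSize_blockProd_nil B
  add_le n := by
    have := hB.logSize_blockProd_add_le [n] (List.range' 0 n).reverse
    rw [logSize_blockProd_singleton] at this
    rw [rightSegment, rightSegment, List.range'_1_concat, List.reverse_concat, zero_add,
      ← List.singleton_append]
    linarith
  le_add n := by
    have := hB.logSize_blockProd_append_le [n] (List.range' 0 n).reverse
    rw [logSize_blockProd_singleton] at this
    rw [rightSegment, rightSegment, List.range'_1_concat, List.reverse_concat, zero_add,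
      ← List.singleton_append]
    linarith

lemma monotone_logSize_leftSegment (hB : IsBlockSequence S L B) :
    Monotone fun n => (leftSegment B 0 n).logSize :=
  (hB.isQuasiSum_leftSegment 0).monotone fun _ => (hB.isRegular _).logSize_nonneg

lemma monotone_logSize_rightSegment (hB : IsBlockSequence S L B) :
    Monotone fun n => (rightSegment B n).logSize :=
  hB.isQuasiSum_rightSegment.monotone fun _ => (hB.isRegular _).logSize_nonneg

lemma exists_logSize_leftSegment (hB : IsBlockSequence S L B) (i : ℕ) (T : ℝ) :
    ∃ n, (n = 0 ∨ (leftSegment B i n).logSize ≤ T) ∧ T < (leftSegment B i (n + 1)).logSize :=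
  (hB.isQuasiSum_leftSegment i).exists_scale (fun _ => hB.log_two_le _) T

lemma exists_logSize_rightSegment (hB : IsBlockSequence S L B) (T : ℝ) :
    ∃ n, (n = 0 ∨ (rightSegment B n).logSize ≤ T) ∧ T < (rightSegment B (n + 1)).logSize :=
  hB.isQuasiSum_rightSegment.exists_scale hB.log_two_le T

lemma logSize_add_one_le (hB : IsBlockSequence S L B) (n : ℕ) :
    (B n).logSize + 1 ≤ scaleConst L + 1 / 1000 * (leftSegment B 0 n).logSize := by
  have := (hB.isQuasiSum_leftSegment 0).summand_le (fun n => by simpa using hB.mul_log_two_le n)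
    (fun n => by simpa using hB.logSize_le_mul n) n
  rw [zero_add] at this
  unfold scaleConst
  linarith

lemma logSize_leftSegment_succ_le (hB : IsBlockSequence S L B) (i r : ℕ) :
    (leftSegment B i (r + 1)).logSize ≤ scaleConst L +
      1 / 1000 * (leftSegment B 0 i).logSize + 1001 / 1000 * (leftSegment B i r).logSize := by
  linarith [(hB.isQuasiSum_leftSegment i).le_add r, hB.logSize_add_one_le (i + r),
    hB.logSize_leftSegment_add_le i r, Real.log_two_lt_d9]

lemma logSize_leftSegment_zero_succ_le (hB : IsBlockSequence S L B) (n : ℕ) :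
    (leftSegment B 0 (n + 1)).logSize ≤
      scaleConst L + 1001 / 1000 * (leftSegment B 0 n).logSize := by
  simpa [leftSegment, logSize_blockProd_nil] using hB.logSize_leftSegment_succ_le 0 n

lemma logSize_rightSegment_succ_le (hB : IsBlockSequence S L B) (n : ℕ) :
    (rightSegment B (n + 1)).logSize ≤
      scaleConst L + 1001 / 1000 * (rightSegment B n).logSize := by
  have hsum := hB.isQuasiSum_rightSegment
  have := hsum.summand_le hB.mul_log_two_le hB.logSize_le_mul n
  unfold scaleConst
  linarith [hsum.le_add n, Real.log_two_lt_d9]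

end IsBlockSequence

end WordEnsemble

end Scales

section Templates

lemma two_mul_cont_replicate_le {a : ℕ} (ha : 2 ≤ a) (n : ℕ) :
    2 * cont (List.replicate n a) ≤ cont (List.replicate (n + 1) a) := by
  refine (Nat.mul_le_mul_right _ ha).trans ?_
  simpa [cont, List.replicate_succ] using cont_mul_cont_le [a] (List.replicate n a)

lemma cont_replicate_succ_le {a : ℕ} (ha : 2 ≤ a) (n : ℕ) :
    cont (List.replicate (n + 1) a) ≤ (a + 1) * cont (List.replicate n a) := by
  cases n with
  | zero => simp [cont]
  | succ n =>
    have hmono := two_mul_cont_replicate_le ha n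
    have hrec : cont (List.replicate (n + 1 + 1) a) =
        a * cont (List.replicate (n + 1) a) + cont (List.replicate n a) := by
      simp only [List.replicate_succ, cont]
    rw [hrec]
    linarith

lemma exists_log_cont_replicate {a : ℕ} (ha : 2 ≤ a) {T : ℝ} (hT : 0 ≤ T) :
    ∃ n, T < Real.log (cont (List.replicate (n + 1) a)) ∧
      Real.log (cont (List.replicate (n + 1) a)) ≤ T + Real.log (a + 1) := by
  have hpos (n : ℕ) : (0 : ℝ) < cont (List.replicate n a) := by
    exact_mod_cast cont_pos fun h => by have := List.eq_of_mem_replicate h; omega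
  obtain ⟨n, hn, hlt⟩ := exists_le_and_lt_succ (f := fun n => Real.log (cont (List.replicate n a)))
    (Real.log_pos one_lt_two) (by simp [cont]) (fun n => by
      rw [add_comm, ← Real.log_mul two_ne_zero (hpos n).ne']
      exact Real.log_le_log (mul_pos two_pos (hpos n))
        (by exact_mod_cast two_mul_cont_replicate_le ha n)) T
  refine ⟨n, hlt, ?_⟩
  have hle : Real.log (cont (List.replicate n a)) ≤ T := by
    rcases hn with rfl | hn
    · simpa [cont] using hT
    · exact hn
  have hsucc := Real.log_le_log (hpos (n + 1))
    (show (cont (List.replicate (n + 1) a) : ℝ) ≤ (a + 1) * cont (List.replicate n a) by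
      exact_mod_cast cont_replicate_succ_le ha n)
  rw [Real.log_mul (by positivity) (hpos n).ne'] at hsucc
  linarith

lemma log_mul_add_one_nonneg (a : ℕ) : 0 ≤ Real.log (128 * (a + 1)) :=
  Real.log_nonneg (by linarith [a.cast_nonneg (α := ℝ)])

/-- The shape of the random words whose continuants fill a positive proportion of `[1, N]`: the
lengths of a left and a right segment of the block sequence, and a fixed word between them, which
serves to adjust the size. -/
structure Template where
  left : ℕ
  filler : List ℕ
  right : ℕ

namespace Template

open WordEnsemble

/-- The part of the random word before the filler. -/
def leftPart (t : Template) (B : ℕ → WordEnsemble) : WordEnsemble := leftSegment B 0 t.left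

/-- The part of the random word after the filler. -/
def rightPart (t : Template) (B : ℕ → WordEnsemble) : WordEnsemble := rightSegment B t.right

/-- The random word of shape `t`. -/
def ensemble (t : Template) (B : ℕ → WordEnsemble) : WordEnsemble :=
  ((t.leftPart B).concat (single t.filler)).concat (t.rightPart B)

/-- The words of shape `t` have continuants comparable to `N`, and the right segments are the
longest of size at most `N ^ (18 / 100)`. -/
structure IsBalanced (S : Finset ℕ) (B : ℕ → WordEnsemble) (a N : ℕ) (t : Template) : Prop where
  filler_ne_nil : t.filler ≠ []
  zero_notMem : 0 ∉ t.filler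
  mem_alphabet : ∀ d ∈ t.filler, d ∈ S
  right_le : (t.rightPart B).logSize ≤ 18 / 100 * Real.log N
  lt_right_succ : 18 / 100 * Real.log N < (rightSegment B (t.right + 1)).logSize
  lt_left_succ : Real.log N - (t.rightPart B).logSize - Real.log (128 * (a + 1)) <
    (leftSegment B 0 (t.left + 1)).logSize
  add_le_log : Real.log 128 + ((t.leftPart B).logSize + Real.log (cont t.filler) +
    (t.rightPart B).logSize) ≤ Real.log N
  log_le_add : Real.log N ≤ Real.log (128 * (a + 1)) + ((t.leftPart B).logSize +
    Real.log (cont t.filler) + (t.rightPart B).logSize)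

variable {S : Finset ℕ} {L : ℝ} {B : ℕ → WordEnsemble} {a N : ℕ} {t : Template}

lemma exists_isBalanced (hB : IsBlockSequence S L B) (ha : 2 ≤ a) (haS : a ∈ S)
    (hN : 2 * Real.log (128 * (a + 1)) ≤ Real.log N) : ∃ t, IsBalanced S B a N t := by
  have hlog : Real.log (128 * (a + 1)) = Real.log 128 + Real.log (a + 1) :=
    Real.log_mul (by norm_num) (by positivity)
  have h128 : 0 ≤ Real.log 128 := Real.log_nonneg (by norm_num)
  have ha1 : 0 ≤ Real.log ((a : ℝ) + 1) := Real.log_nonneg (by linarith [a.cast_nonneg (α := ℝ)])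
  obtain ⟨J, hJ, hJ_succ⟩ := hB.exists_logSize_rightSegment (18 / 100 * Real.log N)
  replace hJ : (rightSegment B J).logSize ≤ 18 / 100 * Real.log N := by
    rcases hJ with rfl | hJ
    · exact (logSize_blockProd_nil B).trans_le (by linarith)
    · exact hJ
  set T := Real.log N - (rightSegment B J).logSize - Real.log (128 * (a + 1))
  obtain ⟨I, hI, hI_succ⟩ := hB.exists_logSize_leftSegment 0 T
  replace hI : (leftSegment B 0 I).logSize ≤ T := by
    rcases hI with rfl | hI
    · exact (logSize_blockProd_nil B).trans_le (by linarith)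
    · exact hI
  obtain ⟨n, hlt, hle⟩ := exists_log_cont_replicate ha (sub_nonneg.mpr hI)
  refine ⟨⟨I, List.replicate (n + 1) a, J⟩, by simp, fun h => ?_, fun d hd => ?_, hJ, hJ_succ,
    hI_succ, ?_, ?_⟩
  · have := List.eq_of_mem_replicate h
    omega
  · rwa [List.eq_of_mem_replicate hd]
  · simp only [leftPart, rightPart]
    linarith
  · simp only [leftPart, rightPart]
    linarith

lemma isRegular_leftPart (hB : IsBlockSequence S L B) (t : Template) :
    IsRegular S 2 (t.leftPart B) :=
  hB.isRegular_blockProd List.nodup_range'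

lemma isRegular_rightPart (hB : IsBlockSequence S L B) (t : Template) :
    IsRegular S 2 (t.rightPart B) :=
  hB.isRegular_blockProd (List.nodup_reverse.mpr List.nodup_range')

namespace IsBalanced

lemma isRegular_filler (ht : IsBalanced S B a N t) : IsRegular S 1 (single t.filler) :=
  isRegular_single ht.zero_notMem ht.mem_alphabet

lemma isRegular_leftPart_concat_filler (hB : IsBlockSequence S L B) (ht : IsBalanced S B a N t) :
    IsRegular S 2 ((t.leftPart B).concat (single t.filler)) := by
  simpa using (isRegular_leftPart hB t).concat ht.isRegular_filler

lemma isRegular_ensemble (hB : IsBlockSequence S L B) (ht : IsBalanced S B a N t) :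
    IsRegular S 4 (t.ensemble B) := by
  have := (ht.isRegular_leftPart_concat_filler hB).concat (isRegular_rightPart hB t)
  norm_num at this
  exact this

lemma one_le_cont_filler (ht : IsBalanced S B a N t) : (1 : ℝ) ≤ cont t.filler :=
  one_le_cont ht.zero_notMem

lemma log_cont_filler_nonneg (ht : IsBalanced S B a N t) : 0 ≤ Real.log (cont t.filler) :=
  Real.log_nonneg ht.one_le_cont_filler

lemma size_mul_eq_exp (hB : IsBlockSequence S L B) (ht : IsBalanced S B a N t) :
    (t.leftPart B).size * cont t.filler * (t.rightPart B).size =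
      Real.exp ((t.leftPart B).logSize + Real.log (cont t.filler) + (t.rightPart B).logSize) := by
  rw [Real.exp_add, Real.exp_add, (isRegular_leftPart hB t).exp_logSize,
    (isRegular_rightPart hB t).exp_logSize,
    Real.exp_log (by linarith [ht.one_le_cont_filler])]

lemma pos (hB : IsBlockSequence S L B) (ht : IsBalanced S B a N t) : 0 < N := by
  refine Nat.pos_of_ne_zero fun hN => ?_
  have hlog := ht.add_le_log
  rw [hN, Nat.cast_zero, Real.log_zero] at hlog
  linarith [(isRegular_leftPart hB t).logSize_nonneg, (isRegular_rightPart hB t).logSize_nonneg,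
    ht.log_cont_filler_nonneg, Real.log_pos (show (1 : ℝ) < 128 by norm_num)]

lemma mul_size_le (hB : IsBlockSequence S L B) (ht : IsBalanced S B a N t) :
    128 * ((t.leftPart B).size * cont t.filler * (t.rightPart B).size) ≤ N := by
  have := Real.exp_le_exp.mpr ht.add_le_log
  rwa [Real.exp_add, ← ht.size_mul_eq_exp hB, Real.exp_log (by norm_num),
    Real.exp_log (by exact_mod_cast ht.pos hB)] at this

lemma le_mul_size (hB : IsBlockSequence S L B) (ht : IsBalanced S B a N t) :
    N ≤ 128 * (a + 1) * ((t.leftPart B).size * cont t.filler * (t.rightPart B).size) := by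
  have := Real.exp_le_exp.mpr ht.log_le_add
  rwa [Real.exp_add, ← ht.size_mul_eq_exp hB, Real.exp_log (by exact_mod_cast ht.pos hB),
    Real.exp_log (by positivity)] at this

lemma size_ensemble_le (hB : IsBlockSequence S L B) (ht : IsBalanced S B a N t) :
    32 * (t.ensemble B).size ≤ N := by
  have houter : (t.ensemble B).size ≤ 2 * (((t.leftPart B).concat (single t.filler)).size *
      (t.rightPart B).size) :=
    (ht.isRegular_leftPart_concat_filler hB).size_concat_le (isRegular_rightPart hB t)
  have hinner := (isRegular_leftPart hB t).size_concat_le ht.isRegular_filler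
  rw [size_single] at hinner
  nlinarith [ht.mul_size_le hB, (isRegular_rightPart hB t).one_le_size]

lemma le_size_ensemble (hB : IsBlockSequence S L B) (ht : IsBalanced S B a N t) :
    N ≤ 128 * (a + 1) * (t.ensemble B).size := by
  refine (ht.le_mul_size hB).trans ?_
  have := (isRegular_rightPart hB t).one_le_size
  gcongr
  refine le_trans ?_ (size_mul_size_le _ _)
  gcongr
  exact size_mul_size_le _ (single t.filler)

lemma log_cont_filler_le (hB : IsBlockSequence S L B) (ht : IsBalanced S B a N t) :
    Real.log (cont t.filler) ≤ scaleConst L + Real.log (128 * (a + 1)) +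
      1 / 1000 * (t.leftPart B).logSize := by
  have hleft : _ ≤ _ + _ * (t.leftPart B).logSize := hB.logSize_leftSegment_zero_succ_le t.left
  linarith [ht.add_le_log, ht.lt_left_succ, Real.log_pos (show (1 : ℝ) < 128 by norm_num)]

/-- With left and right part of sizes `N ^ (82 / 100)` and `N ^ (18 / 100)`, the factor
`(82 / 100) / 3 < (18 / 100) * (5 / 3)` decides. -/
lemma minor_exponent_le (hB : IsBlockSequence S L B) (ht : IsBalanced S B a N t) :
    1 / 3 * (t.leftPart B).logSize + 2 * Real.log (cont t.filler) -
      5 / 3 * (t.rightPart B).logSize ≤ 10 * (scaleConst L + Real.log (128 * (a + 1))) := by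
  have hright : _ ≤ _ + _ * (t.rightPart B).logSize := hB.logSize_rightSegment_succ_le t.right
  have hc := log_mul_add_one_nonneg a
  linarith [ht.log_cont_filler_le hB, ht.lt_right_succ, ht.right_le, ht.add_le_log,
    ht.log_cont_filler_nonneg, (isRegular_leftPart hB t).logSize_nonneg,
    (isRegular_rightPart hB t).logSize_nonneg, Real.log_pos (show (1 : ℝ) < 128 by norm_num)]

lemma logSize_rightPart_le (hB : IsBlockSequence S L B) (ht : IsBalanced S B a N t)
    (hN : 10 * (scaleConst L + Real.log (128 * (a + 1))) ≤ Real.log N) :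
    (t.rightPart B).logSize ≤ (t.leftPart B).logSize := by
  have hleft : _ ≤ _ + _ * (t.leftPart B).logSize := hB.logSize_leftSegment_zero_succ_le t.left
  have hC := hB.scaleConst_nonneg
  have hc := log_mul_add_one_nonneg a
  linarith [ht.right_le, ht.lt_left_succ, (isRegular_leftPart hB t).logSize_nonneg]

lemma cont_le_of_baseWord_eq {κ : ℝ} {E : WordEnsemble} (hB : IsBlockSequence S L B)
    (ht : IsBalanced S B a N t) (hE : IsRegular S κ E) (hκ : κ ≤ 32)
    (hbase : E.baseWord = (t.ensemble B).baseWord) (i : E.ι) : cont (E.word i) ≤ N := by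
  have hle : (cont (E.word i) : ℝ) ≤ 32 * (t.ensemble B).size := by
    rw [size, ← hbase]
    exact (hE.mono hκ).cont_le i
  exact_mod_cast hle.trans (ht.size_ensemble_le hB)

lemma le_cont_of_baseWord_eq {κ : ℝ} {E : WordEnsemble} (hB : IsBlockSequence S L B)
    (ht : IsBalanced S B a N t) (hE : IsRegular S κ E) (hκ : κ ≤ 32)
    (hbase : E.baseWord = (t.ensemble B).baseWord) (i : E.ι) :
    ((N + 1 : ℕ) : ℝ) ≤ (8192 * (a + 1) : ℕ) * cont (E.word i) := by
  have hN : (1 : ℝ) ≤ N := by exact_mod_cast ht.pos hB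
  have hle : (t.ensemble B).size ≤ 32 * cont (E.word i) := by
    rw [size, ← hbase]
    exact (hE.mono hκ).size_le i
  calc ((N + 1 : ℕ) : ℝ) ≤ 2 * (128 * (a + 1) * (t.ensemble B).size) := by
        push_cast
        linarith [ht.le_size_ensemble hB]
    _ ≤ 2 * (128 * (a + 1) * (32 * cont (E.word i))) := by gcongr
    _ = _ := by push_cast; ring

end IsBalanced

end Template

end Templates

section ArcBounds

open WordEnsemble

/-- The residues `j` for which no multiple `j * D` with `1 ≤ D ≤ H ^ 2` is small modulo `P`. -/
def minorArc (P : ℕ) (M H : ℝ) : Set (ZMod P) :=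
  {j | ∀ D : ℕ, 1 ≤ D → (D : ℝ) ≤ H ^ 2 → ¬ IsNear (2 * H * (P / (5 * M))) (j * (D : ZMod P)) 0}

namespace Template.IsBalanced

variable {S : Finset ℕ} {L : ℝ} {B : ℕ → WordEnsemble} {a N : ℕ} {t : Template}

lemma sum_norm_expSum_sq_le_of_minorArc (hB : IsBlockSequence S L B) (ht : IsBalanced S B a N t)
    (hle : (t.rightPart B).size ≤ (t.leftPart B).size) (Θ : Finset (ZMod (N + 1)))
    (hΘ : ∀ j ∈ Θ, j ∈ minorArc (N + 1) (4 * ((t.leftPart B).size * cont t.filler))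
      (2 * (t.rightPart B).size)) :
    ∑ j ∈ Θ, ‖expSum (t.ensemble B) j‖ ^ 2 ≤
      1600 * (4 * ((t.leftPart B).size * cont t.filler)) ^ 2 *
        (2 ^ (5 / 3 : ℝ) * (t.rightPart B).size ^ (-(5 / 3) : ℝ) *
          (2 * (128 * (a + 1) : ℕ) + 1)) *
        (2 ^ (5 / 3 : ℝ) * (t.leftPart B).size ^ (-(5 / 3) : ℝ)) := by
  have hX := ht.isRegular_leftPart_concat_filler hB
  have hl := isRegular_leftPart hB t
  have hr := isRegular_rightPart hB t
  have hl_size := hl.one_le_size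
  have hr_size := hr.one_le_size
  have hφ := ht.one_le_cont_filler
  have hcont (x) : (cont (((t.leftPart B).concat (single t.filler)).word x) : ℝ) ≤
      4 * ((t.leftPart B).size * cont t.filler) := by
    have := hl.size_concat_le ht.isRegular_filler
    rw [size_single] at this
    linarith [hX.cont_le x]
  refine sum_norm_expSum_sq_le_of_minor (H := 2 * (t.rightPart B).size) hX hr (by nlinarith) hcont
    (fun x => ?_) hr.cont_le (by nlinarith) (fun y => ?_) (fun x => ?_)
    (hr.weight_le (hB.hasDecay_blockProd _)) Θ hΘ
  · have : (cont (((t.leftPart B).concat (single t.filler)).word x) : ℝ) ≤ N := by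
      nlinarith [hcont x, ht.mul_size_le hB]
    exact Nat.lt_succ_of_le (by exact_mod_cast this)
  · have hN : (1 : ℝ) ≤ N := by exact_mod_cast ht.pos hB
    have hy : (t.rightPart B).size ≤ 2 * cont ((t.rightPart B).word y) := hr.size_le y
    calc ((N + 1 : ℕ) : ℝ)
        ≤ 2 * (128 * (a + 1) * ((t.leftPart B).size * cont t.filler * (t.rightPart B).size)) := by
          push_cast
          linarith [ht.le_mul_size hB]
      _ ≤ 2 * (128 * (a + 1) * ((t.leftPart B).size * cont t.filler *
            (2 * cont ((t.rightPart B).word y)))) := by gcongr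
      _ ≤ 5 * (2 * (128 * (a + 1) * ((t.leftPart B).size * cont t.filler *
            (2 * cont ((t.rightPart B).word y))))) :=
          le_mul_of_one_le_left (by positivity) (by norm_num)
      _ = _ := by push_cast; ring
  · exact (mul_one _).trans_le (hl.weight_le (hB.hasDecay_blockProd _) x.1)

end Template.IsBalanced

open Template in
theorem eventually_sum_norm_expSum_sq_le_of_minorArc {S : Finset ℕ} {L : ℝ} {B : ℕ → WordEnsemble}
    (hB : IsBlockSequence S L B) (a : ℕ) : ∃ C : ℝ, ∀ᶠ N : ℕ in atTop, ∀ t, IsBalanced S B a N t →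
      ∀ Θ : Finset (ZMod (N + 1)),
        (∀ j ∈ Θ, j ∈ minorArc (N + 1) (4 * ((t.leftPart B).size * cont t.filler))
          (2 * (t.rightPart B).size)) →
        ∑ j ∈ Θ, ‖expSum (t.ensemble B) j‖ ^ 2 ≤ C := by
  set Z : ℝ := 1600 * 16 * 2 ^ (5 / 3 : ℝ) * 2 ^ (5 / 3 : ℝ) * (2 * (128 * (a + 1) : ℕ) + 1) with hZ
  refine ⟨Z * Real.exp (10 * (scaleConst L + Real.log (128 * (a + 1)))), ?_⟩
  filter_upwards [(Real.tendsto_log_atTop.comp tendsto_natCast_atTop_atTop).eventually_ge_atTop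
    (10 * (scaleConst L + Real.log (128 * (a + 1))))] with N hN t ht Θ hΘ
  have hl := isRegular_leftPart hB t
  have hr := isRegular_rightPart hB t
  have hle := ht.logSize_rightPart_le hB hN
  have hφ : (cont t.filler : ℝ) = Real.exp (Real.log (cont t.filler)) :=
    (Real.exp_log (by linarith [ht.one_le_cont_filler])).symm
  refine (ht.sum_norm_expSum_sq_le_of_minorArc hB (by
    rw [← hl.exp_logSize, ← hr.exp_logSize]
    exact Real.exp_le_exp.mpr hle) Θ hΘ).trans ?_
  rw [← hl.exp_logSize, ← hr.exp_logSize, hφ, ← Real.exp_mul, ← Real.exp_mul]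
  calc _ = Z * (Real.exp (t.leftPart B).logSize ^ 2 * Real.exp (Real.log (cont t.filler)) ^ 2 *
          Real.exp ((t.rightPart B).logSize * -(5 / 3)) *
          Real.exp ((t.leftPart B).logSize * -(5 / 3))) := by rw [hZ]; ring
    _ ≤ _ := by
      simp only [← Real.exp_nat_mul, ← Real.exp_add]
      gcongr
      push_cast
      linarith [ht.minor_exponent_le hB]

namespace Template

variable {S : Finset ℕ} {L : ℝ} {B : ℕ → WordEnsemble} {a N : ℕ} {t : Template}

/-- The part of the random word between the blocks `B 0, …, B (i - 1)` and the blocks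
`B (n - 1), …, B 0`, when its left part has `i + s` blocks and its right part has `n + k`. -/
def middlePart (B : ℕ → WordEnsemble) (f : List ℕ) (i s n k : ℕ) : WordEnsemble :=
  ((leftSegment B i s).concat (single f)).concat (blockProd B (List.range' n k).reverse)

/-- The random word of shape `⟨i + r + s, f, n + k⟩`, with two segments separated out. -/
def splitEnsemble (B : ℕ → WordEnsemble) (f : List ℕ) (i r s n k : ℕ) : WordEnsemble :=
  (leftSegment B 0 i).concat ((leftSegment B i r).concat
    ((middlePart B f (i + r) s n k).concat (rightSegment B n)))

/-- The factor by which `K` must exceed the square of the size of a segment for that segment to be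
determined by a pair of nearby points of the major arcs of parameter `K`. -/
def majorArcSep (S : Finset ℕ) (a : ℕ) : ℝ :=
  16 * (8192 * (a + 1) : ℕ) ^ 2 * ((S.sup id : ℕ) + 2) ^ 3

lemma one_lt_majorArcSep (S : Finset ℕ) (a : ℕ) : 1 < majorArcSep S a := by
  have h : 1 ≤ (8192 * (a + 1)) ^ 2 * (S.sup id + 2) ^ 3 :=
    Nat.one_le_iff_ne_zero.mpr (by positivity)
  have h' : (1 : ℝ) ≤ (8192 * (a + 1) : ℕ) ^ 2 * ((S.sup id : ℕ) + 2) ^ 3 := by exact_mod_cast h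
  rw [majorArcSep, mul_assoc]
  linarith

lemma range'_zero_add_add (i r s : ℕ) : List.range' 0 (i + r + s) =
    List.range' 0 i ++ (List.range' i r ++ List.range' (i + r) s) := by
  rw [List.range'_append_1, add_assoc, ← List.range'_append_1 (s := 0), zero_add]

lemma reverse_range'_zero_add (n k : ℕ) : (List.range' 0 (n + k)).reverse =
    (List.range' n k).reverse ++ (List.range' 0 n).reverse := by
  rw [← List.reverse_append, ← List.range'_append_1 (s := 0), zero_add]

lemma expect_splitEnsemble (B : ℕ → WordEnsemble) (f : List ℕ) (i r s n k : ℕ)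
    (F : List ℕ → ℂ) : (splitEnsemble B f i r s n k).expect F =
      ((⟨i + r + s, f, n + k⟩ : Template).ensemble B).expect F := by
  simp only [splitEnsemble, middlePart, ensemble, leftPart, rightPart, leftSegment, rightSegment,
    range'_zero_add_add, reverse_range'_zero_add, expect_concat, expect_blockProd_append,
    List.append_assoc]

lemma baseWord_splitEnsemble (B : ℕ → WordEnsemble) (f : List ℕ) (i r s n k : ℕ) :
    (splitEnsemble B f i r s n k).baseWord =
      ((⟨i + r + s, f, n + k⟩ : Template).ensemble B).baseWord := by
  simp only [splitEnsemble, middlePart, ensemble, leftPart, rightPart, leftSegment, rightSegment,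
    range'_zero_add_add, reverse_range'_zero_add, baseWord_concat, baseWord_blockProd_append,
    List.append_assoc]

namespace IsBalanced

lemma sum_norm_expSum_sq_le_of_majorArc (hB : IsBlockSequence S L B) {f : List ℕ} {i r s n k : ℕ}
    (ht : IsBalanced S B a N ⟨i + r + s, f, n + k⟩) {K Q : ℝ} (hK : 1 ≤ K) (hQ : 1 ≤ Q)
    (hX : 33 * (K * Q ^ 2) ≤ (leftSegment B 0 i).size)
    (hG : r = 0 ∨ K ≠ 1 ∧ (leftSegment B i r).size ^ 2 * majorArcSep S a ≤ K)
    (hY : n = 0 ∨ 16 * (rightSegment B n).size ^ 2 ≤ Q) (Θ : Finset (ZMod (N + 1)))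
    (hΘ : ∀ j ∈ Θ, j ∈ majorArc (N + 1) K Q) :
    ∑ j ∈ Θ, ‖expSum ((⟨i + r + s, f, n + k⟩ : Template).ensemble B) j‖ ^ 2 ≤
      1600 * (2 * (leftSegment B 0 i).size) ^ 2 *
        ((2 ^ (5 / 3 : ℝ) * (leftSegment B i r).size ^ (-(5 / 3) : ℝ)) *
          (2 ^ (5 / 3 : ℝ) * (rightSegment B n).size ^ (-(5 / 3) : ℝ)) *
          (2 * (8192 * (a + 1) : ℕ) + 1)) *
        (2 ^ (5 / 3 : ℝ) * (leftSegment B 0 i).size ^ (-(5 / 3) : ℝ)) := by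
  have hleft (i n : ℕ) : IsRegular S 2 (leftSegment B i n) :=
    hB.isRegular_blockProd List.nodup_range'
  have hright (n k : ℕ) : IsRegular S 2 (blockProd B (List.range' n k).reverse) :=
    hB.isRegular_blockProd (List.nodup_reverse.mpr List.nodup_range')
  have hmid : IsRegular S (2 * 1 * 2) (middlePart B f (i + r) s n k) :=
    ((hleft _ _).concat ht.isRegular_filler).concat (hright n k)
  have hsplit : IsRegular S 32 (splitEnsemble B f i r s n k) :=
    ((hleft _ _).concat ((hleft _ _).concat (hmid.concat (hright 0 n)))).mono (by norm_num)
  have hbase := baseWord_splitEnsemble B f i r s n k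
  have hempty : Subsingleton (blockProd B []).ι := inferInstanceAs (Subsingleton Unit)
  simp only [expSum_congr fun F => (expect_splitEnsemble B f i r s n k F).symm]
  refine sum_norm_expSum_sq_le_of_major (hleft _ _) (hleft _ _) hmid (hright 0 n) (fun l => ?_)
    (fun w => Nat.lt_succ_of_le (ht.cont_le_of_baseWord_eq hB hsplit le_rfl hbase w))
    (fun w => ht.le_cont_of_baseWord_eq hB hsplit le_rfl hbase w) hK hQ hX ?_ ?_
    ((hleft _ _).weight_le (hB.hasDecay_blockProd _))
    ((hleft _ _).weight_le (hB.hasDecay_blockProd _))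
    ((hright 0 n).weight_le (hB.hasDecay_blockProd _)) Θ hΘ
  · exact List.append_ne_nil_of_left_ne_nil
      (List.append_ne_nil_of_right_ne_nil _ ht.filler_ne_nil) _
  · exact hG.imp_left (by rintro rfl; exact hempty)
  · exact hY.imp_left (by rintro rfl; exact hempty)

lemma sum_norm_expSum_sq_le_exp_of_majorArc (hB : IsBlockSequence S L B) {f : List ℕ}
    {i r s n m : ℕ} (ht : IsBalanced S B a N ⟨i + r + s, f, n + m⟩) {k q : ℝ} (hk : 0 ≤ k)
    (hq : 0 ≤ q) (hX : Real.log 33 + k + 2 * q ≤ (leftSegment B 0 i).logSize)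
    (hG : r = 0 ∨ 2 * (leftSegment B i r).logSize + Real.log (majorArcSep S a) ≤ k)
    (hY : n = 0 ∨ 2 * Real.log 4 + 2 * (rightSegment B n).logSize ≤ q) (Θ : Finset (ZMod (N + 1)))
    (hΘ : ∀ j ∈ Θ, j ∈ majorArc (N + 1) (Real.exp k) (Real.exp q)) :
    ∑ j ∈ Θ, ‖expSum ((⟨i + r + s, f, n + m⟩ : Template).ensemble B) j‖ ^ 2 ≤
      1600 * 4 * 2 ^ (5 / 3 : ℝ) * 2 ^ (5 / 3 : ℝ) * 2 ^ (5 / 3 : ℝ) *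
          (2 * (8192 * (a + 1) : ℕ) + 1) *
        Real.exp (1 / 3 * (leftSegment B 0 i).logSize - 5 / 3 * (leftSegment B i r).logSize -
          5 / 3 * (rightSegment B n).logSize) := by
  have hleft (i n : ℕ) : IsRegular S 2 (leftSegment B i n) :=
    hB.isRegular_blockProd List.nodup_range'
  have hseg (n : ℕ) : IsRegular S 2 (rightSegment B n) :=
    hB.isRegular_blockProd (List.nodup_reverse.mpr List.nodup_range')
  have hW := one_lt_majorArcSep S a
  refine (ht.sum_norm_expSum_sq_le_of_majorArc hB (Real.one_le_exp hk) (Real.one_le_exp hq)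
    ?_ ?_ ?_ Θ hΘ).trans ?_
  · rw [← (hleft 0 i).exp_logSize, ← Real.exp_nat_mul, ← Real.exp_add,
      ← Real.exp_log (show (0 : ℝ) < 33 by norm_num), ← Real.exp_add]
    exact Real.exp_le_exp.mpr (by push_cast; linarith)
  · refine hG.imp_right fun h => ⟨?_, ?_⟩
    · have := (hleft i r).logSize_nonneg
      have := Real.log_pos hW
      exact (Real.one_lt_exp_iff.mpr (by linarith)).ne'
    · rw [← (hleft i r).exp_logSize, ← Real.exp_nat_mul,
        ← Real.exp_log (zero_lt_one.trans hW), ← Real.exp_add]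
      exact Real.exp_le_exp.mpr (mod_cast h)
  · refine hY.imp_right fun h => ?_
    rw [← (hseg n).exp_logSize, ← Real.exp_nat_mul, show (16 : ℝ) = 4 ^ 2 by norm_num,
      ← Real.exp_log (show (0 : ℝ) < 4 by norm_num), ← Real.exp_nat_mul, ← Real.exp_add]
    exact Real.exp_le_exp.mpr (mod_cast h)
  · rw [← (hleft 0 i).exp_logSize, ← (hleft i r).exp_logSize, ← (hseg n).exp_logSize, mul_pow,
      ← Real.exp_mul, ← Real.exp_mul, ← Real.exp_mul, ← Real.exp_nat_mul]
    refine le_of_eq ?_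
    generalize (2 : ℝ) ^ (5 / 3 : ℝ) = c
    rw [show ∀ x y z : ℝ, 1 / 3 * x - 5 / 3 * y - 5 / 3 * z =
      (2 : ℕ) * x + y * -(5 / 3) + z * -(5 / 3) + x * -(5 / 3) by intros; push_cast; ring]
    simp only [Real.exp_add]
    ring

/-- The lengths of the segments to separate out in order to treat the major arcs of parameters
`exp k` and `exp q`. -/
lemma exists_segments (hB : IsBlockSequence S L B) (ht : IsBalanced S B a N t) {C D k q : ℝ}
    (hC : 0 ≤ C) (hD : 0 ≤ D) (hk : 0 ≤ k) (hq : 0 ≤ q)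
    (hq_le : q ≤ Real.log 4 + 2 * (t.rightPart B).logSize)
    (hkq : k + q ≤ C + 2 * (t.rightPart B).logSize)
    (hN : 100 * (scaleConst L + Real.log (128 * (a + 1)) + Real.log 33 + C + D) ≤ Real.log N) :
    ∃ i r n, i + r ≤ t.left ∧ n ≤ t.right ∧
      Real.log 33 + k + 2 * q ≤ (leftSegment B 0 i).logSize ∧
      (r = 0 ∨ 2 * (leftSegment B i r).logSize + D ≤ k) ∧
      (n = 0 ∨ 2 * Real.log 4 + 2 * (rightSegment B n).logSize ≤ q) ∧
      1 / 3 * (leftSegment B 0 i).logSize - 5 / 3 * (leftSegment B i r).logSize -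
        5 / 3 * (rightSegment B n).logSize ≤
          10 * (scaleConst L + Real.log 33 + Real.log 4 + D) - (k + q) / 10 := by
  have hc := log_mul_add_one_nonneg a
  have h4 : 0 < Real.log 4 := Real.log_pos (by norm_num)
  have h33 : Real.log 4 ≤ Real.log 33 := Real.log_le_log (by norm_num) (by norm_num)
  have h24 : Real.log 2 ≤ Real.log 4 := Real.log_le_log (by norm_num) (by norm_num)
  have hleft (i n : ℕ) : 0 ≤ (leftSegment B i n).logSize :=
    (hB.isRegular_blockProd List.nodup_range').logSize_nonneg
  have hright (n : ℕ) : 0 ≤ (rightSegment B n).logSize :=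
    (hB.isRegular_blockProd (List.nodup_reverse.mpr List.nodup_range')).logSize_nonneg
  obtain ⟨i, hi, hi_lt⟩ := hB.exists_logSize_leftSegment 0 (Real.log 33 + k + 2 * q)
  replace hi : (leftSegment B 0 i).logSize ≤ Real.log 33 + k + 2 * q := by
    rcases hi with rfl | hi
    · exact (logSize_blockProd_nil B).trans_le (by linarith)
    · exact hi
  have hi_le := hB.logSize_leftSegment_zero_succ_le i
  obtain ⟨r, hr, hr_lt⟩ := hB.exists_logSize_leftSegment (i + 1) (1 / 2 * (k - D))
  have hr_le := hB.logSize_leftSegment_succ_le (i + 1) r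
  obtain ⟨n, hn, hn_lt⟩ := hB.exists_logSize_rightSegment (1 / 2 * q - Real.log 4)
  have hn_le := hB.logSize_rightSegment_succ_le n
  have hr' : (leftSegment B (i + 1) r).logSize ≤ 1 / 2 * k := by
    rcases hr with rfl | hr
    · exact (logSize_blockProd_nil B).trans_le (by linarith)
    · linarith
  refine ⟨i + 1, r, n, not_lt.mp fun hlt => ?_, not_lt.mp fun hlt => ?_, hi_lt.le,
    hr.imp_right fun h => by linarith, hn.imp_right fun h => by linarith, ?_⟩
  · have hmono := hB.monotone_logSize_leftSegment (Nat.succ_le_of_lt hlt)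
    have hadd := hB.logSize_leftSegment_add_le (i + 1) r
    have := ht.lt_left_succ
    have := ht.right_le
    simp only at hmono
    linarith
  · have hmono := hB.monotone_logSize_rightSegment hlt.le
    rcases hn with rfl | hn
    · omega
    · simp only at hmono
      have : (rightSegment B t.right).logSize = (t.rightPart B).logSize := rfl
      linarith
  · linarith [hleft 0 (i + 1), hleft (i + 1) r, hright n]

end IsBalanced

end Template

open Template in
theorem eventually_sum_norm_expSum_sq_le_of_majorArc {S : Finset ℕ} {L : ℝ} {B : ℕ → WordEnsemble}
    (hB : IsBlockSequence S L B) (a : ℕ) {C : ℝ} (hC : 1 ≤ C) :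
    ∃ C' : ℝ, 0 ≤ C' ∧ ∀ᶠ N : ℕ in atTop, ∀ t, IsBalanced S B a N t →
      ∀ K Q : ℝ, 1 ≤ K → 1 ≤ Q → Q ≤ 4 * (t.rightPart B).size ^ 2 →
        K * Q ≤ C * (t.rightPart B).size ^ 2 → ∀ Θ : Finset (ZMod (N + 1)),
        (∀ j ∈ Θ, j ∈ majorArc (N + 1) K Q) →
        ∑ j ∈ Θ, ‖expSum (t.ensemble B) j‖ ^ 2 ≤
          C' * Real.exp (-(Real.log K + Real.log Q) / 10) := by
  refine ⟨1600 * 4 * 2 ^ (5 / 3 : ℝ) * 2 ^ (5 / 3 : ℝ) * 2 ^ (5 / 3 : ℝ) *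
      (2 * (8192 * (a + 1) : ℕ) + 1) *
    Real.exp (10 * (scaleConst L + Real.log 33 + Real.log 4 + Real.log (majorArcSep S a))),
    by positivity, ?_⟩
  filter_upwards [(Real.tendsto_log_atTop.comp tendsto_natCast_atTop_atTop).eventually_ge_atTop
    (100 * (scaleConst L + Real.log (128 * (a + 1)) + Real.log 33 + Real.log C +
      Real.log (majorArcSep S a)))] with N hN t ht K Q hK hQ hQ_le hKQ_le Θ hΘ
  have hright := isRegular_rightPart hB t
  obtain ⟨k, rfl⟩ : ∃ k, Real.exp k = K := ⟨_, Real.exp_log (by linarith)⟩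
  obtain ⟨q, rfl⟩ : ∃ q, Real.exp q = Q := ⟨_, Real.exp_log (by linarith)⟩
  rw [Real.one_le_exp_iff] at hK hQ
  have hlog {c x : ℝ} (hc : 0 < c) (h : Real.exp x ≤ c * (t.rightPart B).size ^ 2) :
      x ≤ Real.log c + 2 * (t.rightPart B).logSize := by
    rwa [← Real.exp_le_exp, Real.exp_add, Real.exp_log hc, two_mul, Real.exp_add,
      hright.exp_logSize, ← sq]
  obtain ⟨i, r, n, hir, hn, hX, hG, hY, hexp⟩ := ht.exists_segments hB (Real.log_nonneg hC)
    (Real.log_pos (one_lt_majorArcSep S a)).le hK hQ (hlog (by norm_num) hQ_le)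
    (hlog (by linarith) (by rwa [Real.exp_add])) hN
  obtain ⟨s, hs⟩ := Nat.exists_eq_add_of_le hir
  obtain ⟨m, hm⟩ := Nat.exists_eq_add_of_le hn
  obtain ⟨l, f, l'⟩ := t
  obtain rfl : l = i + r + s := hs
  obtain rfl : l' = n + m := hm
  refine (ht.sum_norm_expSum_sq_le_exp_of_majorArc hB hK hQ hX hG hY Θ hΘ).trans ?_
  rw [Real.log_exp, Real.log_exp, mul_assoc _ (Real.exp _), ← Real.exp_add]
  refine mul_le_mul_of_nonneg_left (Real.exp_le_exp.mpr ?_) (by positivity)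
  linarith

end ArcBounds

section MinorArcComplement

lemma exists_isCoprime_abs_mul_sub_le (x y : ℝ) (m : ℤ) {D : ℕ} (hD : 0 < D) :
    ∃ (a : ℤ) (q : ℕ), 0 < q ∧ q ≤ D ∧ IsCoprime a (q : ℤ) ∧ |x * q - y * a| ≤ |x * D - y * m| := by
  have hg : 0 < Int.gcd m D := Int.gcd_pos_of_ne_zero_right _ (by positivity)
  obtain ⟨a, q, hcop, ha, hq⟩ := Int.exists_gcd_one hg
  set g := Int.gcd m D
  have hq0 : 0 < q :=
    pos_of_mul_pos_left (hq ▸ (Int.natCast_pos.mpr hD)) (Int.natCast_nonneg g)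
  lift q to ℕ using hq0.le
  have hD_eq : D = q * g := by exact_mod_cast hq
  refine ⟨a, q, Int.natCast_pos.mp hq0, hD_eq ▸ Nat.le_mul_of_pos_right _ hg,
    Int.isCoprime_iff_gcd_eq_one.mpr hcop, ?_⟩
  have hmul : x * D - y * m = (x * q - y * a) * g := by
    rw [ha, hD_eq]
    push_cast
    ring
  rw [hmul, abs_mul, Nat.abs_cast]
  exact le_mul_of_one_le_right (abs_nonneg _) (by exact_mod_cast hg)

variable {P : ℕ}

lemma exists_mem_majorArc (j : ZMod P) {a : ℤ} {q : ℕ} (hq : 0 < q) (haq : IsCoprime a (q : ℤ)) :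
    ∃ k l : ℕ, (2 : ℝ) ^ l ≤ q ∧ (2 : ℝ) ^ k * 2 ^ l ≤ q + |(j.val : ℝ) * q - P * a| ∧
      j ∈ majorArc P (2 ^ k) (2 ^ l) := by
  have hq1 : (1 : ℝ) ≤ q := by exact_mod_cast hq
  obtain ⟨l, hl, hl_lt⟩ := exists_nat_pow_near hq1 one_lt_two
  set b := |(j.val : ℝ) * q - P * a| / q
  have hb : b * q = |(j.val : ℝ) * q - P * a| := div_mul_cancel₀ _ (by positivity)
  have hb0 : 0 ≤ b := by positivity
  obtain ⟨k, hk, hk_lt⟩ := exists_nat_pow_near (le_max_left 1 b) one_lt_two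
  refine ⟨k, l, hl, ?_, a, q, ⟨hq, haq, ?_⟩, hl, (pow_succ' (2 : ℝ) l) ▸ hl_lt, ?_⟩
  · calc (2 : ℝ) ^ k * 2 ^ l ≤ max 1 b * q := by gcongr
      _ ≤ (1 + b) * q := by
          gcongr
          exact max_le (by linarith) (by linarith)
      _ = q + |(j.val : ℝ) * q - P * a| := by rw [← hb]; ring
  · rw [← hb, ← pow_succ']
    gcongr
    exact (le_max_right 1 b).trans hk_lt.le
  · rw [← hb]
    rcases Nat.eq_zero_or_pos k with rfl | hk0
    · exact Or.inl (pow_zero 2)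
    · have h2k : (1 : ℝ) < 2 ^ k := one_lt_pow₀ one_lt_two hk0.ne'
      refine Or.inr ?_
      gcongr
      exact (le_max_iff.mp hk).resolve_left h2k.not_ge

lemma exists_mem_majorArc_of_notMem_minorArc [NeZero P] {M H : ℝ} {j : ZMod P}
    (hj : j ∉ minorArc P M H) : ∃ k l : ℕ, (2 : ℝ) ^ l ≤ H ^ 2 ∧
      (2 : ℝ) ^ k * 2 ^ l ≤ H ^ 2 + 2 * H * (P / (5 * M)) ∧ j ∈ majorArc P (2 ^ k) (2 ^ l) := by
  simp only [minorArc, Set.mem_ofPred_eq, not_forall, not_not] at hj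
  obtain ⟨D, hD, hDH, hnear⟩ := hj
  obtain ⟨m, hm⟩ := IsNear.exists_intCast (j' := (0 : ZMod P)) (w := 0)
    ((zero_mul (_ : ZMod P)).symm ▸ hnear)
  rw [ZMod.val_zero, Nat.cast_zero, zero_mul, sub_zero] at hm
  obtain ⟨a, q, hq, hqD, haq, hle⟩ := exists_isCoprime_abs_mul_sub_le j.val P m hD
  obtain ⟨k, l, hl, hkl, hmem⟩ := exists_mem_majorArc j hq haq
  have hqH : (q : ℝ) ≤ H ^ 2 := le_trans (by exact_mod_cast hqD) hDH
  exact ⟨k, l, hl.trans hqH, by linarith, hmem⟩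

end MinorArcComplement

lemma sum_le_mul_tsum_of_forall_fiber_le {ι α : Type*} {Θ : Finset ι} {f : ι → ℝ} {φ : ι → α}
    {g : α → ℝ} {C : ℝ} (hC : 0 ≤ C) (hg : Summable g) (hg0 : ∀ x, 0 ≤ g x)
    (h : ∀ j ∈ Θ, ∀ Θ' ⊆ Θ, (∀ i ∈ Θ', φ i = φ j) → ∑ i ∈ Θ', f i ≤ C * g (φ j)) :
    ∑ i ∈ Θ, f i ≤ C * ∑' x, g x := by
  classical
  rw [← Finset.sum_fiberwise_of_maps_to fun i hi => Finset.mem_image_of_mem φ hi]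
  calc _ ≤ ∑ x ∈ Θ.image φ, C * g x := Finset.sum_le_sum fun x hx => by
        obtain ⟨j, hj, rfl⟩ := Finset.mem_image.mp hx
        exact h j hj _ (Finset.filter_subset _ _) fun i hi => (Finset.mem_filter.mp hi).2
    _ = C * ∑ x ∈ Θ.image φ, g x := (Finset.mul_sum _ _ _).symm
    _ ≤ C * ∑' x, g x := by
        gcongr
        exact hg.sum_le_tsum _ fun x _ => hg0 x

section Assembly

open WordEnsemble Template

variable {S : Finset ℕ} {L : ℝ} {B : ℕ → WordEnsemble} {a : ℕ}

lemma Template.IsBalanced.exists_mem_majorArc (hB : IsBlockSequence S L B) {N : ℕ} {t : Template}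
    (ht : IsBalanced S B a N t) {j : ZMod (N + 1)}
    (hj : j ∉ minorArc (N + 1) (4 * ((t.leftPart B).size * cont t.filler))
      (2 * (t.rightPart B).size)) :
    ∃ k l : ℕ, (2 : ℝ) ^ l ≤ 4 * (t.rightPart B).size ^ 2 ∧
      (2 : ℝ) ^ k * 2 ^ l ≤ (4 + 128 * (a + 1)) * (t.rightPart B).size ^ 2 ∧
      j ∈ majorArc (N + 1) (2 ^ k) (2 ^ l) := by
  obtain ⟨k, l, hl, hkl, hmem⟩ := exists_mem_majorArc_of_notMem_minorArc hj
  have hX := (isRegular_leftPart hB t).one_le_size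
  have hY := (isRegular_rightPart hB t).one_le_size
  have hf := ht.one_le_cont_filler
  have hN : (1 : ℝ) ≤ N := by exact_mod_cast ht.pos hB
  refine ⟨k, l, hl.trans_eq (by ring), hkl.trans ?_, hmem⟩
  have hle : ((N + 1 : ℕ) : ℝ) ≤
      2 * (128 * (a + 1) * ((t.leftPart B).size * cont t.filler * (t.rightPart B).size)) := by
    push_cast
    linarith [ht.le_mul_size hB]
  have hdiv : ((N + 1 : ℕ) : ℝ) / (5 * (4 * ((t.leftPart B).size * cont t.filler))) ≤
      128 * (a + 1) * (t.rightPart B).size / 4 := by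
    rw [div_le_iff₀ (by positivity)]
    refine hle.trans (le_of_sub_nonneg ?_)
    ring_nf
    positivity
  calc _ ≤ (2 * (t.rightPart B).size) ^ 2 +
        2 * (2 * (t.rightPart B).size) * (128 * (a + 1) * (t.rightPart B).size / 4) := by gcongr
    _ = _ := by ring

theorem eventually_sum_norm_expSum_sq_le (hB : IsBlockSequence S L B) (a : ℕ) :
    ∃ C : ℝ, ∀ᶠ N : ℕ in atTop, ∀ t, IsBalanced S B a N t →
      ∑ j : ZMod (N + 1), ‖expSum (t.ensemble B) j‖ ^ 2 ≤ C := by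
  classical
  obtain ⟨C₁, h₁⟩ := eventually_sum_norm_expSum_sq_le_of_minorArc hB a
  obtain ⟨C₂, hC₂, h₂⟩ := eventually_sum_norm_expSum_sq_le_of_majorArc hB a
    (C := 4 + 128 * (a + 1)) (by linarith [a.cast_nonneg (α := ℝ)])
  set ρ := Real.exp (-Real.log 2 / 10) with hρ
  have hρ1 : ρ < 1 := Real.exp_lt_one_iff.mpr (by linarith [Real.log_pos one_lt_two])
  have hgeom : Summable fun k : ℕ => ρ ^ k := summable_geometric_of_lt_one (by positivity) hρ1
  have hsum : Summable fun x : ℕ × ℕ => ρ ^ x.1 * ρ ^ x.2 :=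
    hgeom.mul_of_nonneg hgeom (fun _ => by positivity) (fun _ => by positivity)
  refine ⟨C₁ + C₂ * ∑' x : ℕ × ℕ, ρ ^ x.1 * ρ ^ x.2, ?_⟩
  filter_upwards [h₁, h₂] with N h₁ h₂ t ht
  set m := minorArc (N + 1) (4 * ((t.leftPart B).size * cont t.filler)) (2 * (t.rightPart B).size)
  have hmajor (j : ZMod (N + 1)) (hj : j ∉ m) := ht.exists_mem_majorArc hB hj
  choose! k l hl hkl hmem using hmajor
  rw [← Finset.sum_filter_add_sum_filter_not _ (· ∈ m)]
  refine add_le_add (h₁ t ht _ fun j hj => (Finset.mem_filter.mp hj).2)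
    (sum_le_mul_tsum_of_forall_fiber_le (φ := fun j => (k j, l j)) hC₂ hsum
      (fun _ => by positivity) fun j hj Θ hΘ hφ => ?_)
  have hnot {i} (hi : i ∈ Finset.univ.filter (· ∉ m)) : i ∉ m := (Finset.mem_filter.mp hi).2
  refine (h₂ t ht (2 ^ k j) (2 ^ l j) (one_le_pow₀ one_le_two) (one_le_pow₀ one_le_two)
    (hl j (hnot hj)) (hkl j (hnot hj)) Θ fun i hi => ?_).trans_eq ?_
  · have hki : k i = k j := congrArg Prod.fst (hφ i hi)
    have hli : l i = l j := congrArg Prod.snd (hφ i hi)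
    exact hki ▸ hli ▸ hmem i (hnot (hΘ hi))
  · rw [hρ, ← Real.exp_nat_mul, ← Real.exp_nat_mul, ← Real.exp_add, Real.log_pow, Real.log_pow]
    ring_nf

lemma Template.IsBalanced.card_image_cont_le (hB : IsBlockSequence S L B) {N : ℕ} {t : Template}
    (ht : IsBalanced S B a N t) :
    (Finset.univ.image fun i => cont ((t.ensemble B).word i)).card ≤ (DD S N).ncard := by
  rw [← Set.ncard_coe_finset]
  refine Set.ncard_le_ncard (fun d hd => ?_) ((Set.finite_Iic N).subset fun d hd => hd.2.1)
  obtain ⟨i, -, rfl⟩ := Finset.mem_image.mp (Finset.mem_coe.mp hd)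
  have hE := ht.isRegular_ensemble hB
  exact ⟨cont_pos (hE.zero_notMem i), ht.cont_le_of_baseWord_eq hB hE (by norm_num) rfl i, _,
    List.append_ne_nil_of_left_ne_nil (List.append_ne_nil_of_right_ne_nil _ ht.filler_ne_nil) _,
    hE.mem_alphabet i, rfl⟩

/-- By Parseval and Cauchy–Schwarz, a bounded second moment of the exponential sum forces many
distinct continuants. -/
theorem exists_mul_le_ncard_DD (hB : IsBlockSequence S L B) (ha : 2 ≤ a) (haS : a ∈ S) :
    ∃ c : ℝ, 0 < c ∧ ∀ᶠ N : ℕ in atTop, c * N ≤ ((DD S N).ncard : ℝ) := by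
  obtain ⟨C, hC⟩ := eventually_sum_norm_expSum_sq_le hB a
  refine ⟨(|C| + 1)⁻¹, by positivity, ?_⟩
  filter_upwards [hC, (Real.tendsto_log_atTop.comp tendsto_natCast_atTop_atTop).eventually_ge_atTop
    (2 * Real.log (128 * (a + 1)))] with N hC hN
  obtain ⟨t, ht⟩ := exists_isBalanced hB ha haS hN
  have hcard := card_le_mul_card_image_of_sum_norm_sq_le (ZMod.isPrimitive_stdAddChar (N + 1))
    (ht.isRegular_ensemble hB).sum_weight (fun i => (cont ((t.ensemble B).word i) : ZMod (N + 1)))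
    (hC t ht)
  have himage : (Finset.univ.image fun i => (cont ((t.ensemble B).word i) : ZMod (N + 1))).card ≤
      (DD S N).ncard := by
    rw [← Function.comp_def (Nat.cast : ℕ → ZMod (N + 1)), ← Finset.image_image]
    exact Finset.card_image_le.trans (ht.card_image_cont_le hB)
  rw [ZMod.card] at hcard
  push_cast at hcard
  rw [inv_mul_le_iff₀ (by positivity)]
  calc (N : ℝ) ≤ C * (Finset.univ.image fun i =>
        (cont ((t.ensemble B).word i) : ZMod (N + 1))).card := by linarith
    _ ≤ (|C| + 1) * (DD S N).ncard := by
        gcongr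
        linarith [le_abs_self C]

end Assembly

section Cylinders

variable {A : ℕ} {u v w : List ℕ}

lemma two_pow_le_cont : ∀ (n : ℕ) {w : List ℕ}, 0 ∉ w → 2 * n ≤ w.length → 2 ^ n ≤ cont w
  | 0, _, h, _ => cont_pos h
  | _ + 1, [], _, hn => by simp at hn
  | _ + 1, [_], _, hn => by
    rw [List.length_singleton] at hn
    omega
  | n + 1, d :: e :: w, h, hn => by
    obtain ⟨hd, h'⟩ := List.ne_and_not_mem_of_not_mem_cons h
    obtain ⟨he, hw⟩ := List.ne_and_not_mem_of_not_mem_cons h'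
    have ih := two_pow_le_cont n hw (by simp only [List.length_cons] at hn; omega)
    have hle : cont w ≤ cont (e :: w) := by
      have := cont_mul_cont_le [e] w
      rw [List.singleton_append] at this
      exact (Nat.le_mul_of_pos_left _ (Nat.pos_of_ne_zero he.symm)).trans this
    rw [cont, pow_succ, mul_two]
    exact Nat.add_le_add ((ih.trans hle).trans
      (Nat.le_mul_of_pos_left _ (Nat.pos_of_ne_zero hd.symm))) ih

lemma cont_le_pow (h : 0 ∉ w) (hA : ∀ d ∈ w, d ≤ A) : cont w ≤ (A + 1) ^ w.length := by
  induction w with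
  | nil => exact le_rfl
  | cons d w ih =>
    have hw := (List.ne_and_not_mem_of_not_mem_cons h).2
    have hd := hA d List.mem_cons_self
    calc cont (d :: w) = d * cont w + contMatrix w 1 0 := by
          rw [← contMatrix_zero_zero, contMatrix_cons_zero, contMatrix_zero_zero]
      _ ≤ A * cont w + cont w := by
          gcongr
          exact contMatrix_one_zero_le hw
      _ = cont w * (A + 1) := by ring
      _ ≤ (A + 1) ^ w.length * (A + 1) := by
          gcongr
          exact ih hw fun d hd => hA d (List.mem_cons_of_mem _ hd)

lemma cfVal_eq_firstCol_div (hw : w ≠ []) :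
    cfVal w = ((firstCol w).2 : ℝ) / (firstCol w).1 := by
  obtain ⟨d, t, rfl⟩ := List.exists_cons_of_ne_nil hw
  rw [cfVal, firstCol_fst, firstCol, contMatrix_cons_one_zero, List.tail_cons]

lemma abs_wedge_firstCol_le (hu : 0 ∉ u) (hv : 0 ∉ v) :
    |(wedge (firstCol u) (firstCol v) : ℝ)| ≤ cont u * cont v := by
  have hu' : ((firstCol u).2 : ℝ) ≤ cont u := by exact_mod_cast firstCol_snd_le hu
  have hv' : ((firstCol v).2 : ℝ) ≤ cont v := by exact_mod_cast firstCol_snd_le hv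
  push_cast [wedge, firstCol_fst]
  refine abs_sub_le_of_nonneg_of_le (by positivity) ?_ (by positivity) ?_ <;> gcongr

lemma abs_cfVal_append_sub_le (hw : w ≠ []) (hw0 : 0 ∉ w) (hu : 0 ∉ u) (hv : 0 ∉ v) :
    |cfVal (w ++ u) - cfVal (w ++ v)| ≤ 1 / (cont w : ℝ) ^ 2 := by
  have hwedge : |(wedge (firstCol (w ++ u)) (firstCol (w ++ v)) : ℝ)| ≤ cont u * cont v := by
    have := abs_wedge_firstCol_append w u v
    refine le_trans (le_of_eq ?_) (abs_wedge_firstCol_le hu hv)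
    exact_mod_cast this
  have hpos := one_le_cont hw0
  have hpos_u := one_le_cont hu
  have hpos_v := one_le_cont hv
  have hwu : (cont w * cont u : ℝ) ≤ cont (w ++ u) := by exact_mod_cast cont_mul_cont_le w u
  have hwv : (cont w * cont v : ℝ) ≤ cont (w ++ v) := by exact_mod_cast cont_mul_cont_le w v
  have hwu_pos : (0 : ℝ) < cont (w ++ u) := lt_of_lt_of_le (by positivity) hwu
  have hwv_pos : (0 : ℝ) < cont (w ++ v) := lt_of_lt_of_le (by positivity) hwv
  have hsub : cfVal (w ++ u) - cfVal (w ++ v) = -(wedge (firstCol (w ++ u)) (firstCol (w ++ v))) /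
      (cont (w ++ u) * cont (w ++ v)) := by
    rw [cfVal_eq_firstCol_div (List.append_ne_nil_of_left_ne_nil hw u),
      cfVal_eq_firstCol_div (List.append_ne_nil_of_left_ne_nil hw v), firstCol_fst, firstCol_fst,
      div_sub_div _ _ hwu_pos.ne' hwv_pos.ne']
    push_cast [wedge, firstCol_fst]
    ring
  rw [hsub, abs_div, abs_neg, abs_of_pos (mul_pos hwu_pos hwv_pos),
    div_le_div_iff₀ (by positivity) (by positivity), one_mul]
  calc _ ≤ (cont u * cont v : ℝ) * (cont w : ℝ) ^ 2 := by gcongr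
    _ = (cont w * cont u : ℝ) * (cont w * cont v) := by ring
    _ ≤ _ := by gcongr

variable {S : Finset ℕ} {n m : ℕ} {s : ℝ}

/-- The words of length `n` over the alphabet `S`. -/
def words (S : Finset ℕ) (n : ℕ) : Finset (List ℕ) :=
  (Fintype.piFinset fun _ : Fin n => S).image List.ofFn

lemma mem_words : w ∈ words S n ↔ w.length = n ∧ ∀ d ∈ w, d ∈ S := by
  simp only [words, Finset.mem_image, Fintype.mem_piFinset]
  constructor
  · rintro ⟨f, hf, rfl⟩
    exact ⟨List.length_ofFn, List.forall_mem_ofFn_iff.mpr hf⟩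
  · rintro ⟨rfl, h⟩
    exact ⟨w.get, fun i => h _ (w.get_mem i), List.ofFn_get w⟩

lemma zero_notMem_of_mem_words (hS : 0 ∉ S) (hw : w ∈ words S n) : 0 ∉ w :=
  fun h => hS ((mem_words.mp hw).2 0 h)

lemma le_sup_of_mem_words (hw : w ∈ words S n) (d : ℕ) (hd : d ∈ w) : d ≤ S.sup id :=
  Finset.le_sup (f := id) ((mem_words.mp hw).2 d hd)

lemma map_range_mem_words {d : ℕ → ℕ} (hd : ∀ i, d i ∈ S) (n : ℕ) :
    (List.range n).map d ∈ words S n :=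
  mem_words.mpr ⟨by rw [List.length_map, List.length_range],
    List.forall_mem_map.mpr fun i _ => hd i⟩

/-- The set of infinite continued fractions over `S` whose first partial quotients are those of
`w`. -/
def cylinder (S : Finset ℕ) (w : List ℕ) : Set ℝ :=
  {x | ∃ d : ℕ → ℕ, (∀ i, d i ∈ S) ∧ (List.range w.length).map d = w ∧
    Tendsto (fun k => cfVal ((List.range k).map d)) atTop (nhds x)}

lemma cfSet_subset_iUnion_cylinder (S : Finset ℕ) (n : ℕ) :
    cfSet S ⊆ ⋃ w : words S n, cylinder S w := by
  rintro x ⟨d, hd, hx⟩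
  exact Set.mem_iUnion.mpr ⟨⟨_, map_range_mem_words hd n⟩, d, hd,
    by rw [List.length_map, List.length_range], hx⟩

lemma map_range_add (d : ℕ → ℕ) (n k : ℕ) : (List.range (n + k)).map d =
    (List.range n).map d ++ (List.range k).map fun i => d (n + i) := by
  rw [List.range_add, List.map_append, List.map_map, Function.comp_def]

lemma ediam_cylinder_le (hS : 0 ∉ S) (hw : w ≠ []) :
    Metric.ediam (cylinder S w) ≤ ENNReal.ofReal (1 / (cont w : ℝ) ^ 2) := by
  refine Metric.ediam_le ?_
  rintro x ⟨d, hd, hdw, hx⟩ y ⟨e, he, hew, hy⟩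
  rw [edist_dist, Real.dist_eq]
  refine ENNReal.ofReal_le_ofReal (le_of_tendsto (hx.sub hy).abs ?_)
  filter_upwards [eventually_ge_atTop w.length] with K hK
  obtain ⟨k, rfl⟩ := Nat.exists_eq_add_of_le hK
  rw [map_range_add, map_range_add, hdw, hew]
  have hword {d : ℕ → ℕ} (hd : ∀ i, d i ∈ S) (k : ℕ) : 0 ∉ (List.range k).map d :=
    zero_notMem_of_mem_words hS (map_range_mem_words hd k)
  have hw0 := hword hd w.length
  rw [hdw] at hw0
  exact abs_cfVal_append_sub_le hw hw0 (hword (fun i => hd _) k)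
    (hword (fun i => he _) k)

end Cylinders

section ContSum

variable {S : Finset ℕ} {n m : ℕ} {s : ℝ}

/-- The partition function `∑ ⟨w⟩ ^ (-s)` over the words `w` of length `n`. -/
def contSum (S : Finset ℕ) (s : ℝ) (n : ℕ) : ℝ := ∑ w ∈ words S n, (cont w : ℝ) ^ (-s)

lemma sum_ediam_cylinder_le (hS : 0 ∉ S) (hn : n ≠ 0) (hs : 0 ≤ s) :
    ∑ w : words S n, Metric.ediam (cylinder S w) ^ s ≤
      ENNReal.ofReal (contSum S (2 * s) n) := by
  rw [contSum, ENNReal.ofReal_sum_of_nonneg (fun _ _ => by positivity),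
    ← Finset.sum_coe_sort (words S n)]
  refine Finset.sum_le_sum fun w _ => ?_
  have hw : (w : List ℕ) ≠ [] := List.ne_nil_of_length_pos
    (Nat.pos_of_ne_zero ((mem_words.mp w.2).1.trans_ne hn))
  calc Metric.ediam (cylinder S w) ^ s
      ≤ ENNReal.ofReal (1 / (cont (w : List ℕ) : ℝ) ^ 2) ^ s :=
        ENNReal.rpow_le_rpow (ediam_cylinder_le hS hw) hs
    _ = ENNReal.ofReal ((1 / (cont (w : List ℕ) : ℝ) ^ 2) ^ s) :=
        ENNReal.ofReal_rpow_of_nonneg (by positivity) hs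
    _ = ENNReal.ofReal ((cont (w : List ℕ) : ℝ) ^ (-(2 * s))) := by
        rw [Real.rpow_neg (by positivity), Real.rpow_mul (by positivity), one_div,
          Real.inv_rpow (by positivity), Real.rpow_two]

/-- Otherwise the covers by cylinders would bound the `s`-dimensional Hausdorff measure. -/
lemma exists_le_contSum (hS : 0 ∉ S) {s : NNReal} (hs : s < hdim S) (C : ℝ) :
    ∃ n, C ≤ contSum S (2 * s) n := by
  by_contra! hC
  have hdim : (s : ENNReal) < dimH (cfSet S) := by
    by_contra! hle
    exact hs.not_ge (ENNReal.toReal_mono ENNReal.coe_ne_top hle)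
  have hradius : Tendsto (fun n : ℕ => ENNReal.ofReal ((1 / 4 : ℝ) ^ n)) atTop (nhds 0) := by
    have := tendsto_pow_atTop_nhds_zero_of_lt_one (r := (1 / 4 : ℝ)) (by norm_num) (by norm_num)
    simpa only [ENNReal.ofReal_zero] using ENNReal.tendsto_ofReal this
  have hne {n : ℕ} (hn : 1 ≤ n) : 2 * n ≠ 0 := by omega
  have hle := MeasureTheory.Measure.hausdorffMeasure_le_liminf_sum (s : ℝ) (cfSet S) (l := atTop)
    _ hradius (fun n (w : words S (2 * n)) => cylinder S w) ?_
    (Eventually.of_forall fun n => cfSet_subset_iUnion_cylinder S (2 * n))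
  · rw [hausdorffMeasure_of_lt_dimH hdim, top_le_iff] at hle
    refine ENNReal.ofReal_ne_top (top_le_iff.mp (hle ▸ liminf_le_of_frequently_le'
      (Eventually.frequently (?_ : ∀ᶠ n in atTop, _ ≤ ENNReal.ofReal C))))
    filter_upwards [eventually_ge_atTop 1] with n hn
    exact (sum_ediam_cylinder_le hS (hne hn) s.coe_nonneg).trans
      (ENNReal.ofReal_le_ofReal (hC _).le)
  · filter_upwards [eventually_ge_atTop 1] with n hn w
    have hlen := (mem_words.mp w.2).1
    refine (ediam_cylinder_le hS (List.ne_nil_of_length_pos (by omega))).trans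
      (ENNReal.ofReal_le_ofReal ?_)
    have hpow : (2 : ℝ) ^ n ≤ cont (w : List ℕ) := by
      exact_mod_cast two_pow_le_cont n (zero_notMem_of_mem_words hS w.2) hlen.ge
    calc 1 / (cont (w : List ℕ) : ℝ) ^ 2 ≤ 1 / (2 ^ n) ^ 2 := by gcongr
      _ = (1 / 4) ^ n := by rw [← pow_mul, mul_comm, pow_mul, one_div_pow]; norm_num

lemma contSum_zero (S : Finset ℕ) (s : ℝ) : contSum S s 0 = 1 := by
  have : words S 0 = {[]} := by
    ext w
    rw [mem_words, Finset.mem_singleton, List.length_eq_zero_iff]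
    exact ⟨And.left, by rintro rfl; simp⟩
  rw [contSum, this, Finset.sum_singleton, cont, Nat.cast_one, Real.one_rpow]

lemma rpow_neg_eq_two_rpow_mul {x : ℝ} (hx : 0 ≤ x) (s : ℝ) :
    x ^ (-s) = 2 ^ s * (2 * x) ^ (-s) := by
  rw [Real.mul_rpow zero_le_two hx, ← mul_assoc, ← Real.rpow_add two_pos, add_neg_cancel,
    Real.rpow_zero, one_mul]

lemma contSum_mul_le (hS : 0 ∉ S) (hs : 0 ≤ s) (n m : ℕ) :
    contSum S s n * contSum S s m ≤ 2 ^ s * contSum S s (n + m) := by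
  have hinj : Set.InjOn (fun x : List ℕ × List ℕ => x.1 ++ x.2)
      (words S n ×ˢ words S m : Finset _) := by
    rintro ⟨u, v⟩ h ⟨u', v'⟩ h' heq
    rw [Finset.mem_coe, Finset.mem_product, mem_words] at h h'
    obtain ⟨rfl, rfl⟩ := List.append_inj heq (h.1.1.trans h'.1.1.symm)
    rfl
  rw [contSum, contSum, contSum, Finset.sum_mul_sum, ← Finset.sum_product', Finset.mul_sum]
  calc _ ≤ ∑ x ∈ words S n ×ˢ words S m, 2 ^ s * (cont (x.1 ++ x.2) : ℝ) ^ (-s) := by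
        refine Finset.sum_le_sum fun x hx => ?_
        obtain ⟨hx₁, hx₂⟩ := Finset.mem_product.mp hx
        have h₁ := zero_notMem_of_mem_words hS hx₁
        have h₂ := zero_notMem_of_mem_words hS hx₂
        have hle : (cont (x.1 ++ x.2) : ℝ) ≤ 2 * (cont x.1 * cont x.2) := by
          exact_mod_cast cont_append_le h₁ h₂
        have hpos : (0 : ℝ) < cont (x.1 ++ x.2) := by
          exact_mod_cast cont_pos (List.not_mem_append h₁ h₂)
        rw [← Real.mul_rpow (by positivity) (by positivity),
          rpow_neg_eq_two_rpow_mul (by positivity)]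
        gcongr ?_ * ?_
        exact Real.rpow_le_rpow_of_nonpos hpos hle (neg_nonpos.mpr hs)
    _ = ∑ w ∈ (words S n ×ˢ words S m).image (fun x => x.1 ++ x.2),
          2 ^ s * (cont w : ℝ) ^ (-s) := by rw [Finset.sum_image hinj]
    _ ≤ _ := by
        refine Finset.sum_le_sum_of_subset_of_nonneg (fun w hw => ?_) fun _ _ _ => by positivity
        obtain ⟨x, hx, rfl⟩ := Finset.mem_image.mp hw
        rw [Finset.mem_product, mem_words, mem_words] at hx
        exact mem_words.mpr ⟨by rw [List.length_append, hx.1.1, hx.2.1],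
          List.forall_mem_append.mpr ⟨hx.1.2, hx.2.2⟩⟩

lemma pow_le_contSum_mul (hS : 0 ∉ S) (hs : 0 ≤ s) {c : ℝ} (hc : 0 ≤ c) {k : ℕ}
    (hk : 2 ^ s * c ≤ contSum S s k) (m : ℕ) : c ^ m ≤ contSum S s (k * m) := by
  induction m with
  | zero => rw [pow_zero, mul_zero, contSum_zero]
  | succ m ih =>
    refine le_of_mul_le_mul_left ?_ (Real.rpow_pos_of_pos two_pos s)
    calc (2 : ℝ) ^ s * c ^ (m + 1) = c ^ m * (2 ^ s * c) := by ring
      _ ≤ contSum S s (k * m) * contSum S s k := by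
          gcongr
          exact (pow_nonneg hc m).trans ih
      _ ≤ 2 ^ s * contSum S s (k * (m + 1)) := contSum_mul_le hS hs _ _

end ContSum

section Blocks

section Pigeonhole

variable {α κ : Type*} [Fintype κ]

lemma exists_subset_forall_le_add {s : Finset α} {f : α → κ → ℝ} {g : α → ℝ} {U : ℕ} {b ε : ℝ}
    (hε : 0 < ε) (hU : U ≠ 0) (hf₀ : ∀ w ∈ s, ∀ x, 0 ≤ f w x) (hf : ∀ w ∈ s, ∀ x, f w x < U * ε)
    (hg : (U : ℝ) ^ Fintype.card κ * b ≤ ∑ w ∈ s, g w) :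
    ∃ t ⊆ s, b ≤ ∑ w ∈ t, g w ∧ ∀ v ∈ t, ∀ w ∈ t, ∀ x, f v x ≤ f w x + ε := by
  classical
  have hmaps : ∀ w ∈ s, (fun x => ⌊f w x / ε⌋₊) ∈ Fintype.piFinset fun _ : κ => Finset.range U :=
    fun w hw => Fintype.mem_piFinset.mpr fun x => Finset.mem_range.mpr
      (Nat.floor_lt (div_nonneg (hf₀ w hw x) hε.le) |>.mpr ((div_lt_iff₀ hε).mpr (hf w hw x)))
  obtain ⟨y, -, hy⟩ := Finset.exists_le_sum_fiber_of_maps_to_of_nsmul_le_sum hmaps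
    (Fintype.piFinset_nonempty.mpr fun _ => Finset.nonempty_range_iff.mpr hU) (w := g) (b := b)
    (by simpa [Fintype.card_piFinset] using hg)
  refine ⟨_, Finset.filter_subset _ _, hy, fun v hv w hw x => ?_⟩
  obtain ⟨-, hv'⟩ := Finset.mem_filter.mp hv
  obtain ⟨hws, hw'⟩ := Finset.mem_filter.mp hw
  have hfloor : ⌊f v x / ε⌋₊ = ⌊f w x / ε⌋₊ := congrFun (hv'.trans hw'.symm) x
  have hle : f v x / ε ≤ f w x / ε + 1 := by
    refine (Nat.lt_floor_add_one _).le.trans ?_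
    rw [hfloor]
    gcongr
    exact Nat.floor_le (div_nonneg (hf₀ w hws x) hε.le)
  rwa [← div_self hε.ne', ← add_div, div_le_div_iff_of_pos_right hε] at hle

end Pigeonhole

variable {S : Finset ℕ} {w : List ℕ} {T : Finset (List ℕ)} {n i : ℕ} {κ : ℝ}

lemma contMatrix_zero_one_pos (h : 0 ∉ w) (hw : w ≠ []) : 0 < contMatrix w 0 1 := by
  have := contMatrix_one_zero_pos (w := w.reverse) (by rwa [List.mem_reverse])
    (List.reverse_ne_nil_iff.mpr hw)
  rwa [contMatrix_reverse] at this

lemma contMatrix_pos (h : 0 ∉ w) (hw : 2 ≤ w.length) : ∀ a b, 0 < contMatrix w a b := by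
  obtain ⟨d, v, rfl⟩ := List.exists_cons_of_length_pos (by omega : 0 < w.length)
  have hv : v ≠ [] := by
    rintro rfl
    simp at hw
  rw [Fin.forall_fin_two, Fin.forall_fin_two, Fin.forall_fin_two]
  refine ⟨⟨contMatrix_zero_zero _ ▸ cont_pos h, contMatrix_zero_one_pos h (List.cons_ne_nil d v)⟩,
    contMatrix_one_zero_pos h (List.cons_ne_nil d v), ?_⟩
  rw [contMatrix_cons_one]
  exact contMatrix_zero_one_pos (List.not_mem_of_not_mem_cons h) hv

lemma contMatrix_le_cont (h : 0 ∉ w) (hw : w ≠ []) : ∀ a b, contMatrix w a b ≤ cont w := by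
  obtain ⟨d, v, rfl⟩ := List.exists_cons_of_ne_nil hw
  rw [Fin.forall_fin_two, Fin.forall_fin_two, Fin.forall_fin_two]
  refine ⟨⟨(contMatrix_zero_zero _).le, contMatrix_zero_one_le h⟩, contMatrix_one_zero_le h, ?_⟩
  rw [contMatrix_cons_one]
  refine (contMatrix_zero_one_le (List.not_mem_of_not_mem_cons h)).trans ?_
  rw [← contMatrix_cons_one_zero d]
  exact contMatrix_one_zero_le h

lemma log_contMatrix_le (hS : 0 ∉ S) (hw : w ∈ words S n) (hn : n ≠ 0) (a b : Fin 2) :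
    Real.log (contMatrix w a b) ≤ n * S.sup id := by
  have h := zero_notMem_of_mem_words hS hw
  have hlen := (mem_words.mp hw).1
  have hle : (contMatrix w a b : ℝ) ≤ ((S.sup id : ℕ) + 1 : ℝ) ^ n := by
    have := (contMatrix_le_cont h (List.ne_nil_of_length_pos (by omega)) a b).trans
      (cont_le_pow h (le_sup_of_mem_words hw))
    rw [hlen] at this
    exact_mod_cast this
  rcases (Nat.cast_nonneg (α := ℝ) (contMatrix w a b)).eq_or_lt with h0 | h0
  · rw [← h0, Real.log_zero]
    positivity
  calc Real.log (contMatrix w a b) ≤ n * Real.log ((S.sup id : ℕ) + 1) := by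
        rw [← Real.log_pow]
        exact Real.log_le_log h0 hle
    _ ≤ n * S.sup id := by
        gcongr
        linarith [Real.log_le_sub_one_of_pos (x := (S.sup id : ℕ) + 1) (by positivity)]

/-- Pigeonhole on the logarithms of the four matrix entries. -/
lemma exists_subset_words_contMatrix_le (hS : 0 ∉ S) (hn : 2 ≤ n)
    (h : 4 * ((n * S.sup id * 2 ^ i + 1 : ℕ) : ℝ) ^ 4 ≤ contSum S (5 / 3) n) :
    ∃ T ⊆ words S n, 4 ≤ ∑ w ∈ T, (cont w : ℝ) ^ (-(5 / 3) : ℝ) ∧ ∀ v ∈ T, ∀ w ∈ T, ∀ a b,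
      (contMatrix v a b : ℝ) ≤ Real.exp ((1 / 2) ^ i) * contMatrix w a b := by
  have hpos : ∀ w ∈ words S n, ∀ a b, 1 ≤ contMatrix w a b := fun w hw =>
    contMatrix_pos (zero_notMem_of_mem_words hS hw) ((mem_words.mp hw).1 ▸ hn)
  have hlog : ∀ w ∈ words S n, ∀ x : Fin 2 × Fin 2, Real.log (contMatrix w x.1 x.2) <
      (n * S.sup id * 2 ^ i + 1 : ℕ) * (1 / 2 : ℝ) ^ i := by
    refine fun w hw x => (log_contMatrix_le hS hw (by omega) x.1 x.2).trans_lt ?_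
    push_cast
    rw [add_mul, mul_assoc _ ((2 : ℝ) ^ i), ← mul_pow, mul_one_div_cancel two_ne_zero, one_pow,
      mul_one, one_mul]
    exact lt_add_of_pos_right _ (by positivity)
  obtain ⟨T, hTS, hT, hle⟩ := exists_subset_forall_le_add (s := words S n)
    (f := fun w (x : Fin 2 × Fin 2) => Real.log (contMatrix w x.1 x.2))
    (g := fun w => (cont w : ℝ) ^ (-(5 / 3) : ℝ)) (b := 4) (ε := (1 / 2) ^ i) (by positivity)
    (Nat.succ_ne_zero (n * S.sup id * 2 ^ i))
    (fun w hw x => Real.log_nonneg (by exact_mod_cast hpos w hw x.1 x.2))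
    hlog (by rw [mul_comm]; exact h)
  refine ⟨T, hTS, hT, fun v hv w hw a b => ?_⟩
  have hv0 : (0 : ℝ) < contMatrix v a b := by exact_mod_cast hpos v (hTS hv) a b
  have hw0 : (0 : ℝ) < contMatrix w a b := by exact_mod_cast hpos w (hTS hw) a b
  rw [← Real.log_le_log_iff hv0 (by positivity), Real.log_mul (by positivity) hw0.ne',
    Real.log_exp, add_comm]
  exact hle v hv w hw (a, b)

/-- A random element `w` of `T`, with probability proportional to `⟨w⟩ ^ (-5/3)`. -/
def gibbs (T : Finset (List ℕ)) (w₀ : T) : WordEnsemble where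
  ι := T
  base := w₀
  weight w := (cont (w : List ℕ) : ℝ) ^ (-(5 / 3) : ℝ) / ∑ v ∈ T, (cont v : ℝ) ^ (-(5 / 3) : ℝ)
  word w := w

lemma isRegular_gibbs (hS : 0 ∉ S) (hT : T ⊆ words S n) (w₀ : T)
    (hκ : ∀ v ∈ T, ∀ w ∈ T, ∀ a b, (contMatrix v a b : ℝ) ≤ κ * contMatrix w a b) :
    (gibbs T w₀).IsRegular S κ where
  weight_nonneg w := by
    unfold gibbs
    positivity
  sum_weight := by
    have hpos : 0 < ∑ v ∈ T, (cont v : ℝ) ^ (-(5 / 3) : ℝ) :=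
      Finset.sum_pos (fun w hw => Real.rpow_pos_of_pos (by
        exact_mod_cast cont_pos (zero_notMem_of_mem_words hS (hT hw))) _) ⟨w₀, w₀.2⟩
    rw [← div_self hpos.ne', Finset.sum_div, ← Finset.sum_coe_sort T]
    rfl
  word_injective := Subtype.val_injective
  length_eq v w := (mem_words.mp (hT v.2)).1.trans (mem_words.mp (hT w.2)).1.symm
  zero_notMem w := zero_notMem_of_mem_words hS (hT w.2)
  mem_alphabet w := (mem_words.mp (hT w.2)).2
  contMatrix_le v w := hκ _ v.2 _ w.2

lemma hasDecay_gibbs (w₀ : T) (hT : 4 ≤ ∑ w ∈ T, (cont w : ℝ) ^ (-(5 / 3) : ℝ)) :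
    (gibbs T w₀).HasDecay 2 := by
  rintro ⟨w, hw⟩
  have hpow : (2 : ℝ) ^ (5 / 3 : ℝ) ≤ 4 := by
    calc (2 : ℝ) ^ (5 / 3 : ℝ) ≤ 2 ^ (2 : ℝ) :=
          Real.rpow_le_rpow_of_exponent_le one_le_two (by norm_num)
      _ = 4 := by norm_num
  change (cont w : ℝ) ^ (-(5 / 3) : ℝ) / _ ≤ (2 * (cont w : ℝ)) ^ _
  rw [div_le_iff₀ (by linarith), rpow_neg_eq_two_rpow_mul (by positivity), mul_comm]
  gcongr
  exact hpow.trans hT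

lemma exists_block (hS : 0 ∉ S) (hn : 2 * (i + 1) ≤ n)
    (h : 4 * ((n * S.sup id * 2 ^ (i + 2) + 1 : ℕ) : ℝ) ^ 4 ≤ contSum S (5 / 3) n) :
    ∃ E : WordEnsemble, E.IsRegular S (Real.exp ((1 / 2) ^ (i + 2))) ∧ E.HasDecay 2 ∧
      2 ^ (i + 1) ≤ E.size ∧ E.size ≤ ((S.sup id : ℕ) + 1 : ℝ) ^ n := by
  obtain ⟨T, hTS, hT, hκ⟩ := exists_subset_words_contMatrix_le hS (by omega) h
  obtain ⟨w, hw⟩ : T.Nonempty := Finset.nonempty_of_ne_empty (by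
    rintro rfl
    norm_num at hT)
  obtain ⟨hlen, -⟩ := mem_words.mp (hTS hw)
  have h0 := zero_notMem_of_mem_words hS (hTS hw)
  refine ⟨gibbs T ⟨w, hw⟩, isRegular_gibbs hS hTS _ hκ, hasDecay_gibbs _ hT, ?_, ?_⟩
  · change (2 : ℝ) ^ (i + 1) ≤ cont w
    exact_mod_cast two_pow_le_cont (i + 1) h0 (hlen ▸ hn)
  · change (cont w : ℝ) ≤ _
    rw [← hlen]
    exact_mod_cast cont_le_pow h0 (le_sup_of_mem_words (hTS hw))

lemma four_mul_pow_four_le {V c i m : ℕ} (hV : 4 * c + 1 ≤ V) (hm : 4 * V ^ 4 ≤ m) (hi : i ≤ m) :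
    4 * (c * m * 2 ^ (i + 2) + 1) ^ 4 ≤ 512 ^ m := by
  have hmi : m * 2 ^ i ≤ 4 ^ m := by
    calc m * 2 ^ i ≤ 2 ^ m * 2 ^ m :=
          Nat.mul_le_mul Nat.lt_two_pow_self.le (Nat.pow_le_pow_right two_pos hi)
      _ = 4 ^ m := (mul_pow 2 2 m).symm
  have hbase : c * m * 2 ^ (i + 2) + 1 ≤ V * 4 ^ m := by
    calc c * m * 2 ^ (i + 2) + 1 = 4 * c * (m * 2 ^ i) + 1 := by ring
      _ ≤ 4 * c * 4 ^ m + 4 ^ m := by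
          gcongr
          exact Nat.one_le_pow _ _ (by norm_num)
      _ = (4 * c + 1) * 4 ^ m := by ring
      _ ≤ V * 4 ^ m := by gcongr
  calc 4 * (c * m * 2 ^ (i + 2) + 1) ^ 4 ≤ 4 * (V * 4 ^ m) ^ 4 := by gcongr
    _ = 4 * V ^ 4 * 256 ^ m := by
        rw [mul_pow, ← pow_mul, mul_comm m, pow_mul, mul_assoc]
        norm_num
    _ ≤ 2 ^ m * 256 ^ m := Nat.mul_le_mul_right _ (hm.trans Nat.lt_two_pow_self.le)
    _ = 512 ^ m := (mul_pow 2 256 m).symm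

/-- The growth `512 ^ m` of the partition function beats the number of cells in the pigeonhole
argument. -/
lemma exists_isBlockSequence (hS : 0 ∉ S) {k : ℕ}
    (hk : (2 : ℝ) ^ (5 / 3 : ℝ) * 512 ≤ contSum S (5 / 3) k) :
    ∃ L B, WordEnsemble.IsBlockSequence S L B := by
  have hk1 : 1 ≤ k := by
    by_contra! hk0
    obtain rfl : k = 0 := by omega
    rw [contSum_zero] at hk
    linarith [Real.one_le_rpow (one_le_two (α := ℝ)) (by norm_num : (0 : ℝ) ≤ 5 / 3)]
  set V := 4 * (k * S.sup id) + 1 with hV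
  set m₀ := 4 * V ^ 4
  have hm₀2 : 2 ≤ m₀ := by
    have : 1 ≤ V ^ 4 := Nat.one_le_pow _ _ (by omega)
    omega
  have hlarge (i : ℕ) : 4 * ((k * (m₀ + 2 * i) * S.sup id * 2 ^ (i + 2) + 1 : ℕ) : ℝ) ^ 4 ≤
      contSum S (5 / 3) (k * (m₀ + 2 * i)) := by
    refine le_trans ?_ (pow_le_contSum_mul hS (by norm_num) (by norm_num) hk (m₀ + 2 * i))
    rw [mul_right_comm k]
    exact_mod_cast four_mul_pow_four_le hV.ge (Nat.le_add_right m₀ (2 * i)) (by omega)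
  have hlen (i : ℕ) : 2 * (i + 1) ≤ k * (m₀ + 2 * i) := by nlinarith
  choose B hreg hdecay hge hle using fun i => exists_block hS (hlen i) (hlarge i)
  refine ⟨((S.sup id : ℕ) + 1 : ℝ) ^ (k * (m₀ + 2)), B, hreg, hdecay, hge, fun i => ?_⟩
  refine (hle i).trans ?_
  rw [← pow_mul, mul_assoc]
  gcongr
  · exact le_add_of_nonneg_left (by positivity)
  · nlinarith

end Blocks

theorem positive_proportion_of_dim_gt_five_sixths
    (A : Finset ℕ) (hpos : ∀ a ∈ A, 0 < a) (hcard : 2 ≤ A.card)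
    (hδ : 1 - 1/6 < hdim A) :
    ∃ c : ℝ, 0 < c ∧ ∃ N₀ : ℕ, ∀ N : ℕ, N₀ ≤ N →
      c * N ≤ ((DD A N).ncard : ℝ) := by
  have hA : 0 ∉ A := fun h => (hpos 0 h).ne rfl
  have hs : ((5 / 6 : NNReal) : ℝ) < hdim A := by
    push_cast
    linarith
  obtain ⟨k, hk⟩ := exists_le_contSum hA hs ((2 : ℝ) ^ (5 / 3 : ℝ) * 512)
  have hexp : 2 * ((5 / 6 : NNReal) : ℝ) = 5 / 3 := by
    push_cast
    norm_num
  rw [hexp] at hk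
  obtain ⟨L, B, hB⟩ := exists_isBlockSequence hA hk
  obtain ⟨a, haA, ha⟩ := Finset.exists_mem_ne hcard 1
  have ha2 : 2 ≤ a := by
    have := hpos a haA
    omega
  obtain ⟨c, hc, hN⟩ := exists_mul_le_ncard_DD hB ha2 haA
  exact ⟨c, hc, eventually_atTop.mp hN⟩

end
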